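/- arXiv:1806.04783 — 2 statements merged into one kernel-verified Lean document; each statement's English description precedes it below -/
import Mathlib

section
/- There is an absolute constant C > 0 such that for every prime p ≥ 3, every basis {ω₁, ω₂, ω₃} of F_{p³} over F_p, and every box B with 1 ≤ H₁ ≤ H₂ ≤ H₃ < √(p/2), the multiplicative energy satisfies E(B) ≤ C·|B|²·(log p)³. -/
open scoped Classical

namespace BoxEnergy

/-- Integer vectors in dimension three. -/
abbrev R3 := Fin 3 → ℤ

section
variable {F : Type} [Field F]

/-- The linear form attached to a basis. -/
def phi (ω : Fin 3 → F) (c : R3) : F := ∑ i, (c i : F) * ω i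

theorem phi_add (ω : Fin 3 → F) (c d : R3) : phi ω (c + d) = phi ω c + phi ω d := by
  simp [phi, Fin.sum_univ_three]; ring

theorem phi_sub (ω : Fin 3 → F) (c d : R3) : phi ω (c - d) = phi ω c - phi ω d := by
  simp [phi, Fin.sum_univ_three]; ring

theorem phi_smul (ω : Fin 3 → F) (a : ℤ) (c : R3) : phi ω (a • c) = (a : F) * phi ω c := by
  simp [phi, Fin.sum_univ_three]; ring

theorem phi_zero (ω : Fin 3 → F) : phi ω 0 = 0 := by
  simp [phi]

/-- The lattice of pairs `(u, v)` with `φ u = z φ v`. -/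
def Lat (ω : Fin 3 → F) (z : F) : Submodule ℤ (R3 × R3) where
  carrier := {q | phi ω q.1 = z * phi ω q.2}
  add_mem' := by
    intro a b ha hb
    simp only [Set.mem_ofPred_eq, Prod.fst_add, Prod.snd_add, phi_add] at *
    rw [ha, hb]; ring
  zero_mem' := by simp [phi_zero]
  smul_mem' := by
    intro c x hx
    simp only [Set.mem_ofPred_eq, Prod.smul_fst, Prod.smul_snd, phi_smul] at *
    rw [hx]; ring

theorem mem_Lat {ω : Fin 3 → F} {z : F} {q : R3 × R3} :
    q ∈ Lat ω z ↔ phi ω q.1 = z * phi ω q.2 := Iff.rfl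

/-- One symmetric box. -/
noncomputable def bx1 (T : Fin 3 → ℕ) : Finset R3 := Fintype.piFinset fun i => Finset.Icc (-(T i : ℤ)) (T i)

/-- Symmetric box for pairs. -/
noncomputable def bx (T : Fin 3 → ℕ) : Finset (R3 × R3) := bx1 T ×ˢ bx1 T

theorem mem_bx {T : Fin 3 → ℕ} {q : R3 × R3} :
    q ∈ bx T ↔ (∀ i, |q.1 i| ≤ T i) ∧ (∀ i, |q.2 i| ≤ T i) := by
  simp [bx, bx1, abs_le]

theorem card_bx (T : Fin 3 → ℕ) :
    (bx T).card = ((2 * T 0 + 1) * (2 * T 1 + 1) * (2 * T 2 + 1)) ^ 2 := by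
  have h : ∀ n : ℕ, ((n : ℤ) + 1 + (n : ℤ)).toNat = 2 * n + 1 := by intro n; omega
  simp [bx, bx1, Fin.prod_univ_three, h]
  ring

/-- Independence in the form used by the statement. -/
def Ind (p : ℕ) (ω : Fin 3 → F) : Prop := ∀ c : R3, phi ω c = 0 → ∀ i, (p : ℤ) ∣ c i

theorem Ind.zero {p : ℕ} {ω : Fin 3 → F} (h : Ind p ω) {c : R3} (hc : phi ω c = 0)
    (hs : ∀ i, |c i| < p) : c = 0 := by
  funext i
  exact Int.eq_zero_of_abs_lt_dvd (h c hc i) (hs i)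

/-- The points of the lattice in the box. -/
noncomputable def G (ω : Fin 3 → F) (z : F) (T : Fin 3 → ℕ) : Finset (R3 × R3) :=
  (bx T).filter (fun q => phi ω q.1 = z * phi ω q.2)

theorem mem_G {ω : Fin 3 → F} {z : F} {T : Fin 3 → ℕ} {q : R3 × R3} :
    q ∈ G ω z T ↔ q ∈ bx T ∧ phi ω q.1 = z * phi ω q.2 := by simp [G]

theorem zero_mem_G (ω : Fin 3 → F) (z : F) (T : Fin 3 → ℕ) : (0 : R3 × R3) ∈ G ω z T := by
  rw [mem_G, mem_bx]; simp [phi_zero]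

theorem count {p : ℕ} {ω : Fin 3 → F} (h : Ind p ω) (T : Fin 3 → ℕ) (hT : ∀ i, T i < p)
    (S : Finset F) (hS : ∀ z ∈ S, ∃ t : R3 × R3, t ≠ 0 ∧ t ∈ bx T ∧ t ∈ Lat ω z) :
    S.card ≤ ((2 * T 0 + 1) * (2 * T 1 + 1) * (2 * T 2 + 1)) ^ 2 := by
  rw [← card_bx]
  choose! t ht0 htb htl using hS
  apply Finset.card_le_card_of_injOn t
  · intro z hz; exact htb z hz
  · intro z hz w hw hzw
    have hb := mem_bx.1 (htb z hz)
    have h1 := mem_Lat.1 (htl z hz)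
    have h2 := mem_Lat.1 (htl w hw)
    rw [← hzw, h1] at h2
    have hv : phi ω (t z).2 ≠ 0 := by
      intro h0
      apply ht0 z hz
      have hu : phi ω (t z).1 = 0 := by rw [h1, h0, mul_zero]
      have e1 := h.zero hu (fun i => lt_of_le_of_lt (hb.1 i) (by exact_mod_cast hT i))
      have e2 := h.zero h0 (fun i => lt_of_le_of_lt (hb.2 i) (by exact_mod_cast hT i))
      exact Prod.ext e1 e2
    exact mul_right_cancel₀ hv h2

theorem pigeon (A : Finset (R3 × R3)) (s m : ℕ) (hm : 1 ≤ m)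
    (hr : Module.finrank ℤ (Submodule.span ℤ (A : Set (R3 × R3))) ≤ s) (hA : m ^ s < A.card) :
    ∃ x ∈ A, ∃ y ∈ A, ∃ t ∈ Submodule.span ℤ (A : Set (R3 × R3)), t ≠ 0 ∧ x - y = (m : ℤ) • t := by
  set L := Submodule.span ℤ (A : Set (R3 × R3)) with hL
  have : NeZero m := ⟨by omega⟩
  let b := Module.finBasis ℤ L
  have hsub : ∀ x ∈ A, x ∈ L := fun x hx => Submodule.subset_span hx
  let f : R3 × R3 → (Fin (Module.finrank ℤ L) → ZMod m) := fun x =>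
    if hx : x ∈ L then fun i => ((b.repr ⟨x, hx⟩ i : ℤ) : ZMod m) else 0
  have hc : (Finset.univ : Finset (Fin (Module.finrank ℤ L) → ZMod m)).card < A.card := by
    refine lt_of_le_of_lt ?_ hA
    simp [Finset.card_univ, ZMod.card]
    exact Nat.pow_le_pow_right hm hr
  obtain ⟨x, hx, y, hy, hne, hxy⟩ := Finset.exists_ne_map_eq_of_card_lt_of_maps_to hc
    (f := f) (fun _ _ => by simp)
  have hxy' : ∀ i, ∃ k : ℤ, b.repr ⟨x, hsub x hx⟩ i - b.repr ⟨y, hsub y hy⟩ i = m * k := by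
    intro i
    have := congrFun hxy i
    simp only [f, hsub x hx, hsub y hy, dif_pos] at this
    have h2 := (ZMod.intCast_eq_intCast_iff_dvd_sub _ _ _).1 this
    obtain ⟨k, hk⟩ := h2
    exact ⟨-k, by linarith⟩
  choose k hk using hxy'
  let t : L := ∑ i, k i • b i
  have ht : (⟨x, hsub x hx⟩ : L) - ⟨y, hsub y hy⟩ = (m : ℤ) • t := by
    apply b.repr.injective
    ext i
    simp [t, Finsupp.single_apply, hk]
  have ht' : x - y = (m : ℤ) • (t : R3 × R3) := by
    have := congrArg (Subtype.val) ht
    simpa using this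
  refine ⟨x, hx, y, hy, t, t.2, ?_, ht'⟩
  intro h0
  rw [h0, smul_zero, sub_eq_zero] at ht'
  exact hne ht'

/-- Pigeonhole plus box bounds. -/
theorem pigeon_box {ω : Fin 3 → F} {z : F} (A : Finset (R3 × R3)) (T : Fin 3 → ℕ)
    (hAT : A ⊆ bx T) (hAL : ∀ x ∈ A, x ∈ Lat ω z) (s m : ℕ) (hm : 1 ≤ m)
    (hr : Module.finrank ℤ (Submodule.span ℤ (A : Set (R3 × R3))) ≤ s) (hA : m ^ s < A.card) :
    ∃ t : R3 × R3, t ≠ 0 ∧ t ∈ bx (fun i => 2 * T i / m) ∧ t ∈ Lat ω z := by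
  obtain ⟨x, hx, y, hy, t, ht, h0, hxy⟩ := pigeon A s m hm hr hA
  refine ⟨t, h0, ?_, (Submodule.span_le.2 hAL) ht⟩
  have bxx := mem_bx.1 (hAT hx)
  have bxy := mem_bx.1 (hAT hy)
  have key : ∀ (a b c : ℤ) (n : ℕ), |a| ≤ n → |b| ≤ n → a - b = m * c →
      |c| ≤ ((2 * n / m : ℕ) : ℤ) := by
    intro a b c n ha hb hc
    have hm' : (0 : ℤ) < m := by exact_mod_cast hm
    push_cast
    rw [Int.le_ediv_iff_mul_le hm']
    have : |c| * m = |a - b| := by rw [hc, abs_mul, abs_of_pos hm', mul_comm]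
    rw [this]
    calc |a - b| ≤ |a| + |b| := abs_sub a b
      _ ≤ _ := by linarith
  rw [mem_bx]
  constructor
  · intro i
    refine key (x.1 i) (y.1 i) _ _ (bxx.1 i) (bxy.1 i) ?_
    have := congrArg (fun q : R3 × R3 => q.1 i) hxy
    simpa using this
  · intro i
    refine key (x.2 i) (y.2 i) _ _ (bxx.2 i) (bxy.2 i) ?_
    have := congrArg (fun q : R3 × R3 => q.2 i) hxy
    simpa using this

/-- Dyadic decomposition. -/
theorem dyadic {α : Type*} (S : Finset α) (q : α → ℕ) (b J : ℕ) (X : α → ℝ) (K : ℝ)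
    (hq : ∀ z ∈ S, q z ≠ 0 ∧ q z < b ^ J)
    (h : ∀ j, ∑ z ∈ S with Nat.log b (q z) = j, X z ≤ K) :
    ∑ z ∈ S, X z ≤ J * K := by
  have hm : ∀ z ∈ S, Nat.log b (q z) ∈ Finset.range J := by
    intro z hz
    rw [Finset.mem_range]
    exact Nat.log_lt_of_lt_pow (hq z hz).1 (hq z hz).2
  rw [← Finset.sum_fiberwise_of_maps_to hm]
  calc _ ≤ ∑ j ∈ Finset.range J, K := Finset.sum_le_sum fun j _ => h j
    _ = _ := by simp

theorem pcd {p : ℕ} {ω : Fin 3 → F} (h : Ind p ω) (T : Fin 3 → ℕ) (hT : ∀ i, 2 * T i < p)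
    (S : Finset F) (A : F → Finset (R3 × R3)) (s J : ℕ) (hs : 1 ≤ s)
    (hAT : ∀ z ∈ S, A z ⊆ bx T) (hAL : ∀ z ∈ S, ∀ x ∈ A z, x ∈ Lat ω z)
    (hr : ∀ z ∈ S, Module.finrank ℤ (Submodule.span ℤ (A z : Set (R3 × R3))) ≤ s)
    (h2 : ∀ z ∈ S, 2 ≤ (A z).card) (hJ : ∀ z ∈ S, (A z).card ≤ 2 ^ J)
    (X : F → ℝ) (K : ℝ) (hK : 0 ≤ K)
    (hX : ∀ z ∈ S, ∀ m : ℝ, 1 ≤ m → m ^ s + 1 ≤ (A z).card → (A z).card ≤ 2 ^ s * m ^ s →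
      (∃ i, m ≤ 2 * T i) →
      X z * ((4 * T 0 / m + 1) * (4 * T 1 / m + 1) * (4 * T 2 / m + 1)) ^ 2 ≤ K) :
    ∑ z ∈ S, X z ≤ J * K := by
  have hb : 2 ≤ 2 ^ s := by
    calc 2 = 2 ^ 1 := rfl
      _ ≤ 2 ^ s := Nat.pow_le_pow_right (by norm_num) hs
  refine dyadic S (fun z => (A z).card - 1) (2 ^ s) J X K ?_ ?_
  · intro z hz
    have := h2 z hz
    have h3 := hJ z hz
    refine ⟨by omega, ?_⟩
    have : 2 ^ J ≤ (2 ^ s) ^ J := Nat.pow_le_pow_left hb J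
    omega
  · intro j
    set m : ℕ := 2 ^ j with hm
    have hm1 : 1 ≤ m := Nat.one_le_two_pow
    have hmR : (1 : ℝ) ≤ m := by exact_mod_cast hm1
    set S' := S.filter (fun z => Nat.log (2 ^ s) ((A z).card - 1) = j) with hS'
    have hz1 : ∀ z ∈ S', m ^ s < (A z).card ∧ (A z).card ≤ 2 ^ s * m ^ s := by
      intro z hz
      rw [hS', Finset.mem_filter] at hz
      have hc := h2 z hz.1
      have e1 := Nat.pow_log_le_self (2 ^ s) (x := (A z).card - 1) (by omega)
      have e2 := Nat.lt_pow_succ_log_self (b := 2 ^ s) (by omega) ((A z).card - 1)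
      rw [hz.2] at e1 e2
      have e3 : (2 ^ s) ^ j = m ^ s := by rw [hm, ← pow_mul, ← pow_mul, mul_comm]
      rw [pow_succ, e3] at e2
      rw [e3] at e1
      constructor
      · omega
      · rw [mul_comm]; omega
    have ht : ∀ z ∈ S', ∃ t : R3 × R3, t ≠ 0 ∧ t ∈ bx (fun i => 2 * T i / m) ∧ t ∈ Lat ω z := by
      intro z hz
      have hzS : z ∈ S := (Finset.mem_filter.1 hz).1
      exact pigeon_box (A z) T (hAT z hzS) (hAL z hzS) s m hm1 (hr z hzS) (hz1 z hz).1
    have hcard := count h (fun i => 2 * T i / m)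
      (fun i => lt_of_le_of_lt (Nat.div_le_self _ _) (hT i)) S' ht
    set N : ℝ := ((4 * T 0 / m + 1) * (4 * T 1 / m + 1) * (4 * T 2 / m + 1)) ^ 2 with hN
    have hcN : (S'.card : ℝ) ≤ N := by
      refine le_trans (Nat.cast_le.2 hcard) ?_
      have hd : ∀ i, 2 * ((2 * T i / m : ℕ) : ℝ) ≤ 4 * T i / m := by
        intro i
        have := Nat.cast_div_le (α := ℝ) (m := 2 * T i) (n := m)
        push_cast at this
        have e : (4 * (T i : ℝ) / m) = 2 * (2 * T i / m) := by ring
        rw [e]; linarith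
      push_cast
      rw [hN]
      gcongr <;> exact hd _
    have hNpos : 0 < N := by positivity
    have hXz : ∀ z ∈ S', X z ≤ K / N := by
      intro z hz
      have hzS : z ∈ S := (Finset.mem_filter.1 hz).1
      rw [le_div_iff₀ hNpos]
      obtain ⟨e1, e2⟩ := hz1 z hz
      refine hX z hzS m hmR (by exact_mod_cast e1) (by exact_mod_cast e2) ?_
      obtain ⟨t, t0, tb, -⟩ := ht z hz
      by_contra hcon
      push Not at hcon
      apply t0
      have hz : ∀ i, 2 * T i / m = 0 := by
        intro i
        apply Nat.div_eq_of_lt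
        exact_mod_cast hcon i
      rw [mem_bx] at tb
      simp only [hz] at tb
      refine Prod.ext (funext fun i => ?_) (funext fun i => ?_)
      · have := tb.1 i
        simpa using this
      · have := tb.2 i
        simpa using this
    calc ∑ z ∈ S', X z ≤ ∑ z ∈ S', K / N := Finset.sum_le_sum hXz
      _ = S'.card * (K / N) := by simp
      _ ≤ N * (K / N) := by gcongr
      _ = K := by field_simp

end
end BoxEnergy


namespace BoxEnergy
section
variable {F : Type} [Field F]

theorem rank_le_one (A : Finset (R3 × R3))
    (hpar : ∀ x ∈ A, ∀ y ∈ A, ∀ j, y.2 j • x = x.2 j • y)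
    (hinj : ∀ x ∈ A, x.2 = 0 → x = 0) :
    Module.finrank ℤ (Submodule.span ℤ (A : Set (R3 × R3))) ≤ 1 := by
  by_cases hall : ∀ x ∈ A, x.2 = 0
  · have : Submodule.span ℤ (A : Set (R3 × R3)) = ⊥ := by
      rw [Submodule.span_eq_bot]
      intro x hx
      exact hinj x hx (hall x hx)
    rw [this]; simp
  · push Not at hall
    obtain ⟨x0, hx0, hne⟩ := hall
    obtain ⟨j, hj⟩ := Function.ne_iff.1 hne
    let ℓ : R3 × R3 →ₗ[ℤ] ℤ := (LinearMap.proj j).comp (LinearMap.snd ℤ R3 R3)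
    have hℓ : ∀ x, ℓ x = x.2 j := fun x => rfl
    have hall : ∀ x ∈ Submodule.span ℤ (A : Set (R3 × R3)), x0.2 j • x = x.2 j • x0 := by
      intro x hx
      induction hx using Submodule.span_induction with
      | mem x hx => exact hpar x hx x0 hx0 j
      | zero => simp
      | add x y _ _ hx hy => simp only [smul_add, hx, hy, Prod.snd_add, Pi.add_apply, add_smul]
      | smul a x _ hx =>
        rw [smul_comm, hx, smul_smul]; simp
    have : Function.Injective (ℓ.domRestrict (Submodule.span ℤ (A : Set (R3 × R3)))) := by
      rw [← LinearMap.ker_eq_bot, LinearMap.ker_eq_bot']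
      rintro ⟨x, hx⟩ h0
      have h1 := hall x hx
      have h2 : x.2 j = 0 := h0
      rw [h2, zero_smul] at h1
      have := (smul_eq_zero.1 h1).resolve_left hj
      exact Subtype.ext this
    simpa using LinearMap.finrank_le_finrank_of_injective this

theorem par {p : ℕ} {ω : Fin 3 → F} (h : Ind p ω) {H : Fin 3 → ℕ} {h3 : ℕ} (hH : ∀ i, H i ≤ h3)
    (hp : 2 * h3 ^ 2 < p) {z : F} {x y : R3 × R3} (hx : x ∈ G ω z H) (hy : y ∈ G ω z H)
    (hxy : ∀ i j, x.2 i * y.2 j = x.2 j * y.2 i) (j : Fin 3) : y.2 j • x = x.2 j • y := by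
  rw [mem_G, mem_bx] at hx hy
  obtain ⟨⟨hx1, hx2⟩, hx3⟩ := hx
  obtain ⟨⟨hy1, hy2⟩, hy3⟩ := hy
  have e2 : y.2 j • x.2 = x.2 j • y.2 := by
    funext i
    simp only [Pi.smul_apply, smul_eq_mul]
    rw [mul_comm, hxy]
  have e1 : y.2 j • x.1 - x.2 j • y.1 = 0 := by
    apply h.zero
    · rw [phi_sub, phi_smul, phi_smul, hx3, hy3]
      have := congrArg (phi ω) e2
      rw [phi_smul, phi_smul] at this
      linear_combination z * this
    · intro i
      simp only [Pi.sub_apply, Pi.smul_apply, smul_eq_mul]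
      have b1 : |y.2 j * x.1 i| ≤ (h3 : ℤ) * h3 := by
        rw [abs_mul]
        have := hy2 j; have := hx1 i
        have : (H i : ℤ) ≤ h3 := by exact_mod_cast hH i
        have : (H j : ℤ) ≤ h3 := by exact_mod_cast hH j
        apply mul_le_mul <;> first | linarith | positivity
      have b2 : |x.2 j * y.1 i| ≤ (h3 : ℤ) * h3 := by
        rw [abs_mul]
        have := hx2 j; have := hy1 i
        have : (H i : ℤ) ≤ h3 := by exact_mod_cast hH i
        have : (H j : ℤ) ≤ h3 := by exact_mod_cast hH j
        apply mul_le_mul <;> first | linarith | positivity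
      have hp' : 2 * (h3 : ℤ) ^ 2 < p := by exact_mod_cast hp
      have := abs_sub (y.2 j * x.1 i) (x.2 j * y.1 i)
      nlinarith
  exact Prod.ext (sub_eq_zero.1 e1) e2

theorem G_inj {p : ℕ} {ω : Fin 3 → F} (h : Ind p ω) {H : Fin 3 → ℕ} (hH : ∀ i, 2 * H i < p)
    {z : F} {x y : R3 × R3} (hx : x ∈ G ω z H) (hy : y ∈ G ω z H) (hxy : x.2 = y.2) : x = y := by
  rw [mem_G, mem_bx] at hx hy
  obtain ⟨⟨hx1, hx2⟩, hx3⟩ := hx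
  obtain ⟨⟨hy1, hy2⟩, hy3⟩ := hy
  refine Prod.ext ?_ hxy
  rw [← sub_eq_zero]
  apply h.zero
  · rw [phi_sub, hx3, hy3, hxy, sub_self]
  · intro i
    have := abs_sub (x.1 i) (y.1 i)
    have := hx1 i
    have := hy1 i
    have : 2 * (H i : ℤ) < p := by exact_mod_cast hH i
    simp only [Pi.sub_apply]
    linarith

/-- Points with vanishing zeroth coordinates. -/
noncomputable def G0 (ω : Fin 3 → F) (z : F) (T : Fin 3 → ℕ) : Finset (R3 × R3) :=
  (G ω z T).filter (fun q => q.1 0 = 0 ∧ q.2 0 = 0)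

/-- Points with only the last coordinates non-zero. -/
noncomputable def G00 (ω : Fin 3 → F) (z : F) (T : Fin 3 → ℕ) : Finset (R3 × R3) :=
  (G0 ω z T).filter (fun q => q.1 1 = 0 ∧ q.2 1 = 0)

theorem mem_G0 {ω : Fin 3 → F} {z : F} {T : Fin 3 → ℕ} {q : R3 × R3} :
    q ∈ G0 ω z T ↔ q ∈ G ω z T ∧ q.1 0 = 0 ∧ q.2 0 = 0 := by simp [G0]

theorem mem_G00 {ω : Fin 3 → F} {z : F} {T : Fin 3 → ℕ} {q : R3 × R3} :
    q ∈ G00 ω z T ↔ q ∈ G0 ω z T ∧ q.1 1 = 0 ∧ q.2 1 = 0 := by simp [G00]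

theorem rank_G00 {p : ℕ} {ω : Fin 3 → F} (h : Ind p ω) {H : Fin 3 → ℕ} {h3 : ℕ}
    (hH : ∀ i, H i ≤ h3) (hp : 2 * h3 ^ 2 < p) (hH2 : ∀ i, 2 * H i < p) (z : F) :
    Module.finrank ℤ (Submodule.span ℤ (G00 ω z H : Set (R3 × R3))) ≤ 1 := by
  apply rank_le_one
  · intro x hx y hy j
    rw [mem_G00, mem_G0] at hx hy
    refine par h hH hp hx.1.1 hy.1.1 ?_ j
    intro i k
    obtain ⟨⟨-, -, a⟩, -, b⟩ := hx
    obtain ⟨⟨-, -, c⟩, -, d⟩ := hy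
    fin_cases i <;> fin_cases k <;> simp [a, b, c, d]
  · intro x hx h0
    rw [mem_G00, mem_G0] at hx
    exact G_inj h hH2 hx.1.1 (zero_mem_G ω z H) (by simp [h0])

theorem rank_G0 {p : ℕ} {ω : Fin 3 → F} (h : Ind p ω) {H : Fin 3 → ℕ} {h3 : ℕ}
    (hH : ∀ i, H i ≤ h3) (hp : 2 * h3 ^ 2 < p) (hH2 : ∀ i, 2 * H i < p) (z : F)
    (hquad : ∀ D e f g k : ℤ, (D : F) ≠ 0 → ω 1 ≠ 0 → D * z * ω 1 = e * ω 1 + f * ω 2 →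
      D * z * ω 2 = g * ω 1 + k * ω 2 → False) :
    Module.finrank ℤ (Submodule.span ℤ (G0 ω z H : Set (R3 × R3))) ≤ 1 := by
  apply rank_le_one
  · intro x hx y hy j
    rw [mem_G0] at hx hy
    refine par h hH hp hx.1 hy.1 ?_ j
    obtain ⟨hxG, a, b⟩ := hx
    obtain ⟨hyG, c, d⟩ := hy
    rw [mem_G, mem_bx] at hxG hyG
    obtain ⟨⟨-, hxb⟩, hxe⟩ := hxG
    obtain ⟨⟨-, hyb⟩, hye⟩ := hyG
    have hD : x.2 1 * y.2 2 - x.2 2 * y.2 1 = 0 := by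
      by_contra hD
      have hne : ((x.2 1 * y.2 2 - x.2 2 * y.2 1 : ℤ) : F) ≠ 0 := by
        intro h0
        have h1 := h (fun _ => x.2 1 * y.2 2 - x.2 2 * y.2 1)
          (by simp only [phi, h0, zero_mul, Finset.sum_const_zero]) 0
        apply hD
        apply Int.eq_zero_of_abs_lt_dvd h1
        have b1 : |x.2 1 * y.2 2| ≤ (h3 : ℤ) * h3 := by
          rw [abs_mul]
          have := hxb 1; have := hyb 2
          have : (H 1 : ℤ) ≤ h3 := by exact_mod_cast hH 1
          have : (H 2 : ℤ) ≤ h3 := by exact_mod_cast hH 2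
          apply mul_le_mul <;> first | linarith | positivity
        have b2 : |x.2 2 * y.2 1| ≤ (h3 : ℤ) * h3 := by
          rw [abs_mul]
          have := hxb 2; have := hyb 1
          have : (H 1 : ℤ) ≤ h3 := by exact_mod_cast hH 1
          have : (H 2 : ℤ) ≤ h3 := by exact_mod_cast hH 2
          apply mul_le_mul <;> first | linarith | positivity
        have hp' : 2 * (h3 : ℤ) ^ 2 < p := by exact_mod_cast hp
        have := abs_sub (x.2 1 * y.2 2) (x.2 2 * y.2 1)
        nlinarith
      have hω : ω 1 ≠ 0 := by
        intro h0
        have h1 := h (fun i => if i = 1 then 1 else 0) (by simp [phi, h0]) 1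
        simp only [if_true] at h1
        have := Int.le_of_dvd (by norm_num) h1
        have hp1 : p = 1 ∨ p = 0 := by omega
        have := hH2 0
        have h30 : h3 = 0 := by
          by_contra hc
          have : 1 ≤ h3 ^ 2 := Nat.one_le_pow _ _ (by omega)
          omega
        have b1 := hH 1
        have b2 := hH 2
        have z1 : x.2 1 = 0 := by
          have := hxb 1; rw [show H 1 = 0 by omega] at this; simpa using this
        have z2 : x.2 2 = 0 := by
          have := hxb 2; rw [show H 2 = 0 by omega] at this; simpa using this
        apply hD; rw [z1, z2]; ring
      simp only [phi, Fin.sum_univ_three, a, b, c, d, Int.cast_zero, zero_mul, zero_add] at hxe hye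
      refine hquad (x.2 1 * y.2 2 - x.2 2 * y.2 1) (y.2 2 * x.1 1 - x.2 2 * y.1 1)
        (y.2 2 * x.1 2 - x.2 2 * y.1 2) (x.2 1 * y.1 1 - y.2 1 * x.1 1)
        (x.2 1 * y.1 2 - y.2 1 * x.1 2) hne hω ?_ ?_
      · push_cast
        linear_combination (-(y.2 2 : F)) * hxe + (x.2 2 : F) * hye
      · push_cast
        linear_combination ((y.2 1 : F)) * hxe - (x.2 1 : F) * hye
    intro i k
    fin_cases i <;> fin_cases k <;> simp [b, d] <;> linarith
  · intro x hx h0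
    rw [mem_G0] at hx
    exact G_inj h hH2 hx.1 (zero_mem_G ω z H) (by simp [h0])

theorem card_G_le_G0 (ω : Fin 3 → F) (z : F) (H : Fin 3 → ℕ) :
    (G ω z H).card ≤ (G0 ω z H).card * (16 * (2 * H 0 + 1) ^ 2) := by
  let I : Finset ℤ := Finset.Icc (-(H 0 : ℤ)) (H 0)
  let t : Finset (ℤ × ℤ × Prop × Prop × Prop × Prop) :=
    I ×ˢ I ×ˢ Finset.univ ×ˢ Finset.univ ×ˢ Finset.univ ×ˢ Finset.univ
  let f : R3 × R3 → (ℤ × ℤ × Prop × Prop × Prop × Prop) := fun q =>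
    (q.1 0, q.2 0, 0 ≤ q.1 1, 0 ≤ q.1 2, 0 ≤ q.2 1, 0 ≤ q.2 2)
  have hI : I.card = 2 * H 0 + 1 := by
    simp [I]; omega
  have ht : t.card = 16 * (2 * H 0 + 1) ^ 2 := by
    simp [t, Finset.card_product, hI]; ring
  rw [← ht]
  apply Finset.card_le_mul_card_image_of_maps_to (f := f)
  · intro a ha
    rw [mem_G, mem_bx] at ha
    have h1 := ha.1.1 0
    have h2 := ha.1.2 0
    simp only [t, f, I, Finset.mem_product, Finset.mem_Icc, Finset.mem_univ, and_true]
    exact ⟨abs_le.1 h1, abs_le.1 h2⟩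
  · intro b _
    rcases (Finset.filter (fun a => f a = b) (G ω z H)).eq_empty_or_nonempty with he | ⟨y, hy⟩
    · rw [he]; simp
    · apply Finset.card_le_card_of_injOn (fun x => x - y)
      · intro x hx
        rw [Finset.mem_coe, Finset.mem_filter] at hx
        rw [Finset.mem_filter] at hy
        have hf : f x = f y := hx.2.trans hy.2.symm
        simp only [f, Prod.mk.injEq, eq_iff_iff] at hf
        obtain ⟨e1, e2, e3, e4, e5, e6⟩ := hf
        have hxG := mem_G.1 hx.1
        have hyG := mem_G.1 hy.1
        have hxb := mem_bx.1 hxG.1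
        have hyb := mem_bx.1 hyG.1
        have key : ∀ (a b : ℤ) (n : ℕ), |a| ≤ n → |b| ≤ n → (0 ≤ a ↔ 0 ≤ b) → |a - b| ≤ n := by
          intro a b n ha hb hab
          rw [abs_le] at *
          by_cases h0 : 0 ≤ a
          · have := hab.1 h0
            constructor <;> omega
          · have : ¬ 0 ≤ b := fun h => h0 (hab.2 h)
            constructor <;> omega
        rw [Finset.mem_coe, mem_G0, mem_G, mem_bx]
        refine ⟨⟨⟨?_, ?_⟩, ?_⟩, ?_, ?_⟩
        · intro i
          simp only [Prod.fst_sub, Pi.sub_apply]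
          apply key _ _ _ (hxb.1 i) (hyb.1 i)
          fin_cases i
          · simp [e1]
          · exact e3
          · exact e4
        · intro i
          simp only [Prod.snd_sub, Pi.sub_apply]
          apply key _ _ _ (hxb.2 i) (hyb.2 i)
          fin_cases i
          · simp [e2]
          · exact e5
          · exact e6
        · rw [Prod.fst_sub, Prod.snd_sub, phi_sub, phi_sub, hxG.2, hyG.2]; ring
        · simp [e1]
        · simp [e2]
      · intro a _ b _ hab
        simpa using hab

theorem phi_last (ω : Fin 3 → F) (a : ℤ) : phi ω ![0, 0, a] = a * ω 2 := by
  simp [phi, Fin.sum_univ_three]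

/-- Coordinates of a relation with integral multiplier. -/
theorem coord {p : ℕ} {ω : Fin 3 → F} (h : Ind p ω) (hpF : (p : F) = 0) {a : ℤ} {u v : R3}
    (huv : phi ω u = a * phi ω v) (i : Fin 3) : (u i : F) = a * v i := by
  have h1 := h (u - a • v) (by rw [phi_sub, phi_smul, huv, sub_self]) i
  obtain ⟨k, hk⟩ := h1
  simp only [Pi.sub_apply, Pi.smul_apply, smul_eq_mul] at hk
  have := congrArg (fun n : ℤ => (n : F)) hk
  simp only [Int.cast_sub, Int.cast_mul, Int.cast_natCast, hpF, zero_mul] at this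
  exact sub_eq_zero.1 this

theorem mem_G00_last {ω : Fin 3 → F} {z : F} {H : Fin 3 → ℕ} {a b : ℤ} (ha : |a| ≤ H 2)
    (hb : |b| ≤ H 2) (hab : (a : F) = z * b) :
    ((![0, 0, a], ![0, 0, b]) : R3 × R3) ∈ G00 ω z H := by
  rw [mem_G00, mem_G0, mem_G, mem_bx, phi_last, phi_last]
  refine ⟨⟨⟨⟨?_, ?_⟩, ?_⟩, ?_⟩, ?_⟩
  · intro i; fin_cases i <;> simp [ha]
  · intro i; fin_cases i <;> simp [hb]
  · rw [hab]; ring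
  · simp
  · simp

theorem card_G_le_G00 {p : ℕ} {ω : Fin 3 → F} (h : Ind p ω) (hpF : (p : F) = 0) {H : Fin 3 → ℕ}
    (hH2 : ∀ i, 2 * H i < p) (a : ℤ) :
    (G ω (a : F) H).card ≤ (G00 ω (a : F) H).card * ((2 * H 0 + 1) * (2 * H 1 + 1)) := by
  let t : Finset (ℤ × ℤ) :=
    Finset.Icc (-(H 0 : ℤ)) (H 0) ×ˢ Finset.Icc (-(H 1 : ℤ)) (H 1)
  let f : R3 × R3 → (ℤ × ℤ) := fun q => (q.2 0, q.2 1)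
  have hI : ∀ n : ℕ, (Finset.Icc (-(n : ℤ)) n).card = 2 * n + 1 := by
    intro n
    simp; omega
  have ht : t.card = (2 * H 0 + 1) * (2 * H 1 + 1) := by
    simp only [t, Finset.card_product, hI]
  rw [← ht]
  apply Finset.card_le_mul_card_image_of_maps_to (f := f)
  · intro x hx
    rw [mem_G, mem_bx] at hx
    simp only [t, f, Finset.mem_product, Finset.mem_Icc]
    exact ⟨abs_le.1 (hx.1.2 0), abs_le.1 (hx.1.2 1)⟩
  · intro b _
    apply Finset.card_le_card_of_injOn
      (fun x => ((![0, 0, x.1 2], ![0, 0, x.2 2]) : R3 × R3))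
    · intro x hx
      rw [Finset.mem_coe, Finset.mem_filter, mem_G, mem_bx] at hx
      exact mem_G00_last (hx.1.1.1 2) (hx.1.1.2 2) (coord h hpF hx.1.2 2)
    · intro x hx y hy hxy
      rw [Finset.mem_coe, Finset.mem_filter] at hx hy
      have hf : f x = f y := hx.2.trans hy.2.symm
      simp only [f, Prod.mk.injEq] at hf
      apply G_inj h hH2 hx.1 hy.1
      have := congrArg (fun q : R3 × R3 => q.2 2) hxy
      simp only [Matrix.cons_val] at this
      funext i
      fin_cases i
      · exact hf.1
      · exact hf.2
      · exact this

theorem two_le_G00 {p : ℕ} {ω : Fin 3 → F} (h : Ind p ω) (hpF : (p : F) = 0) {H : Fin 3 → ℕ}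
    (hH : ∀ i, H i ≤ H 2) (a : ℤ) (h2 : 2 ≤ (G ω (a : F) H).card) :
    2 ≤ (G00 ω (a : F) H).card := by
  obtain ⟨x, hx, hx0⟩ := Finset.exists_mem_ne (by omega : 1 < (G ω (a : F) H).card) 0
  rw [mem_G, mem_bx] at hx
  have : ∃ i, x.1 i ≠ 0 ∨ x.2 i ≠ 0 := by
    by_contra hc
    push Not at hc
    exact hx0 (Prod.ext (funext fun i => (hc i).1) (funext fun i => (hc i).2))
  obtain ⟨i, hi⟩ := this
  have hHi : (H i : ℤ) ≤ H 2 := by exact_mod_cast hH i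
  have m1 : ((![0, 0, x.1 i], ![0, 0, x.2 i]) : R3 × R3) ∈ G00 ω (a : F) H :=
    mem_G00_last ((hx.1.1 i).trans hHi) ((hx.1.2 i).trans hHi) (coord h hpF hx.2 i)
  have m0 : ((![0, 0, 0], ![0, 0, 0]) : R3 × R3) ∈ G00 ω (a : F) H :=
    mem_G00_last (by simp) (by simp) (by simp)
  have : 1 < (G00 ω (a : F) H).card := by
    rw [Finset.one_lt_card]
    refine ⟨_, m1, _, m0, ?_⟩
    intro he
    have e1 := congrArg (fun q : R3 × R3 => q.1 2) he
    have e2 := congrArg (fun q : R3 × R3 => q.2 2) he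
    simp only [Matrix.cons_val] at e1 e2
    rcases hi with hi | hi
    · exact hi e1
    · exact hi e2
  omega

theorem quad {p : ℕ} [Fact p.Prime] [CharP F p] [Fintype F] (hc : Fintype.card F = p ^ 3) (z : F)
    (D e f g k : ℤ) (w1 w2 : F) (hD : (D : F) ≠ 0) (hw : w1 ≠ 0)
    (h1 : D * z * w1 = e * w1 + f * w2) (h2 : D * z * w2 = g * w1 + k * w2) :
    ∃ a : ℤ, z = a := by
  let _ := ZMod.algebra F p
  have hfin : Module.finrank (ZMod p) F = 3 := by
    have := Module.card_eq_pow_finrank (K := ZMod p) (V := F)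
    rw [hc, ZMod.card] at this
    exact (Nat.pow_right_injective (Fact.out : p.Prime).two_le this).symm
  have hzint : IsIntegral (ZMod p) z := Algebra.IsIntegral.isIntegral z
  have hdvd := minpoly.degree_dvd hzint
  rw [hfin] at hdvd
  have hrel : ((D : F) * z - e) * (D * z - k) = f * g := by
    apply mul_right_cancel₀ hw
    linear_combination ((D : F) * z - k) * h1 + (f : F) * h2
  open Polynomial in
  let P : (ZMod p)[X] := C ((D : ZMod p) ^ 2) * X ^ 2 + C (-(D : ZMod p) * (e + k)) * X +
    C ((e : ZMod p) * k - f * g)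
  have hD' : ((D : ZMod p) ^ 2) ≠ 0 := by
    apply pow_ne_zero
    intro h0
    apply hD
    have := congrArg (algebraMap (ZMod p) F) h0
    simpa using this
  have hdeg : P.natDegree = 2 := Polynomial.natDegree_quadratic hD'
  have hP0 : P ≠ 0 := by
    intro h0
    rw [h0] at hdeg; simp at hdeg
  have hroot : Polynomial.aeval z P = 0 := by
    simp only [P, map_add, map_mul, Polynomial.aeval_C, Polynomial.aeval_X, map_pow, map_neg,
      map_sub, map_intCast]
    linear_combination hrel
  have hle : (minpoly (ZMod p) z).natDegree ≤ 2 := by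
    rw [← hdeg]
    exact Polynomial.natDegree_le_of_dvd (minpoly.dvd _ _ hroot) hP0
  have hone : (minpoly (ZMod p) z).natDegree = 1 := by
    rcases (Nat.dvd_prime Nat.prime_three).1 hdvd with h | h
    · exact h
    · omega
  rw [minpoly.natDegree_eq_one_iff] at hone
  obtain ⟨a, ha⟩ := hone
  refine ⟨(a.val : ℤ), ?_⟩
  rw [← ha]
  have : ((a.val : ℕ) : ZMod p) = a := ZMod.natCast_zmod_val a
  rw [Int.cast_natCast, ← map_natCast (algebraMap (ZMod p) F), this]

end
end BoxEnergy


namespace BoxEnergy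
section
variable {F : Type} [Field F]

theorem exists_dual {p : ℕ} [Fact p.Prime] [CharP F p] [Fintype F] (hc : Fintype.card F = p ^ 3)
    {ω : Fin 3 → F} (h : Ind p ω) :
    ∃ (ω' : Fin 3 → F) (τ : F →+ ZMod p), (∀ x : F, x ≠ 0 → ∃ y, τ (x * y) ≠ 0) ∧
      ∀ u a : R3, τ (phi ω u * phi ω' a) = ((∑ i, u i * a i : ℤ) : ZMod p) := by
  let _ := ZMod.algebra F p
  have hfin : Module.finrank (ZMod p) F = 3 := by
    have := Module.card_eq_pow_finrank (K := ZMod p) (V := F)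
    rw [hc, ZMod.card] at this
    exact (Nat.pow_right_injective (Fact.out : p.Prime).two_le this).symm
  have hsm : ∀ (n : ℤ) (x : F), (n : F) * x = (n : ZMod p) • x := by
    intro n x
    rw [Algebra.smul_def, map_intCast]
  have hli : LinearIndependent (ZMod p) ω := by
    rw [Fintype.linearIndependent_iff]
    intro g hg i
    have h1 := h (fun i => ((g i).val : ℤ)) (by
      rw [← hg]
      unfold phi
      refine Finset.sum_congr rfl fun i _ => ?_
      rw [hsm]; simp) i
    have h2 := (ZMod.intCast_zmod_eq_zero_iff_dvd _ p).2 h1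
    simpa using h2
  let b : Module.Basis (Fin 3) (ZMod p) F :=
    basisOfLinearIndependentOfCardEqFinrank hli (by simp [hfin])
  have hb : ∀ i, b i = ω i := fun i => by simp [b]
  have hnd := traceForm_nondegenerate (ZMod p) F
  let b' := (Algebra.traceForm (ZMod p) F).dualBasis hnd b
  refine ⟨b', (Algebra.trace (ZMod p) F).toAddMonoidHom, ?_, ?_⟩
  · intro x hx
    by_contra hcon
    push Not at hcon
    apply hx
    exact hnd.1 x (fun y => by simpa [Algebra.traceForm_apply] using hcon y)
  · intro u a
    have key : ∀ i j, Algebra.trace (ZMod p) F (ω i * b' j) = if i = j then 1 else 0 := by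
      intro i j
      have := LinearMap.BilinForm.apply_dualBasis_left hnd b j i
      rw [Algebra.traceForm_apply, hb, mul_comm] at this
      exact this
    simp only [phi, hsm, LinearMap.toAddMonoidHom_coe, Finset.sum_mul_sum, smul_mul_smul_comm,
      map_sum, map_smul, key]
    simp

theorem Ind_dual {p : ℕ} {ω ω' : Fin 3 → F} {τ : F →+ ZMod p}
    (hτ : ∀ u a : R3, τ (phi ω u * phi ω' a) = ((∑ i, u i * a i : ℤ) : ZMod p)) : Ind p ω' := by
  intro c hc i
  have := hτ (fun j => if j = i then 1 else 0) c
  rw [hc, mul_zero, map_zero] at this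
  have h2 := (ZMod.intCast_zmod_eq_zero_iff_dvd _ p).1 this.symm
  simpa using h2

theorem re_char {p : ℕ} [NeZero p] (k : ℤ) (hk : 6 * |k| ≤ p) :
    1 / 2 ≤ (ZMod.stdAddChar (N := p) (k : ZMod p)).re := by
  rw [ZMod.stdAddChar_coe]
  have hp : (0 : ℝ) < p := by exact_mod_cast Nat.pos_of_ne_zero (NeZero.ne p)
  have e : (2 * (Real.pi : ℂ) * Complex.I * k / p) = ((2 * Real.pi * k / p : ℝ) : ℂ) * Complex.I := by
    push_cast; ring
  rw [e, Complex.exp_ofReal_mul_I_re, ← Real.cos_pi_div_three, ← Real.cos_abs (2 * Real.pi * k / p)]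
  have hk' : 6 * |(k : ℝ)| ≤ p := by exact_mod_cast hk
  have hpi := Real.pi_pos
  apply Real.cos_le_cos_of_nonneg_of_le_pi (abs_nonneg _) (by linarith)
  rw [abs_div, abs_mul, abs_of_pos hp, abs_of_pos (by positivity : 0 < 2 * Real.pi),
    div_le_div_iff₀ hp (by norm_num)]
  nlinarith

theorem bohr {p : ℕ} [Fact p.Prime] [Fintype F] (hc : Fintype.card F = p ^ 3)
    (τ : F →+ ZMod p) (hnd : ∀ x : F, x ≠ 0 → ∃ y, τ (x * y) ≠ 0) (X Y : Finset F)
    (hXY : ∀ η ∈ Y, ∀ x ∈ X, ∃ k : ℤ, τ (η * x) = k ∧ 6 * |k| ≤ p) :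
    Y.card * X.card ≤ 4 * p ^ 3 := by
  have : NeZero p := ⟨(Fact.out : p.Prime).ne_zero⟩
  let ψ : AddChar F ℂ := (ZMod.stdAddChar (N := p)).compAddMonoidHom τ
  have hψ : ∀ x, ψ x = ZMod.stdAddChar (N := p) (τ x) := fun x => rfl
  have hprim : ψ.IsPrimitive := by
    intro a ha
    rw [AddChar.ne_one_iff]
    obtain ⟨y, hy⟩ := hnd a ha
    refine ⟨y, ?_⟩
    rw [AddChar.mulShift_apply, hψ]
    intro h1
    apply hy
    apply ZMod.injective_stdAddChar
    rw [h1, AddChar.map_zero_eq_one]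
  have hpars : ∑ η : F, ‖∑ x ∈ X, ψ (η * x)‖ ^ 2 = (p : ℝ) ^ 3 * X.card := by
    have : ∑ η : F, ((‖∑ x ∈ X, ψ (η * x)‖ ^ 2 : ℝ) : ℂ) = (p : ℂ) ^ 3 * X.card := by
      have e : ∀ η : F, ((‖∑ x ∈ X, ψ (η * x)‖ ^ 2 : ℝ) : ℂ) =
          ∑ x ∈ X, ∑ y ∈ X, ψ (η * (x - y)) := by
        intro η
        rw [Complex.ofReal_pow, ← Complex.mul_conj', map_sum, Finset.sum_mul_sum]
        refine Finset.sum_congr rfl fun x _ => Finset.sum_congr rfl fun y _ => ?_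
        rw [← AddChar.map_neg_eq_conj, ← AddChar.map_add_eq_mul]
        congr 1; ring
      simp only [e]
      rw [Finset.sum_comm]
      have e2 : ∀ x ∈ X, ∑ η : F, ∑ y ∈ X, ψ (η * (x - y)) = (p : ℂ) ^ 3 := by
        intro x hx
        rw [Finset.sum_comm]
        simp only [AddChar.sum_mulShift _ hprim, sub_eq_zero, hc]
        simp [hx]
      rw [Finset.sum_congr rfl e2]
      simp [mul_comm]
    exact_mod_cast this
  have hlow : ∀ η ∈ Y, ((X.card : ℝ) / 2) ^ 2 ≤ ‖∑ x ∈ X, ψ (η * x)‖ ^ 2 := by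
    intro η hη
    apply pow_le_pow_left₀ (by positivity)
    refine le_trans ?_ (Complex.re_le_norm _)
    rw [Complex.re_sum]
    calc (X.card : ℝ) / 2 = ∑ x ∈ X, (1 / 2 : ℝ) := by simp; ring
      _ ≤ _ := by
        refine Finset.sum_le_sum fun x hx => ?_
        obtain ⟨k, hk, hk6⟩ := hXY η hη x hx
        rw [hψ, hk]
        exact re_char k hk6
  have h1 : (Y.card : ℝ) * ((X.card : ℝ) / 2) ^ 2 ≤ (p : ℝ) ^ 3 * X.card := by
    rw [← hpars]
    calc _ = ∑ η ∈ Y, ((X.card : ℝ) / 2) ^ 2 := by simp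
      _ ≤ ∑ η ∈ Y, ‖∑ x ∈ X, ψ (η * x)‖ ^ 2 := Finset.sum_le_sum hlow
      _ ≤ _ := Finset.sum_le_sum_of_subset_of_nonneg (Finset.subset_univ _)
          (fun _ _ _ => by positivity)
  rcases Nat.eq_zero_or_pos X.card with h0 | hpos
  · rw [h0]; simp
  · have hposR : (0 : ℝ) < X.card := by exact_mod_cast hpos
    have h2 : (Y.card : ℝ) * X.card ≤ 4 * p ^ 3 := by
      have : ((Y.card : ℝ) * X.card) * X.card ≤ (4 * p ^ 3) * X.card := by nlinarith
      exact le_of_mul_le_mul_right this hposR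
    exact_mod_cast h2

theorem abs_dot_le (p : ℕ) (H : Fin 3 → ℕ) (u a : R3) (hu : ∀ i, |u i| ≤ H i)
    (ha : ∀ i, |a i| ≤ ((p / (36 * H i) : ℕ) : ℤ)) : 36 * |∑ i, u i * a i| ≤ 3 * p := by
  have h1 : ∀ i, 36 * |u i * a i| ≤ p := by
    intro i
    rw [abs_mul]
    have e : (36 * H i) * (p / (36 * H i)) ≤ p := Nat.mul_div_le _ _
    have e' : (36 * (H i : ℤ)) * ((p / (36 * H i) : ℕ) : ℤ) ≤ p := by exact_mod_cast e
    have : |u i| * |a i| ≤ H i * ((p / (36 * H i) : ℕ) : ℤ) :=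
      mul_le_mul (hu i) (ha i) (abs_nonneg _) (by positivity)
    linarith
  rw [Fin.sum_univ_three]
  have a1 := abs_add_le (u 0 * a 0 + u 1 * a 1) (u 2 * a 2)
  have a2 := abs_add_le (u 0 * a 0) (u 1 * a 1)
  have := h1 0
  have := h1 1
  have := h1 2
  linarith

theorem transfer {p : ℕ} [Fact p.Prime] [Fintype F] (hc : Fintype.card F = p ^ 3)
    {ω ω' : Fin 3 → F} (h : Ind p ω) {τ : F →+ ZMod p} (hnd : ∀ x : F, x ≠ 0 → ∃ y, τ (x * y) ≠ 0)
    (hτ : ∀ u a : R3, τ (phi ω u * phi ω' a) = ((∑ i, u i * a i : ℤ) : ZMod p))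
    (z : F) (H : Fin 3 → ℕ) (hH2 : ∀ i, 2 * H i < p) :
    (G ω z H).card * (∏ i, (p / (36 * H i) + 1)) ^ 2 ≤
      4 * p ^ 3 * (G ω' z (fun i => p / (36 * H i))).card := by
  set T : Fin 3 → ℕ := fun i => p / (36 * H i) with hT
  let X : Finset F := (G ω z H).image (fun q => phi ω q.2)
  have hX : X.card = (G ω z H).card := by
    apply Finset.card_image_of_injOn
    intro x hx y hy hxy
    apply G_inj h hH2 hx hy
    rw [Finset.mem_coe, mem_G, mem_bx] at hx hy
    rw [← sub_eq_zero]
    apply h.zero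
    · rw [phi_sub]; exact sub_eq_zero.2 hxy
    · intro i
      have := abs_sub (x.2 i) (y.2 i)
      have := hx.1.2 i
      have := hy.1.2 i
      have : 2 * (H i : ℤ) < p := by exact_mod_cast hH2 i
      simp only [Pi.sub_apply]
      linarith
  let Q : Finset R3 := Fintype.piFinset fun i => Finset.Icc 0 (T i : ℤ)
  have hQ : (Q ×ˢ Q).card = (∏ i, (T i + 1)) ^ 2 := by
    have : ∀ n : ℕ, ((n : ℤ) + 1).toNat = n + 1 := by intro n; omega
    simp [Q, Finset.card_product, sq, this]
  have hmemQ : ∀ a : R3, a ∈ Q → ∀ i, 0 ≤ a i ∧ a i ≤ T i := by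
    intro a ha i
    have := Fintype.mem_piFinset.1 ha i
    simpa using this
  let f : R3 × R3 → F := fun q => z * phi ω' q.2 - phi ω' q.1
  let Y : Finset F := (Q ×ˢ Q).image f
  have h1 : (Q ×ˢ Q).card ≤ (G ω' z T).card * Y.card := by
    apply Finset.card_le_mul_card_image_of_maps_to (f := f)
    · intro a ha; exact Finset.mem_image_of_mem f ha
    · intro b _
      rcases (Finset.filter (fun a => f a = b) (Q ×ˢ Q)).eq_empty_or_nonempty with he | ⟨y, hy⟩
      · rw [he]; simp
      · apply Finset.card_le_card_of_injOn (fun x => x - y)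
        · intro x hx
          rw [Finset.mem_coe, Finset.mem_filter, Finset.mem_product] at hx
          rw [Finset.mem_filter, Finset.mem_product] at hy
          have hf : f x = f y := hx.2.trans hy.2.symm
          simp only [f] at hf
          rw [Finset.mem_coe, mem_G, mem_bx]
          refine ⟨⟨?_, ?_⟩, ?_⟩
          · intro i
            have e1 := hmemQ _ hx.1.1 i
            have e2 := hmemQ _ hy.1.1 i
            simp only [Prod.fst_sub, Pi.sub_apply]
            rw [abs_le]; constructor <;> omega
          · intro i
            have e1 := hmemQ _ hx.1.2 i
            have e2 := hmemQ _ hy.1.2 i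
            simp only [Prod.snd_sub, Pi.sub_apply]
            rw [abs_le]; constructor <;> omega
          · rw [Prod.fst_sub, Prod.snd_sub, phi_sub, phi_sub]
            linear_combination -hf
        · intro a _ b _ hab
          simpa using hab
  have h2 : Y.card * X.card ≤ 4 * p ^ 3 := by
    apply bohr hc τ hnd
    intro η hη x hx
    obtain ⟨⟨b, a⟩, hq, rfl⟩ := Finset.mem_image.1 hη
    obtain ⟨⟨u, v⟩, hg, rfl⟩ := Finset.mem_image.1 hx
    rw [Finset.mem_product] at hq
    rw [mem_G, mem_bx] at hg
    obtain ⟨⟨hu, hv⟩, huv⟩ := hg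
    refine ⟨∑ i, u i * a i - ∑ i, v i * b i, ?_, ?_⟩
    · have : f (b, a) * phi ω v = phi ω u * phi ω' a - phi ω v * phi ω' b := by
        simp only [f]
        simp only at huv
        rw [huv]; ring
      simp only
      rw [this, map_sub, hτ, hτ, Int.cast_sub]
    · have ha : ∀ i, |a i| ≤ ((p / (36 * H i) : ℕ) : ℤ) := by
        intro i
        have := hmemQ _ hq.2 i
        rw [abs_of_nonneg this.1]; exact this.2
      have hb : ∀ i, |b i| ≤ ((p / (36 * H i) : ℕ) : ℤ) := by
        intro i
        have := hmemQ _ hq.1 i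
        rw [abs_of_nonneg this.1]; exact this.2
      have e1 := abs_dot_le p H u a hu ha
      have e2 := abs_dot_le p H v b hv hb
      have := abs_sub (∑ i, u i * a i) (∑ i, v i * b i)
      linarith
  rw [hX] at h2
  rw [← hQ]
  calc _ ≤ (G ω z H).card * ((G ω' z T).card * Y.card) := by gcongr
    _ = (Y.card * (G ω z H).card) * (G ω' z T).card := by ring
    _ ≤ _ := by gcongr

theorem rank_add {p : ℕ} [Fact p.Prime] {ω ω' : Fin 3 → F} {τ : F →+ ZMod p}
    (hτ : ∀ u a : R3, τ (phi ω u * phi ω' a) = ((∑ i, u i * a i : ℤ) : ZMod p))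
    (z : F) (H : Fin 3 → ℕ) :
    Module.finrank ℤ (Submodule.span ℤ (G ω z H : Set (R3 × R3))) +
      Module.finrank ℤ (Submodule.span ℤ (G ω' z (fun i => p / (36 * H i)) : Set (R3 × R3))) ≤ 6 := by
  set L := Submodule.span ℤ (G ω z H : Set (R3 × R3)) with hL
  set M := Submodule.span ℤ (G ω' z (fun i => p / (36 * H i)) : Set (R3 × R3)) with hM
  let B : R3 × R3 → R3 × R3 → ℤ := fun x y => ∑ i, x.1 i * y.2 i - ∑ i, x.2 i * y.1 i
  have hB0 : ∀ x ∈ G ω z H, ∀ y ∈ G ω' z (fun i => p / (36 * H i)), B x y = 0 := by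
    intro x hx y hy
    rw [mem_G, mem_bx] at hx hy
    have hp : (0 : ℤ) < p := by exact_mod_cast (Fact.out : p.Prime).pos
    apply Int.eq_zero_of_abs_lt_dvd (m := (p : ℤ))
    · rw [← ZMod.intCast_zmod_eq_zero_iff_dvd]
      simp only [B]
      rw [Int.cast_sub, ← hτ, ← hτ, ← map_sub, hx.2, hy.2]
      convert map_zero τ using 2
      ring
    · have e1 := abs_dot_le p H x.1 y.2 hx.1.1 hy.1.2
      have e2 := abs_dot_le p H x.2 y.1 hx.1.2 hy.1.1
      have := abs_sub (∑ i, x.1 i * y.2 i) (∑ i, x.2 i * y.1 i)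
      simp only [B]
      linarith
  have hBadd1 : ∀ x x' y, B (x + x') y = B x y + B x' y := by
    intro x x' y; simp [B, Fin.sum_univ_three]; ring
  have hBadd2 : ∀ x y y', B x (y + y') = B x y + B x y' := by
    intro x x' y; simp [B, Fin.sum_univ_three]; ring
  have hBs1 : ∀ (a : ℤ) x y, B (a • x) y = a * B x y := by
    intro a x y; simp [B, Fin.sum_univ_three]; ring
  have hBs2 : ∀ (a : ℤ) x y, B x (a • y) = a * B x y := by
    intro a x y; simp [B, Fin.sum_univ_three]; ring
  have hB1 : ∀ x ∈ G ω z H, ∀ y ∈ M, B x y = 0 := by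
    intro x hx y hy
    induction hy using Submodule.span_induction with
    | mem y hy => exact hB0 x hx y hy
    | zero => simp [B]
    | add y y' _ _ h1 h2 => rw [hBadd2, h1, h2, add_zero]
    | smul a y _ h1 => rw [hBs2, h1, mul_zero]
  have hB2 : ∀ x ∈ L, ∀ y ∈ M, B x y = 0 := by
    intro x hx y hy
    induction hx using Submodule.span_induction with
    | mem x hx => exact hB1 x hx y hy
    | zero => simp [B]
    | add y y' _ _ h1 h2 => rw [hBadd1, h1, h2, add_zero]
    | smul a y _ h1 => rw [hBs1, h1, mul_zero]
  let σ : R3 × R3 →ₗ[ℤ] R3 × R3 :=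
    LinearMap.prod (LinearMap.snd ℤ R3 R3) (-LinearMap.fst ℤ R3 R3)
  have hσ : ∀ y, σ y = (y.2, -y.1) := fun y => rfl
  let Φ : (L × M) →ₗ[ℤ] R3 × R3 := LinearMap.coprod L.subtype (σ.comp M.subtype)
  have hΦ : ∀ x : L, ∀ y : M, Φ (x, y) = (x : R3 × R3) + σ y := fun x y => by simp [Φ]
  have hinj : Function.Injective Φ := by
    rw [← LinearMap.ker_eq_bot, LinearMap.ker_eq_bot']
    rintro ⟨⟨x, hx⟩, ⟨y, hy⟩⟩ h0
    rw [hΦ, hσ] at h0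
    have hb := hB2 x hx y hy
    have e1 : ∀ i, x.1 i + y.2 i = 0 := fun i => congrArg (fun q : R3 × R3 => q.1 i) h0
    have e2 : ∀ i, x.2 i + -y.1 i = 0 := fun i => congrArg (fun q : R3 × R3 => q.2 i) h0
    have s1 : ∀ i, y.2 i = - x.1 i := fun i => by linarith [e1 i]
    have s2 : ∀ i, y.1 i = x.2 i := fun i => by linarith [e2 i]
    have hsum : ∑ i, (x.1 i * x.1 i + x.2 i * x.2 i) = 0 := by
      simp only [B, s1, s2, Fin.sum_univ_three] at hb ⊢
      linarith
    have hz := (Finset.sum_eq_zero_iff_of_nonneg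
      (fun i _ => add_nonneg (mul_self_nonneg _) (mul_self_nonneg _))).1 hsum
    have hz' : ∀ i, x.1 i = 0 ∧ x.2 i = 0 := by
      intro i
      have := hz i (Finset.mem_univ i)
      constructor <;> nlinarith [mul_self_nonneg (x.1 i), mul_self_nonneg (x.2 i)]
    have hx0 : x = 0 := Prod.ext (funext fun i => (hz' i).1) (funext fun i => (hz' i).2)
    have hy0 : y = 0 := Prod.ext (funext fun i => by rw [s2, (hz' i).2]; rfl)
      (funext fun i => by rw [s1, (hz' i).1]; rfl)
    subst hx0 hy0
    rfl
  have := LinearMap.finrank_le_finrank_of_injective hinj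
  rw [Module.finrank_prod, Module.finrank_prod] at this
  simpa using this

end
end BoxEnergy


namespace BoxEnergy

/-! Real inequalities. -/

theorem ineq1 {h0 h1 h2 m c Fz : ℝ} (p0 : 1 ≤ h0) (p1 : 1 ≤ h1) (p2 : 1 ≤ h2) (hm : 1 ≤ m)
    (hm2 : m ≤ 2 * h2) (hc : c ≤ 2 * m) (hF : Fz ≤ c * ((2 * h0 + 1) * (2 * h1 + 1))) :
    Fz * (4 * h2 / m + 1) ≤ 108 * (h0 * h1 * h2) := by
  have m0 : 0 < m := by linarith
  have e1 : Fz ≤ 2 * m * ((3 * h0) * (3 * h1)) := by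
    refine hF.trans ?_
    gcongr <;> linarith
  calc Fz * (4 * h2 / m + 1) ≤ (2 * m * ((3 * h0) * (3 * h1))) * (4 * h2 / m + 1) := by gcongr
    _ = 18 * (h0 * h1) * (4 * h2 + m) := by field_simp; ring
    _ ≤ 18 * (h0 * h1) * (4 * h2 + 2 * h2) := by gcongr
    _ = _ := by ring

theorem ineq2 {h0 h1 h2 m c Fz : ℝ} (p0 : 1 ≤ h0) (h01 : h0 ≤ h1) (h12 : h1 ≤ h2) (hm : 1 ≤ m)
    (hm2 : m ≤ 2 * h2) (hc : c ≤ 2 * m) (hc0 : h0 + 1 ≤ c) (hF : Fz ≤ c * (16 * (2 * h0 + 1) ^ 2)) :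
    Fz * ((4 * h1 / m + 1) * (4 * h2 / m + 1)) ≤ 15552 * (h0 * h1 * h2) := by
  have m0 : 0 < m := by linarith
  have p1 : 1 ≤ h1 := by linarith
  have p2 : 1 ≤ h2 := by linarith
  have e1 : Fz ≤ 2 * m * (16 * (3 * h0) ^ 2) := by
    refine hF.trans ?_
    gcongr; linarith
  have e2 : h0 * (4 * h1 / m + 1) ≤ 9 * h1 := by
    have : h0 / m ≤ 2 := by rw [div_le_iff₀ m0]; linarith
    calc h0 * (4 * h1 / m + 1) = (h0 / m) * (4 * h1) + h0 := by ring
      _ ≤ 2 * (4 * h1) + h1 := by gcongr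
      _ = _ := by ring
  calc Fz * ((4 * h1 / m + 1) * (4 * h2 / m + 1))
      ≤ (2 * m * (16 * (3 * h0) ^ 2)) * ((4 * h1 / m + 1) * (4 * h2 / m + 1)) := by gcongr
    _ = 288 * h0 * (h0 * (4 * h1 / m + 1)) * (4 * h2 + m) := by field_simp; ring
    _ ≤ 288 * h0 * (9 * h1) * (4 * h2 + 2 * h2) := by gcongr
    _ = _ := by ring

theorem ineq3 {h0 h1 h2 m c Fz : ℝ} (p0 : 1 ≤ h0) (h01 : h0 ≤ h1) (h12 : h1 ≤ h2) (hm : 1 ≤ m)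
    (hc : c ≤ h0) (hF : Fz ≤ c * (16 * (2 * h0 + 1) ^ 2)) (hF1 : m ^ 3 + 1 ≤ Fz)
    (hF2 : Fz ≤ 8 * m ^ 3) :
    Fz * ((4 * h0 / m + 1) * (4 * h1 / m + 1) * (4 * h2 / m + 1)) ≤ 8000 * (h0 * h1 * h2) := by
  have m0 : 0 < m := by linarith
  have p1 : 1 ≤ h1 := by linarith
  have p2 : 1 ≤ h2 := by linarith
  have e1 : Fz ≤ h0 * (16 * (3 * h0) ^ 2) := by
    refine hF.trans ?_
    gcongr; linarith
  have e2 : m ≤ 6 * h0 := by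
    by_contra hcon
    push Not at hcon
    have : (6 * h0) ^ 3 < m ^ 3 := by gcongr
    have h3 : 0 < h0 ^ 3 := by positivity
    nlinarith
  calc Fz * ((4 * h0 / m + 1) * (4 * h1 / m + 1) * (4 * h2 / m + 1))
      ≤ (8 * m ^ 3) * ((4 * h0 / m + 1) * (4 * h1 / m + 1) * (4 * h2 / m + 1)) := by gcongr
    _ = 8 * ((4 * h0 + m) * (4 * h1 + m) * (4 * h2 + m)) := by field_simp
    _ ≤ 8 * ((10 * h0) * (10 * h1) * (10 * h2)) := by gcongr <;> linarith
    _ = _ := by ring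

theorem ineq4a {h0 h1 h2 c Fz p t0 t1 t2 : ℝ} (p0 : 1 ≤ h0) (h01 : h0 ≤ h1) (h12 : h1 ≤ h2)
    (hp : 0 < p) (hFz : 0 ≤ Fz) (ht0 : p / (36 * h0) ≤ t0) (ht1 : p / (36 * h1) ≤ t1)
    (ht2 : p / (36 * h2) ≤ t2) (hF : Fz * (t0 * t1 * t2) ^ 2 ≤ 4 * p ^ 3 * c) :
    Fz ≤ 4 * 36 ^ 6 * ((h0 * h1 * h2) ^ 2 / p ^ 3) * c := by
  have p1 : 1 ≤ h1 := by linarith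
  have p2 : 1 ≤ h2 := by linarith
  have z0 : 0 < h0 := by linarith
  have z1 : 0 < h1 := by linarith
  have z2 : 0 < h2 := by linarith
  have q0 : 0 ≤ t0 := le_trans (by positivity) ht0
  have q1 : 0 ≤ t1 := le_trans (by positivity) ht1
  have q2 : 0 ≤ t2 := le_trans (by positivity) ht2
  have e : Fz * (p / (36 * h0) * (p / (36 * h1)) * (p / (36 * h2))) ^ 2 ≤ 4 * p ^ 3 * c := by
    refine le_trans ?_ hF
    gcongr
  have e2 : Fz * p ^ 6 ≤ 4 * p ^ 3 * c * (36 ^ 6 * (h0 * h1 * h2) ^ 2) := by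
    rw [← div_le_iff₀ (by positivity)]
    refine le_trans (le_of_eq ?_) e
    field_simp
  have e3 : Fz * p ^ 3 ≤ 4 * c * (36 ^ 6 * (h0 * h1 * h2) ^ 2) := by
    have : (Fz * p ^ 3) * p ^ 3 ≤ (4 * c * (36 ^ 6 * (h0 * h1 * h2) ^ 2)) * p ^ 3 := by
      linarith
    exact le_of_mul_le_mul_right this (by positivity)
  rw [← le_div_iff₀ (by positivity)] at e3
  refine e3.trans (le_of_eq ?_)
  ring

theorem ineq4 {h0 h1 h2 m c Fz p T0 T1 T2 : ℝ} (p0 : 1 ≤ h0) (h01 : h0 ≤ h1) (h12 : h1 ≤ h2)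
    (hm : 1 ≤ m) (hp : 2 * h2 ^ 2 ≤ p) (hc : c ≤ 4 * m ^ 2) (hm2 : m ≤ p / h0)
    (hF : Fz ≤ 4 * 36 ^ 6 * ((h0 * h1 * h2) ^ 2 / p ^ 3) * c)
    (q0 : 0 ≤ T0) (q1 : 0 ≤ T1) (q2 : 0 ≤ T2)
    (ht0 : 4 * T0 ≤ p / h0) (ht1 : 4 * T1 ≤ p / h1) (ht2 : 4 * T2 ≤ p / h2) :
    Fz * ((4 * T0 / m + 1) * (4 * T1 / m + 1) * (4 * T2 / m + 1)) ≤
      (96 * 36 ^ 6) * (h0 * h1 * h2) := by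
  have m0 : 0 < m := by linarith
  have p1 : 1 ≤ h1 := by linarith
  have p2 : 1 ≤ h2 := by linarith
  have hppos : 0 < p := by nlinarith
  have e1 : Fz ≤ 4 * 36 ^ 6 * ((h0 * h1 * h2) ^ 2 / p ^ 3) * (4 * m ^ 2) := by
    refine hF.trans ?_
    gcongr
  have key : m ^ 2 * ((p / m + h0) * (p / m + h1) * (p / m + h2)) ≤ 6 * p ^ 3 := by
    have a0 : h0 ≤ p / m := by
      rw [le_div_iff₀ m0]
      rw [le_div_iff₀ (by linarith)] at hm2
      linarith
    have mp : m ≤ p := hm2.trans (div_le_self hppos.le p0)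
    have b1 : h2 ^ 2 ≤ p := by nlinarith
    have b2 : h1 * h2 ≤ p := by nlinarith
    have b3 : h1 + h2 ≤ p := by nlinarith
    have b4 : p ^ 2 / m ≤ p ^ 2 := div_le_self (by positivity) hm
    have b5 : m * (h1 * h2) ≤ p * p := by gcongr
    calc m ^ 2 * ((p / m + h0) * (p / m + h1) * (p / m + h2))
        ≤ m ^ 2 * ((p / m + p / m) * (p / m + h1) * (p / m + h2)) := by gcongr
      _ = 2 * p * (p ^ 2 / m + p * (h1 + h2) + m * (h1 * h2)) := by field_simp; ring
      _ ≤ 2 * p * (p ^ 2 + p * p + p * p) := by gcongr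
      _ = _ := by ring
  calc Fz * ((4 * T0 / m + 1) * (4 * T1 / m + 1) * (4 * T2 / m + 1))
      ≤ (4 * 36 ^ 6 * ((h0 * h1 * h2) ^ 2 / p ^ 3) * (4 * m ^ 2)) *
        ((p / h0 / m + 1) * (p / h1 / m + 1) * (p / h2 / m + 1)) := by gcongr
    _ = 16 * 36 ^ 6 * (h0 * h1 * h2) / p ^ 3 *
        (m ^ 2 * ((p / m + h0) * (p / m + h1) * (p / m + h2))) := by field_simp; norm_num
    _ ≤ 16 * 36 ^ 6 * (h0 * h1 * h2) / p ^ 3 * (6 * p ^ 3) := by gcongr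
    _ = _ := by field_simp; norm_num

theorem ineq5 {h0 h1 h2 Fz p : ℝ} (p0 : 1 ≤ h0) (h01 : h0 ≤ h1) (h12 : h1 ≤ h2)
    (hp : 2 * h2 ^ 2 ≤ p)
    (hF : Fz ≤ 4 * 36 ^ 6 * ((h0 * h1 * h2) ^ 2 / p ^ 3) * 1) : Fz ≤ 4 * 36 ^ 6 := by
  have p1 : 1 ≤ h1 := by linarith
  have p2 : 1 ≤ h2 := by linarith
  have hppos : 0 < p := by nlinarith
  have h2p : h2 ^ 2 ≤ p := by nlinarith
  have e : (h0 * h1 * h2) ^ 2 / p ^ 3 ≤ 1 := by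
    rw [div_le_one (by positivity)]
    calc (h0 * h1 * h2) ^ 2 ≤ (h2 * h2 * h2) ^ 2 := by gcongr; linarith
      _ = (h2 ^ 2) ^ 3 := by ring
      _ ≤ p ^ 3 := by gcongr
  linarith

section
variable {F : Type} [Field F]

/-- Constant of the main estimate. -/
noncomputable def C0 : ℝ := 108 ^ 2 + 15552 ^ 2 + 8000 ^ 2 + (96 * 36 ^ 6) ^ 2 + (4 * 36 ^ 6 * 27) ^ 2

theorem card_le_pow {p J : ℕ} (hJ : p ^ 6 ≤ 2 ^ J) (T : Fin 3 → ℕ) (hT : ∀ i, 2 * T i < p)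
    (A : Finset (R3 × R3)) (hA : A ⊆ bx T) : A.card ≤ 2 ^ J := by
  refine (Finset.card_le_card hA).trans ?_
  rw [card_bx]
  refine le_trans ?_ hJ
  have h0 := hT 0
  have h1 := hT 1
  have h2 := hT 2
  calc _ ≤ (p * p * p) ^ 2 := by gcongr <;> omega
    _ = p ^ 6 := by ring

set_option maxHeartbeats 4000000 in
theorem main_sum {p : ℕ} [Fact p.Prime] [CharP F p] [Fintype F] (hc : Fintype.card F = p ^ 3)
    (hp3 : 3 ≤ p)
    {ω : Fin 3 → F} (h : Ind p ω) (H : Fin 3 → ℕ) (hH1 : 1 ≤ H 0) (h01 : H 0 ≤ H 1)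
    (h12 : H 1 ≤ H 2) (hp : 2 * H 2 ^ 2 < p) (J : ℕ) (hJ : p ^ 6 ≤ 2 ^ J) :
    ∑ z ∈ Finset.univ.filter (fun z => 2 ≤ (G ω z H).card), ((G ω z H).card : ℝ) ^ 2 ≤
      C0 * (J + 1) * ((H 0 : ℝ) * H 1 * H 2) ^ 2 := by
  obtain ⟨ω', τ, hnd, hτ⟩ := exists_dual hc h
  have h' : Ind p ω' := Ind_dual hτ
  have hpF : (p : F) = 0 := CharP.cast_eq_zero F p
  have hHle : ∀ i, H i ≤ H 2 := by intro i; fin_cases i <;> simp <;> omega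
  have hH2 : ∀ i, 2 * H i < p := by
    intro i
    have := hHle i
    nlinarith
  have r0 : (1 : ℝ) ≤ H 0 := by exact_mod_cast hH1
  have r01 : (H 0 : ℝ) ≤ H 1 := by exact_mod_cast h01
  have r12 : (H 1 : ℝ) ≤ H 2 := by exact_mod_cast h12
  have rp : 2 * (H 2 : ℝ) ^ 2 ≤ p := by exact_mod_cast hp.le
  have r1 : (1 : ℝ) ≤ H 1 := by linarith
  have r2 : (1 : ℝ) ≤ H 2 := by linarith
  have rpp : (0 : ℝ) < p := by exact_mod_cast (show 0 < p by omega)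
  set b : ℝ := (H 0 : ℝ) * H 1 * H 2 with hb
  have hbpos : 0 ≤ b := by positivity
  set Z := Finset.univ.filter (fun z => 2 ≤ (G ω z H).card) with hZ
  have hZ2 : ∀ z ∈ Z, 2 ≤ (G ω z H).card := fun z hz => (Finset.mem_filter.1 hz).2
  set X : F → ℝ := fun z => ((G ω z H).card : ℝ) ^ 2 with hX
  set Tp : Fin 3 → ℕ := fun i => p / (36 * H i) with hTp
  have hTp2 : ∀ i, 2 * Tp i < p := by
    intro i
    have h1 : 1 ≤ H i := by
      have : H 0 ≤ H i := by fin_cases i <;> simp <;> omega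
      omega
    have : Tp i ≤ p / 36 := Nat.div_le_div_left (by omega) (by norm_num)
    omega
  -- the pieces
  set P1 : F → Prop := fun z => ∃ a : ℤ, z = a with hP1
  set P2 : F → Prop := fun z => H 0 + 1 ≤ (G0 ω z H).card with hP2
  set P3 : F → Prop := fun z =>
    Module.finrank ℤ (Submodule.span ℤ (G ω z H : Set (R3 × R3))) ≤ 3 with hP3
  set P4 : F → Prop := fun z => 2 ≤ (G ω' z Tp).card with hP4
  have s1 := Finset.sum_filter_add_sum_filter_not Z P1 X
  set Z1 := Z.filter (fun z => ¬ P1 z) with hZ1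
  have s2 := Finset.sum_filter_add_sum_filter_not Z1 P2 X
  set Z2 := Z1.filter (fun z => ¬ P2 z) with hZ2d
  have s3 := Finset.sum_filter_add_sum_filter_not Z2 P3 X
  set Z3 := Z2.filter (fun z => ¬ P3 z) with hZ3
  have s4 := Finset.sum_filter_add_sum_filter_not Z3 P4 X
  set Z4 := Z3.filter (fun z => ¬ P4 z) with hZ4
  have trf : ∀ z, ((G ω z H).card : ℝ) ≤
      4 * 36 ^ 6 * (b ^ 2 / (p : ℝ) ^ 3) * (G ω' z Tp).card := by
    intro z
    have e := transfer hc h hnd hτ z H hH2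
    rw [Fin.prod_univ_three] at e
    have e' : ((G ω z H).card : ℝ) * (((Tp 0 : ℝ) + 1) * ((Tp 1 : ℝ) + 1) * ((Tp 2 : ℝ) + 1)) ^ 2 ≤
        4 * (p : ℝ) ^ 3 * (G ω' z Tp).card := by exact_mod_cast e
    have ht : ∀ i, (p : ℝ) / (36 * H i) ≤ (Tp i : ℝ) + 1 := by
      intro i
      have := (Nat.lt_floor_add_one ((p : ℝ) / ((36 * H i : ℕ) : ℝ))).le
      rw [Nat.floor_div_eq_div] at this
      push_cast at this
      exact this
    exact ineq4a r0 r01 r12 rpp (by positivity) (ht 0) (ht 1) (ht 2) e'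
  have notP1 : ∀ z, ¬ P1 z → Module.finrank ℤ (Submodule.span ℤ (G0 ω z H : Set (R3 × R3))) ≤ 1 := by
    intro z hz
    apply rank_G0 h hHle hp hH2
    intro D e f g k hD hw e1 e2
    exact hz (quad hc z D e f g k (ω 1) (ω 2) hD hw e1 e2)
  have g0 : ∀ z, ((G ω z H).card : ℝ) ≤ (G0 ω z H).card * (16 * (2 * H 0 + 1) ^ 2) := by
    intro z
    exact_mod_cast card_G_le_G0 ω z H
  have sq_form : ∀ {A N c : ℝ}, 0 ≤ A → 0 ≤ N → A * N ≤ c * b → A ^ 2 * N ^ 2 ≤ c ^ 2 * b ^ 2 := by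
    intro A N c hA hN hle
    rw [← mul_pow, ← mul_pow]
    gcongr
  have k1 : ∑ z ∈ Z.filter P1, X z ≤ J * (108 ^ 2 * b ^ 2) := by
    have hT : ∀ i, 2 * (![0, 0, H 2] : Fin 3 → ℕ) i < p := by
      intro i
      have := hH2 2
      fin_cases i <;> simp <;> omega
    have hsub : ∀ z, G00 ω z H ⊆ bx ![0, 0, H 2] := by
      intro z x hx
      rw [mem_G00, mem_G0, mem_G, mem_bx] at hx
      obtain ⟨⟨⟨⟨a1, a2⟩, -⟩, a3, a4⟩, a5, a6⟩ := hx
      rw [mem_bx]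
      constructor
      · intro i; fin_cases i <;> simp [a3, a5]
        exact a1 2
      · intro i; fin_cases i <;> simp [a4, a6]
        exact a2 2
    refine pcd h ![0, 0, H 2] hT (Z.filter P1) (fun z => G00 ω z H) 1 J le_rfl
      (fun z _ => hsub z) ?_ (fun z _ => rank_G00 h hHle hp hH2 z) ?_
      (fun z _ => card_le_pow hJ _ hT _ (hsub z)) X _ (by positivity) ?_
    · intro z _ x hx
      rw [mem_G00, mem_G0, mem_G] at hx
      exact hx.1.1.2
    · intro z hz
      obtain ⟨hzZ, a, rfl⟩ := Finset.mem_filter.1 hz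
      exact two_le_G00 h hpF hHle a (hZ2 _ hzZ)
    · intro z hz m hm _ hcm hmi
      obtain ⟨hzZ, a, rfl⟩ := Finset.mem_filter.1 hz
      have hm2 : m ≤ 2 * H 2 := by
        obtain ⟨i, hi⟩ := hmi
        fin_cases i <;> simp at hi <;> linarith
      have e := card_G_le_G00 h hpF hH2 a
      have e' : ((G ω (a : F) H).card : ℝ) ≤
        (G00 ω (a : F) H).card * ((2 * H 0 + 1) * (2 * H 1 + 1)) := by exact_mod_cast e
      have key := ineq1 r0 r1 r2 hm hm2 (by simpa using hcm) e'
      have := sq_form (by positivity) (by positivity) key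
      simpa [hX] using this
  have k2 : ∑ z ∈ Z1.filter P2, X z ≤ J * (15552 ^ 2 * b ^ 2) := by
    have hT : ∀ i, 2 * (![0, H 1, H 2] : Fin 3 → ℕ) i < p := by
      intro i
      have := hH2 2
      have := hH2 1
      fin_cases i <;> simp <;> omega
    have hsub : ∀ z, G0 ω z H ⊆ bx ![0, H 1, H 2] := by
      intro z x hx
      rw [mem_G0, mem_G, mem_bx] at hx
      obtain ⟨⟨⟨a1, a2⟩, -⟩, a3, a4⟩ := hx
      rw [mem_bx]
      constructor
      · intro i; fin_cases i <;> simp [a3]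
        · exact a1 1
        · exact a1 2
      · intro i; fin_cases i <;> simp [a4]
        · exact a2 1
        · exact a2 2
    refine pcd h ![0, H 1, H 2] hT (Z1.filter P2) (fun z => G0 ω z H) 1 J le_rfl
      (fun z _ => hsub z) ?_ ?_ ?_
      (fun z _ => card_le_pow hJ _ hT _ (hsub z)) X _ (by positivity) ?_
    · intro z _ x hx
      rw [mem_G0, mem_G] at hx
      exact hx.1.2
    · intro z hz
      exact notP1 z (Finset.mem_filter.1 (Finset.mem_filter.1 hz).1).2
    · intro z hz
      have := (Finset.mem_filter.1 hz).2
      simp only [hP2] at this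
      omega
    · intro z hz m hm _ hcm hmi
      have hP := (Finset.mem_filter.1 hz).2
      simp only [hP2] at hP
      have hm2 : m ≤ 2 * H 2 := by
        obtain ⟨i, hi⟩ := hmi
        fin_cases i <;> simp at hi <;> linarith
      have key := ineq2 r0 r01 r12 hm hm2 (by simpa using hcm) (by exact_mod_cast hP) (g0 z)
      have := sq_form (by positivity) (by positivity) key
      simpa [hX] using this
  have k3 : ∑ z ∈ Z2.filter P3, X z ≤ J * (8000 ^ 2 * b ^ 2) := by
    have hsub : ∀ z, G ω z H ⊆ bx H := fun z => Finset.filter_subset _ _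
    refine pcd h H hH2 (Z2.filter P3) (fun z => G ω z H) 3 J (by norm_num)
      (fun z _ => hsub z) ?_ ?_ ?_
      (fun z _ => card_le_pow hJ _ hH2 _ (hsub z)) X _ (by positivity) ?_
    · intro z _ x hx
      exact (mem_G.1 hx).2
    · intro z hz
      exact (Finset.mem_filter.1 hz).2
    · intro z hz
      exact hZ2 z (Finset.mem_filter.1 (Finset.mem_filter.1 (Finset.mem_filter.1 hz).1).1).1
    · intro z hz m hm hc1 hcm _
      have hP := (Finset.mem_filter.1 (Finset.mem_filter.1 hz).1).2
      simp only [hP2] at hP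
      have hP' : (G0 ω z H).card ≤ H 0 := by omega
      have key := ineq3 r0 r01 r12 hm (by exact_mod_cast hP') (g0 z) hc1
        (hcm.trans (le_of_eq (by norm_num)))
      exact sq_form (by positivity) (by positivity) key
  have hTpr : ∀ i, 4 * (Tp i : ℝ) ≤ p / H i := by
    intro i
    have := Nat.cast_div_le (α := ℝ) (m := p) (n := 36 * H i)
    push_cast at this
    have h2 : (p : ℝ) / (36 * H i) = (p / H i) / 36 := by rw [mul_comm, div_div]
    have h3 : (0 : ℝ) ≤ p / H i := by positivity
    simp only [hTp]
    linarith
  have k4 : ∑ z ∈ Z3.filter P4, X z ≤ J * ((96 * 36 ^ 6) ^ 2 * b ^ 2) := by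
    have hsub : ∀ z, G ω' z Tp ⊆ bx Tp := fun z => Finset.filter_subset _ _
    refine pcd h' Tp hTp2 (Z3.filter P4) (fun z => G ω' z Tp) 2 J (by norm_num)
      (fun z _ => hsub z) ?_ ?_ ?_
      (fun z _ => card_le_pow hJ _ hTp2 _ (hsub z)) X _ (by positivity) ?_
    · intro z _ x hx
      exact (mem_G.1 hx).2
    · intro z hz
      have hP := (Finset.mem_filter.1 (Finset.mem_filter.1 hz).1).2
      simp only [hP3] at hP
      have this : Module.finrank ℤ (Submodule.span ℤ (G ω z H : Set (R3 × R3))) +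
          Module.finrank ℤ (Submodule.span ℤ (G ω' z Tp : Set (R3 × R3))) ≤ 6 := rank_add hτ z H
      omega
    · intro z hz
      exact (Finset.mem_filter.1 hz).2
    · intro z hz m hm hc1 hcm hmi
      have hm2 : m ≤ p / H 0 := by
        obtain ⟨i, hi⟩ := hmi
        have e1 := hTpr i
        have e2 : (p : ℝ) / H i ≤ p / H 0 := by
          have : (H 0 : ℝ) ≤ H i := by fin_cases i <;> simp <;> linarith
          gcongr
        have : (0 : ℝ) ≤ Tp i := by positivity
        linarith
      have key := ineq4 r0 r01 r12 hm rp (hcm.trans (le_of_eq (by norm_num))) hm2 (trf z)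
        (by positivity) (by positivity) (by positivity) (hTpr 0) (hTpr 1) (hTpr 2)
      exact sq_form (by positivity) (by positivity) key
  have k5 : ∑ z ∈ Z4, X z ≤ (4 * 36 ^ 6 * 27) ^ 2 * b ^ 2 := by
    have hcard : (Z4.card : ℝ) ≤ (27 * b) ^ 2 := by
      have e := count h H (fun i => by have := hH2 i; omega) Z4 (by
        intro z hz
        have hzZ := (Finset.mem_filter.1 (Finset.mem_filter.1 (Finset.mem_filter.1
          (Finset.mem_filter.1 hz).1).1).1).1
        obtain ⟨x, hx, hx0⟩ := Finset.exists_mem_ne (by have := hZ2 z hzZ; omega :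
          1 < (G ω z H).card) 0
        rw [mem_G] at hx
        exact ⟨x, hx0, hx.1, hx.2⟩)
      have e' : (Z4.card : ℝ) ≤ ((2 * H 0 + 1) * (2 * H 1 + 1) * (2 * H 2 + 1)) ^ 2 := by
        exact_mod_cast e
      refine e'.trans ?_
      calc _ ≤ (((3 : ℝ) * H 0) * (3 * H 1) * (3 * H 2)) ^ 2 := by gcongr <;> linarith
        _ = _ := by rw [hb]; ring
    have hbd : ∀ z ∈ Z4, X z ≤ (4 * 36 ^ 6) ^ 2 := by
      intro z hz
      have hP := (Finset.mem_filter.1 hz).2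
      simp only [hP4] at hP
      have hle : ((G ω' z Tp).card : ℝ) ≤ 1 := by
        have : (G ω' z Tp).card ≤ 1 := by omega
        exact_mod_cast this
      have e1 : ((G ω z H).card : ℝ) ≤ 4 * 36 ^ 6 * (b ^ 2 / (p : ℝ) ^ 3) * 1 :=
        (trf z).trans (by gcongr)
      have := ineq5 r0 r01 r12 rp e1
      simp only [hX]
      gcongr
    calc ∑ z ∈ Z4, X z ≤ ∑ z ∈ Z4, (4 * 36 ^ 6 : ℝ) ^ 2 := Finset.sum_le_sum hbd
      _ = Z4.card * (4 * 36 ^ 6 : ℝ) ^ 2 := by simp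
      _ ≤ (27 * b) ^ 2 * (4 * 36 ^ 6 : ℝ) ^ 2 := by gcongr
      _ = _ := by ring
  have hb2 : 0 ≤ b ^ 2 := by positivity
  have hJ0 : (0 : ℝ) ≤ J := by positivity
  have hJb : 0 ≤ J * b ^ 2 := by positivity
  have : C0 * (J + 1) * b ^ 2 = C0 * (J * b ^ 2) + C0 * b ^ 2 := by ring
  rw [this, ← s1, ← s2, ← s3, ← s4]
  unfold C0
  linarith

end
end BoxEnergy


namespace BoxEnergy

section
variable {F : Type} [Field F]

/-- Pairs in `B` with ratio `z`. -/
noncomputable def Rt (B : Finset F) (z : F) : Finset (F × F) :=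
  (B ×ˢ B).filter (fun q => q.2 ≠ 0 ∧ q.1 = z * q.2)

theorem mem_Rt {B : Finset F} {z : F} {q : F × F} :
    q ∈ Rt B z ↔ (q.1 ∈ B ∧ q.2 ∈ B) ∧ q.2 ≠ 0 ∧ q.1 = z * q.2 := by
  simp [Rt]

theorem Rt_sum_le [Fintype F] (B : Finset F) : ∑ z, (Rt B z).card ≤ B.card ^ 2 := by
  rw [← Finset.card_sigma, sq, ← Finset.card_product]
  apply Finset.card_le_card_of_injOn (fun s => s.2)
  · rintro ⟨z, q⟩ hs
    simp only [Finset.coe_sigma, Set.mem_sigma_iff, Finset.mem_coe, mem_Rt] at hs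
    simp only [Finset.coe_product, Set.mem_prod, Finset.mem_coe]
    exact hs.2.1
  · rintro ⟨z, q⟩ hs ⟨z', q'⟩ hs' heq
    simp only [Finset.coe_sigma, Set.mem_sigma_iff, Finset.mem_coe, mem_Rt] at hs hs'
    simp only at heq
    subst heq
    have : z = z' := mul_right_cancel₀ hs.2.2.1 (hs.2.2.2.symm.trans hs'.2.2.2)
    subst this
    rfl

theorem zero_pairs_le (B : Finset F) :
    ((B ×ˢ B).filter (fun q => q.1 * q.2 = 0)).card ≤ 2 * B.card := by
  have hsub : (B ×ˢ B).filter (fun q => q.1 * q.2 = 0) ⊆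
      B.image (fun b => ((0 : F), b)) ∪ B.image (fun b => (b, (0 : F))) := by
    rintro ⟨x, y⟩ hq
    simp only [Finset.mem_filter, Finset.mem_product, mul_eq_zero] at hq
    rw [Finset.mem_union, Finset.mem_image, Finset.mem_image]
    rcases hq with ⟨⟨hx, hy⟩, rfl | rfl⟩
    · exact Or.inl ⟨y, hy, rfl⟩
    · exact Or.inr ⟨x, hx, rfl⟩
  calc _ ≤ _ := Finset.card_le_card hsub
    _ ≤ _ := Finset.card_union_le _ _
    _ ≤ B.card + B.card := add_le_add Finset.card_image_le Finset.card_image_le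
    _ = _ := by ring

theorem energy_le [Fintype F] (B : Finset F) (g : F → ℕ) (hg : ∀ z, (Rt B z).card ≤ g z) :
    ((B ×ˢ B ×ˢ B ×ˢ B).filter (fun q => q.1 * q.2.1 = q.2.2.1 * q.2.2.2)).card ≤
      5 * B.card ^ 2 + ∑ z ∈ Finset.univ.filter (fun z => 2 ≤ g z), g z ^ 2 := by
  set Q := (B ×ˢ B ×ˢ B ×ˢ B).filter (fun q => q.1 * q.2.1 = q.2.2.1 * q.2.2.2) with hQ
  have hsplit := Finset.card_filter_add_card_filter_not (s := Q) (fun q => q.1 * q.2.1 = 0)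
  have h0 : (Q.filter (fun q => q.1 * q.2.1 = 0)).card ≤ 4 * B.card ^ 2 := by
    have : (Q.filter (fun q => q.1 * q.2.1 = 0)).card ≤
        (((B ×ˢ B).filter (fun q => q.1 * q.2 = 0)) ×ˢ
          ((B ×ˢ B).filter (fun q => q.1 * q.2 = 0))).card := by
      apply Finset.card_le_card_of_injOn (fun q => ((q.1, q.2.1), (q.2.2.1, q.2.2.2)))
      · rintro ⟨x, y, w, t⟩ hq
        simp only [hQ, Finset.mem_coe, Finset.mem_filter, Finset.mem_product] at hq ⊢
        obtain ⟨⟨⟨a1, a2, a3, a4⟩, e⟩, e0⟩ := hq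
        exact ⟨⟨⟨a1, a2⟩, e0⟩, ⟨a3, a4⟩, e ▸ e0⟩
      · rintro ⟨x, y, w, t⟩ - ⟨x', y', w', t'⟩ - heq
        simp only [Prod.mk.injEq] at heq ⊢
        tauto
    rw [Finset.card_product] at this
    have e := zero_pairs_le B
    nlinarith
  have h1 : (Q.filter (fun q => ¬ q.1 * q.2.1 = 0)).card ≤ ∑ z, (Rt B z).card ^ 2 := by
    have e : ∑ z, (Rt B z).card ^ 2 =
        (Finset.univ.sigma (fun z => Rt B z ×ˢ Rt B z)).card := by
      rw [Finset.card_sigma]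
      simp [sq]
    rw [e]
    apply Finset.card_le_card_of_injOn
      (fun q => (⟨q.1 / q.2.2.1, ((q.1, q.2.2.1), (q.2.2.2, q.2.1))⟩ : (_ : F) × ((F × F) × (F × F))))
    · rintro ⟨x, y, w, t⟩ hq
      simp only [hQ, Finset.mem_coe, Finset.mem_filter, Finset.mem_product] at hq
      obtain ⟨⟨⟨a1, a2, a3, a4⟩, e⟩, e0⟩ := hq
      have hw : w ≠ 0 := by
        rintro rfl
        exact e0 (by rw [e, zero_mul])
      have hy : y ≠ 0 := by
        rintro rfl
        exact e0 (by rw [mul_zero])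
      simp only [Finset.mem_coe, Finset.mem_sigma, Finset.mem_univ, Finset.mem_product, mem_Rt,
        true_and]
      refine ⟨⟨⟨a1, a3⟩, hw, ?_⟩, ⟨a4, a2⟩, hy, ?_⟩
      · field_simp
      · field_simp
        linear_combination -e
    · rintro ⟨x, y, w, t⟩ - ⟨x', y', w', t'⟩ - heq
      simp only [Sigma.mk.injEq, heq_eq_eq, Prod.mk.injEq] at heq ⊢
      tauto
  have h2 : ∑ z, (Rt B z).card ^ 2 ≤
      ∑ z ∈ Finset.univ.filter (fun z => 2 ≤ g z), g z ^ 2 + ∑ z, (Rt B z).card := by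
    rw [Finset.sum_filter, ← Finset.sum_add_distrib]
    apply Finset.sum_le_sum
    intro z _
    have := hg z
    split_ifs with hz
    · have : (Rt B z).card ^ 2 ≤ g z ^ 2 := Nat.pow_le_pow_left this 2
      omega
    · have : (Rt B z).card ≤ 1 := by omega
      nlinarith
  have h3 := Rt_sum_le B
  omega

theorem Rt_le_G {ω : Fin 3 → F} (B : Finset F) (N : Fin 3 → ℤ) (H : Fin 3 → ℕ)
    (hB : ∀ b ∈ B, ∃ c : R3, phi ω c = b ∧ ∀ i, N i + 1 ≤ c i ∧ c i ≤ N i + H i) (z : F) :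
    (Rt B z).card ≤ (G ω z H).card := by
  choose! l hl hl2 using hB
  rcases (Rt B z).eq_empty_or_nonempty with h | ⟨⟨a0, c0⟩, h0⟩
  · simp [h]
  rw [mem_Rt] at h0
  obtain ⟨⟨ha0, hc0⟩, -, e0⟩ := h0
  simp only at ha0 hc0 e0
  apply Finset.card_le_card_of_injOn (fun q => (l q.1 - l a0, l q.2 - l c0))
  · rintro ⟨a, c⟩ hq
    rw [Finset.mem_coe, mem_Rt] at hq
    obtain ⟨⟨ha, hc⟩, -, e⟩ := hq
    simp only at ha hc e
    rw [Finset.mem_coe, mem_G, mem_bx]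
    refine ⟨⟨fun i => ?_, fun i => ?_⟩, ?_⟩
    · have := hl2 a ha i
      have := hl2 a0 ha0 i
      simp only [Pi.sub_apply, abs_le]
      omega
    · have := hl2 c hc i
      have := hl2 c0 hc0 i
      simp only [Pi.sub_apply, abs_le]
      omega
    · simp only [phi_sub]
      rw [hl a ha, hl a0 ha0, hl c hc, hl c0 hc0, e, e0]
      ring
  · rintro ⟨a, c⟩ hq ⟨a', c'⟩ hq' heq
    rw [Finset.mem_coe, mem_Rt] at hq hq'
    obtain ⟨⟨ha, hc⟩, -, -⟩ := hq
    obtain ⟨⟨ha', hc'⟩, -, -⟩ := hq'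
    simp only [Prod.mk.injEq, sub_left_inj] at heq ⊢
    simp only at ha hc ha' hc'
    exact ⟨by rw [← hl a ha, ← hl a' ha', heq.1], by rw [← hl c hc, ← hl c' hc', heq.2]⟩

theorem charP_of_card [Fintype F] {p : ℕ} (hp : p.Prime) (hc : Fintype.card F = p ^ 3) :
    CharP F p := by
  obtain ⟨q, hq⟩ := CharP.exists F
  obtain ⟨n, hqp, hn⟩ := FiniteField.card F q
  have : q ∣ p ^ 3 := by
    rw [← hc, hn]
    exact dvd_pow_self q n.ne_zero
  have := (Nat.prime_dvd_prime_iff_eq hqp hp).1 (hqp.dvd_of_dvd_pow this)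
  rwa [← this]

theorem log_bound {p : ℕ} (hp3 : 3 ≤ p) :
    ((6 * (Nat.log 2 p + 1) : ℕ) : ℝ) + 1 ≤ 25 * Real.log p ^ 3 ∧ 1 ≤ Real.log p ^ 3 := by
  have h3 : (1 : ℝ) ≤ Real.log p := by
    rw [Real.le_log_iff_exp_le (by positivity)]
    have : (3 : ℝ) ≤ p := by exact_mod_cast hp3
    linarith [Real.exp_one_lt_d9]
  have h1 : (Nat.log 2 p : ℝ) * Real.log 2 ≤ Real.log p := by
    rw [← Real.log_pow]
    apply Real.log_le_log (by positivity)
    exact_mod_cast Nat.pow_log_le_self 2 (by omega)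
  have h2 := Real.log_two_gt_d9
  have h4 : (Nat.log 2 p : ℝ) ≤ 2 * Real.log p := by
    have : (0 : ℝ) ≤ Nat.log 2 p := by positivity
    nlinarith
  have h5 : Real.log p ≤ Real.log p ^ 3 := le_self_pow₀ h3 (by norm_num)
  push_cast
  constructor <;> linarith

theorem C0_pos : 0 < C0 := by
  unfold C0
  positivity

theorem final {p : ℕ} (hp : p.Prime) (hp3 : 3 ≤ p) [Fintype F] (hc : Fintype.card F = p ^ 3)
    {ω : Fin 3 → F} (h : Ind p ω) (N : Fin 3 → ℤ) (H : Fin 3 → ℕ) (hH1 : 1 ≤ H 0)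
    (h01 : H 0 ≤ H 1) (h12 : H 1 ≤ H 2) (hs : (H 2 : ℝ) < Real.sqrt ((p : ℝ) / 2))
    (B : Finset F) (hcard : B.card ≤ H 0 * H 1 * H 2)
    (hB : ∀ b ∈ B, ∃ c : R3, phi ω c = b ∧ ∀ i, N i + 1 ≤ c i ∧ c i ≤ N i + H i) :
    (((B ×ˢ B ×ˢ B ×ˢ B).filter
        (fun q => q.1 * q.2.1 = q.2.2.1 * q.2.2.2)).card : ℝ) ≤
      (5 + 25 * C0) * ((H 0 : ℝ) * (H 1 : ℝ) * (H 2 : ℝ)) ^ 2 * Real.log p ^ 3 := by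
  haveI : Fact p.Prime := ⟨hp⟩
  haveI : CharP F p := charP_of_card hp hc
  have hp2 : 2 * H 2 ^ 2 < p := by
    rw [Real.lt_sqrt (by positivity)] at hs
    have : (2 : ℝ) * (H 2 : ℝ) ^ 2 < p := by linarith
    exact_mod_cast this
  have hJ : p ^ 6 ≤ 2 ^ (6 * (Nat.log 2 p + 1)) := by
    rw [mul_comm, pow_mul]
    exact Nat.pow_le_pow_left (Nat.lt_pow_succ_log_self (by norm_num) p).le 6
  have key := main_sum hc hp3 h H hH1 h01 h12 hp2 _ hJ
  have en := energy_le B (fun z => (G ω z H).card) (Rt_le_G B N H hB)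
  have en' : (((B ×ˢ B ×ˢ B ×ˢ B).filter
        (fun q => q.1 * q.2.1 = q.2.2.1 * q.2.2.2)).card : ℝ) ≤
      5 * (B.card : ℝ) ^ 2 + ∑ z ∈ Finset.univ.filter (fun z => 2 ≤ (G ω z H).card),
        ((G ω z H).card : ℝ) ^ 2 := by exact_mod_cast en
  have hb : (B.card : ℝ) ≤ (H 0 : ℝ) * H 1 * H 2 := by exact_mod_cast hcard
  obtain ⟨l1, l2⟩ := log_bound hp3
  set b : ℝ := (H 0 : ℝ) * H 1 * H 2
  have hb2 : (B.card : ℝ) ^ 2 ≤ b ^ 2 := by gcongr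
  have c0 := C0_pos
  have k1 : b ^ 2 * 1 ≤ b ^ 2 * Real.log p ^ 3 := by gcongr
  have k2 : C0 * (((6 * (Nat.log 2 p + 1) : ℕ) : ℝ) + 1) * b ^ 2 ≤
      C0 * (25 * Real.log p ^ 3) * b ^ 2 := by gcongr
  linarith

end

end BoxEnergy

/-- The Key Lemma for `n = 3`: the multiplicative energy of a box with edges
`H₁ ≤ H₂ ≤ H₃ < √(p/2)` is `O(|B|² (log p)³)`. -/
theorem stmt_4 :
    ∃ C : ℝ, 0 < C ∧
      ∀ (p : ℕ), p.Prime → 3 ≤ p →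
      ∀ (F : Type) [instField : Field F] [instFintype : Fintype F],
        Fintype.card F = p ^ 3 →
        ∀ (ω : Fin 3 → F),
          (∀ c : Fin 3 → ℤ, (∑ i, (c i : F) * ω i) = 0 → ∀ i, (p : ℤ) ∣ c i) →
          (∀ x : F, ∃ c : Fin 3 → ℤ, x = ∑ i, (c i : F) * ω i) →
        ∀ (N : Fin 3 → ℤ) (H : Fin 3 → ℕ),
          (∀ i, 1 ≤ H i) →
          H 0 ≤ H 1 → H 1 ≤ H 2 →
          (H 2 : ℝ) < Real.sqrt ((p : ℝ) / 2) →
          let B : Finset F :=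
            (Finset.Icc (N 0 + 1) (N 0 + (H 0 : ℤ)) ×ˢ
              Finset.Icc (N 1 + 1) (N 1 + (H 1 : ℤ)) ×ˢ
              Finset.Icc (N 2 + 1) (N 2 + (H 2 : ℤ))).image
              (fun x => (x.1 : F) * ω 0 + (x.2.1 : F) * ω 1 + (x.2.2 : F) * ω 2)
          (((B ×ˢ B ×ˢ B ×ˢ B).filter
              (fun q => q.1 * q.2.1 = q.2.2.1 * q.2.2.2)).card : ℝ) ≤
            C * ((H 0 : ℝ) * (H 1 : ℝ) * (H 2 : ℝ)) ^ 2 * Real.log p ^ 3 := by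
  refine ⟨5 + 25 * BoxEnergy.C0, by have := BoxEnergy.C0_pos; positivity, ?_⟩
  intro p hp hp3 F _ _ hc ω hω _ N H hH h01 h12 hs B
  refine BoxEnergy.final hp hp3 hc (ω := ω) (fun c hc0 => hω c hc0) N H (hH 0) h01 h12 hs B ?_ ?_
  · refine Finset.card_image_le.trans (le_of_eq ?_)
    simp [Finset.card_product, mul_assoc]
  · intro b hb
    obtain ⟨⟨x, y, w⟩, hx, rfl⟩ := Finset.mem_image.1 hb
    simp only [Finset.mem_product, Finset.mem_Icc] at hx
    refine ⟨![x, y, w], by simp [BoxEnergy.phi, Fin.sum_univ_three], fun i => ?_⟩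
    fin_cases i
    · simpa using hx.1
    · simpa using hx.2.1
    · simpa using hx.2.2
end

section
/- There is an absolute constant C > 0 such that for every prime p ≥ 3, every basis {ω₁, ω₂} of F_{p²} over F_p, and every box B with 1 ≤ H₁ ≤ H₂ < √(p/2), the multiplicative energy satisfies E(B) ≤ C·|B|²·(log p)³. -/
open scoped Classical

section Helpers
open scoped Matrix

lemma aux_auerbach {s : ℕ} (T : Finset (Fin s → ℤ))
    (hspan : Submodule.span ℤ (T : Set (Fin s → ℤ)) = ⊤) :
    ∃ A : Matrix (Fin s) (Fin s) ℤ, (∀ i, A i ∈ T) ∧ A.det ≠ 0 ∧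
      T.card ≤ 3 ^ s * A.det.natAbs := by
  -- existence of a tuple with nonzero determinant
  have hex : ∃ A : Matrix (Fin s) (Fin s) ℤ, (∀ i, A i ∈ T) ∧ A.det ≠ 0 := by
    by_contra hcon
    push Not at hcon
    have h1 : ∀ i : Fin s, ∃ c : (Fin s → ℤ) → ℤ,
        ∑ x ∈ T, c x • x = (1 : Matrix (Fin s) (Fin s) ℤ) i := by
      intro i
      have : (1 : Matrix (Fin s) (Fin s) ℤ) i ∈ Submodule.span ℤ (T : Set (Fin s → ℤ)) := by
        rw [hspan]; trivial
      obtain ⟨c, -, hc⟩ := Submodule.mem_span_finset.1 this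
      exact ⟨c, hc⟩
    choose c hc using h1
    have h2 := (Matrix.detRowAlternating (n := Fin s) (R := ℤ)).toMultilinearMap.map_sum_finset
      (fun i x => c i x • x) (fun _ => T)
    have h3 : (fun i => ∑ x ∈ T, c i x • x) = (1 : Matrix (Fin s) (Fin s) ℤ) := by
      funext i; exact hc i
    rw [h3] at h2
    have h4 : Matrix.detRowAlternating.toMultilinearMap (1 : Matrix (Fin s) (Fin s) ℤ) = 1 := by
      exact Matrix.det_one
    rw [h4] at h2
    have h5 : ∀ r ∈ Fintype.piFinset (fun _ : Fin s => T),
        (Matrix.detRowAlternating (n := Fin s) (R := ℤ)).toMultilinearMap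
          (fun i => c i (r i) • r i) = 0 := by
      intro r hr
      rw [MultilinearMap.map_smul_univ]
      have := hcon r (fun i => Fintype.mem_piFinset.1 hr i)
      have h6 : (Matrix.detRowAlternating (n := Fin s) (R := ℤ)).toMultilinearMap r = 0 := this
      rw [h6, smul_zero]
    rw [Finset.sum_eq_zero h5] at h2
    exact one_ne_zero h2
  -- maximal tuple
  let P := (Fintype.piFinset (fun _ : Fin s => T))
  obtain ⟨A₀, hA₀, hA₀d⟩ := hex
  have hPne : P.Nonempty := ⟨A₀, Fintype.mem_piFinset.2 hA₀⟩
  obtain ⟨A, hAP, hmax⟩ := Finset.exists_max_image P (fun A => (Matrix.det (A : Matrix (Fin s) (Fin s) ℤ)).natAbs) hPne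
  have hAT : ∀ i, A i ∈ T := Fintype.mem_piFinset.1 hAP
  have hAd : Matrix.det (A : Matrix (Fin s) (Fin s) ℤ) ≠ 0 := by
    have := hmax A₀ (Fintype.mem_piFinset.2 hA₀)
    intro h
    simp only [h] at this
    simp at this
    exact hA₀d this
  refine ⟨A, hAT, hAd, ?_⟩
  set M : Matrix (Fin s) (Fin s) ℤ := A with hM
  set d : ℤ := M.det with hd
  have hli : LinearIndependent ℤ M := Matrix.linearIndependent_rows_of_det_ne_zero hAd
  let N := Submodule.span ℤ (Set.range M)
  let bN : Module.Basis (Fin s) ℤ N := Module.Basis.span hli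
  have hcard := Submodule.natAbs_det_basis_change (Pi.basisFun ℤ (Fin s)) N bN
  have hdet : (Pi.basisFun ℤ (Fin s)).det ((↑) ∘ bN) = d := by
    have : ((↑) ∘ bN : Fin s → (Fin s → ℤ)) = M := by
      funext i
      simp only [Function.comp, bN]
      rw [Module.Basis.span_apply hli i]
    rw [this]
    rw [Module.Basis.det_apply, hd, ← Matrix.det_transpose]
    congr 1
  rw [hdet] at hcard
  have hfin : Finite ((Fin s → ℤ) ⧸ N) := by
    apply Nat.finite_of_card_ne_zero
    rw [← hcard]; simpa using hAd
  have := Fintype.ofFinite ((Fin s → ℤ) ⧸ N)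
  -- Cramer coordinates
  let t : (Fin s → ℤ) → Fin s → ℤ := fun x => Matrix.cramer Mᵀ x
  have ht : ∀ x ∈ T, ∀ i, |t x i| ≤ |d| := by
    intro x hx i
    have h1 : t x i = (M.updateRow i x).det := Matrix.cramer_transpose_apply M x i
    have h2 : (M.updateRow i x) ∈ P := by
      apply Fintype.mem_piFinset.2
      intro j
      by_cases hj : j = i
      · subst hj; simpa using hx
      · rw [Matrix.updateRow_ne hj]; exact hAT j
    have h3 := hmax _ h2
    rw [h1, Int.abs_eq_natAbs, Int.abs_eq_natAbs]
    exact_mod_cast h3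
  have hrec : ∀ x, Mᵀ.mulVec (t x) = d • x := by
    intro x
    have := Matrix.mulVec_cramer Mᵀ x
    rwa [Matrix.det_transpose] at this
  have hlat : ∀ x ∈ N, ∀ i, d ∣ t x i := by
    intro x hx i
    induction hx using Submodule.span_induction with
    | mem x h =>
      obtain ⟨j, rfl⟩ := h
      have := congrFun (Matrix.cramer_transpose_row_self M j) i
      show d ∣ Matrix.cramer Mᵀ (M j) i
      rw [this]
      by_cases hij : i = j
      · subst hij; simp [hd]
      · simp [hij]
    | zero => simp [t]
    | add x y _ _ hx hy =>
      simp only [t, map_add, Pi.add_apply]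
      exact dvd_add hx hy
    | smul a x _ hx =>
      simp only [t, map_smul, Pi.smul_apply, smul_eq_mul]
      exact Dvd.dvd.mul_left hx a
  have hdpos : 0 < |d| := abs_pos.2 hAd
  let g : (Fin s → ℤ) → ((Fin s → ℤ) ⧸ N) × (Fin s → ℤ) :=
    fun x => (N.mkQ x, fun i => t x i / |d|)
  have hmaps : ∀ x ∈ T, g x ∈ (Finset.univ : Finset ((Fin s → ℤ) ⧸ N)) ×ˢ
      Fintype.piFinset (fun _ : Fin s => Finset.Icc (-1 : ℤ) 1) := by
    intro x hx
    simp only [Finset.mem_product, Finset.mem_univ, true_and, Fintype.mem_piFinset, Finset.mem_Icc, g]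
    intro i
    have := abs_le.1 (ht x hx i)
    constructor
    · rw [Int.le_ediv_iff_mul_le hdpos]; linarith
    · apply Int.le_of_lt_add_one
      rw [Int.ediv_lt_iff_lt_mul hdpos]; linarith
  have hinj : Set.InjOn g T := by
    intro x hx y hy hxy
    simp only [g, Prod.mk.injEq] at hxy
    obtain ⟨h1, h2⟩ := hxy
    have h3 : x - y ∈ N := by
      rw [← Submodule.Quotient.eq]; exact h1
    have h4 : t x = t y := by
      funext i
      have h5 : |d| ∣ t x i - t y i := by
        have := hlat _ h3 i
        simp only [t, map_sub, Pi.sub_apply] at this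
        exact (abs_dvd _ _).2 this
      have h6 := congrFun h2 i
      have h8 : t x i % |d| = t y i % |d| := (Int.modEq_iff_dvd.2 h5).symm
      rw [← Int.mul_ediv_add_emod (t x i) |d|, ← Int.mul_ediv_add_emod (t y i) |d|, h6, h8]
    have h9 : d • x = d • y := by rw [← hrec, ← hrec, h4]
    funext i
    have := congrFun h9 i
    simp only [Pi.smul_apply, smul_eq_mul] at this
    exact mul_left_cancel₀ hAd this
  have := Finset.card_le_card_of_injOn g hmaps hinj
  rw [Finset.card_product, Fintype.card_piFinset, Finset.card_univ, ← Nat.card_eq_fintype_card, ← hcard] at this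
  simp at this
  linarith

/-- The lattice condition. -/
def LatG (p α β γ δ : ℤ) (v : Fin 4 → ℤ) : Prop :=
  p ∣ v 0 - α * v 2 - β * v 3 ∧ p ∣ v 1 - γ * v 2 - δ * v 3

lemma LatG.add {p α β γ δ : ℤ} {v w : Fin 4 → ℤ} (hv : LatG p α β γ δ v)
    (hw : LatG p α β γ δ w) : LatG p α β γ δ (v + w) := by
  obtain ⟨⟨a, ha⟩, ⟨b, hb⟩⟩ := hv
  obtain ⟨⟨c, hc⟩, ⟨d, hd⟩⟩ := hw
  refine ⟨⟨a + c, ?_⟩, ⟨b + d, ?_⟩⟩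
  · simp only [Pi.add_apply]; linear_combination ha + hc
  · simp only [Pi.add_apply]; linear_combination hb + hd

lemma LatG.smul {p α β γ δ : ℤ} {v : Fin 4 → ℤ} (k : ℤ) (hv : LatG p α β γ δ v) :
    LatG p α β γ δ (k • v) := by
  obtain ⟨⟨a, ha⟩, ⟨b, hb⟩⟩ := hv
  refine ⟨⟨k * a, ?_⟩, ⟨k * b, ?_⟩⟩
  · simp only [Pi.smul_apply, smul_eq_mul]; linear_combination k * ha
  · simp only [Pi.smul_apply, smul_eq_mul]; linear_combination k * hb

lemma LatG.zero {p α β γ δ : ℤ} : LatG p α β γ δ 0 := by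
  constructor <;> simp

lemma LatG.span {p α β γ δ : ℤ} {S : Set (Fin 4 → ℤ)} (hS : ∀ v ∈ S, LatG p α β γ δ v)
    {v : Fin 4 → ℤ} (hv : v ∈ Submodule.span ℤ S) : LatG p α β γ δ v := by
  induction hv using Submodule.span_induction with
  | mem x h => exact hS x h
  | zero => exact LatG.zero
  | add x y _ _ hx hy => exact hx.add hy
  | smul a x _ hx => exact hx.smul a

lemma det_bound {n : ℕ} (M : Matrix (Fin n) (Fin n) ℤ) (c : Fin n → ℤ)
    (h : ∀ i j, |M i j| ≤ c j) : |M.det| ≤ n.factorial * ∏ j, c j := by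
  rw [Matrix.det_apply']
  refine (Finset.abs_sum_le_sum_abs _ _).trans ?_
  have : ∀ σ ∈ (Finset.univ : Finset (Equiv.Perm (Fin n))),
      |((Equiv.Perm.sign σ : ℤ) : ℤ) * ∏ i, M (σ i) i| ≤ ∏ j, c j := by
    intro σ _
    rw [abs_mul]
    have h1 : |((Equiv.Perm.sign σ : ℤ) : ℤ)| = 1 := by
      rcases Int.units_eq_one_or (Equiv.Perm.sign σ) with h | h <;> simp [h]
    rw [h1, one_mul, Finset.abs_prod]
    exact Finset.prod_le_prod (fun _ _ => abs_nonneg _) (fun i _ => h _ _)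
  refine (Finset.sum_le_card_nsmul _ _ _ this).trans ?_
  simp [Fintype.card_perm]

lemma det_four_dvd {p α β γ δ : ℤ} (M : Matrix (Fin 4) (Fin 4) ℤ)
    (h : ∀ i, LatG p α β γ δ (M i)) : p ^ 2 ∣ M.det := by
  choose r hr using fun i => (h i).1
  choose s hs using fun i => (h i).2
  let E' : Matrix (Fin 4) (Fin 4) ℤ := Matrix.of fun i => ![r i, s i, M i 2, M i 3]
  let C : Matrix (Fin 4) (Fin 4) ℤ := !![p, 0, 0, 0; 0, p, 0, 0; α, γ, 1, 0; β, δ, 0, 1]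
  have hC : C.det = p ^ 2 := by
    simp [C, Matrix.det_succ_row_zero, Fin.sum_univ_succ, Fin.succAbove]
    ring
  have hM : M = E' * C := by
    ext i j
    fin_cases j <;> simp [E', C, Matrix.mul_apply, Fin.sum_univ_four]
    · linear_combination hr i
    · linear_combination hs i
  rw [hM, Matrix.det_mul, hC]
  exact Dvd.intro_left _ rfl

lemma det_three_dvd {p : ℕ} {α β γ δ : ℤ} (M : Matrix (Fin 3) (Fin 4) ℤ)
    (h : ∀ i, LatG p α β γ δ (M i)) (j : Fin 4) :
    (p : ℤ) ∣ (M.submatrix id j.succAbove).det := by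
  have h1 : ∀ i, (M i 0 : ZMod p) = α * M i 2 + β * M i 3 := by
    intro i
    have := (ZMod.intCast_zmod_eq_zero_iff_dvd _ p).2 (h i).1
    push_cast at this
    linear_combination this
  have h2 : ∀ i, (M i 1 : ZMod p) = γ * M i 2 + δ * M i 3 := by
    intro i
    have := (ZMod.intCast_zmod_eq_zero_iff_dvd _ p).2 (h i).2
    push_cast at this
    linear_combination this
  rw [← ZMod.intCast_zmod_eq_zero_iff_dvd, Matrix.det_fin_three]
  fin_cases j <;> simp [Fin.succAbove, h1, h2] <;> ring

lemma minors_ne {E : Matrix (Fin 3) (Fin 4) ℤ} (hE : LinearIndependent ℤ (fun i => E i)) :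
    ∃ j : Fin 4, (E.submatrix id j.succAbove).det ≠ 0 := by
  by_contra hcon
  push Not at hcon
  have h0 : (E * Eᵀ).det = ∑ j : Fin 4, (E.submatrix id j.succAbove).det ^ 2 := by
    simp only [Matrix.det_fin_three, Fin.sum_univ_four, Matrix.mul_apply, Matrix.transpose_apply,
      Matrix.submatrix_apply, id]
    simp [Fin.succAbove]
    ring
  simp only [hcon] at h0
  simp at h0
  obtain ⟨c, hc0, hc⟩ := Matrix.exists_vecMul_eq_zero_iff.2 h0
  apply hc0
  have h1 : c ᵥ* E = 0 := by
    have h2 : (c ᵥ* E) ⬝ᵥ (c ᵥ* E) = 0 := by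
      have h3 : (c ᵥ* (E * Eᵀ)) ⬝ᵥ c = 0 := by rw [hc]; simp
      rw [← Matrix.vecMul_vecMul, ← Matrix.dotProduct_mulVec, Matrix.mulVec_transpose] at h3
      exact h3
    exact dotProduct_self_eq_zero.1 h2
  rw [Fintype.linearIndependent_iff] at hE
  funext i
  refine hE c ?_ i
  funext j
  have := congrFun h1 j
  simpa [Matrix.vecMul, dotProduct] using this

lemma det_four_ne {E : Matrix (Fin 4) (Fin 4) ℤ} (hE : LinearIndependent ℤ (fun i => E i)) :
    E.det ≠ 0 := by
  intro h0
  obtain ⟨c, hc0, hc⟩ := Matrix.exists_vecMul_eq_zero_iff.2 h0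
  apply hc0
  rw [Fintype.linearIndependent_iff] at hE
  funext i
  refine hE c ?_ i
  funext j
  have := congrFun hc j
  simpa [Matrix.vecMul, dotProduct] using this

/-- data of a basis. -/
lemma span_data {p α β γ δ : ℤ} (S : Finset (Fin 4 → ℤ)) (hS : ∀ v ∈ S, LatG p α β γ δ v) :
    ∃ s : ℕ, s ≤ 4 ∧ ∃ E : Matrix (Fin s) (Fin 4) ℤ, (∀ i, LatG p α β γ δ (E i)) ∧
      LinearIndependent ℤ (fun i => E i) ∧
      (∃ c : (Fin 4 → ℤ) → Fin s → ℤ, ∀ v ∈ S, v = ∑ j, c v j • E j) ∧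
      ∃ (A : Matrix (Fin s) (Fin s) ℤ), (∀ i, (A * E) i ∈ S) ∧ A.det ≠ 0 ∧
        S.card ≤ 3 ^ s * A.det.natAbs := by
  let L := Submodule.span ℤ (S : Set (Fin 4 → ℤ))
  let e : Module.Basis (Fin (Module.finrank ℤ L)) ℤ L := Module.finBasis ℤ L
  have hs : Module.finrank ℤ L ≤ 4 := by
    have := Submodule.finrank_le L
    simpa using this
  have hmem : ∀ v ∈ S, v ∈ L := fun v hv => Submodule.subset_span hv
  have hsum : ∀ v : L, (v : Fin 4 → ℤ) = ∑ j, e.equivFun v j • (e j : Fin 4 → ℤ) := by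
    intro v
    have := congrArg (Subtype.val) (e.sum_equivFun v)
    rw [← this]
    push_cast
    simp
  let Em : Matrix (Fin (Module.finrank ℤ L)) (Fin 4) ℤ := fun i => (e i : Fin 4 → ℤ)
  refine ⟨Module.finrank ℤ L, hs, Em, ?_, ?_, ?_, ?_⟩
  · intro i
    exact LatG.span hS (e i).2
  · exact e.linearIndependent.map' L.subtype (Submodule.ker_subtype L)
  · refine ⟨fun v => if hv : v ∈ S then e.equivFun ⟨v, hmem v hv⟩ else 0, ?_⟩
    intro v hv
    simp only [hv, dite_true]
    exact hsum ⟨v, hmem v hv⟩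
  · let T := S.attach.image (fun v => e.equivFun ⟨v.1, hmem v.1 v.2⟩)
    have hTc : T.card = S.card := by
      rw [Finset.card_image_of_injective, Finset.card_attach]
      intro v w hvw
      have := e.equivFun.injective hvw
      exact Subtype.ext (congrArg (fun x : L => (x : Fin 4 → ℤ)) this)
    have hT : Submodule.span ℤ (T : Set (Fin (Module.finrank ℤ L) → ℤ)) = ⊤ := by
      have h1 : (T : Set (Fin (Module.finrank ℤ L) → ℤ)) =
          e.equivFun.toLinearMap '' ((↑) ⁻¹' (S : Set (Fin 4 → ℤ)) : Set L) := by
        ext x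
        simp only [T, Finset.coe_image, Set.mem_image, Finset.mem_coe, Finset.mem_attach, true_and,
          Set.mem_preimage, Subtype.exists, LinearEquiv.coe_coe]
        constructor
        · rintro ⟨v, hv, rfl⟩
          exact ⟨v, hmem v hv, hv, rfl⟩
        · rintro ⟨v, hv, hv', rfl⟩
          exact ⟨v, hv', rfl⟩
      rw [h1, ← Submodule.map_span]
      have h2 : Submodule.span ℤ ((↑) ⁻¹' (S : Set (Fin 4 → ℤ)) : Set L) = ⊤ :=
        Submodule.span_span_coe_preimage
      rw [h2, Submodule.map_top, LinearEquiv.range]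
    obtain ⟨A, hA, hAd, hAc⟩ := aux_auerbach T hT
    refine ⟨A, ?_, hAd, hTc ▸ hAc⟩
    intro i
    obtain ⟨v, -, hv⟩ := Finset.mem_image.1 (hA i)
    have h3 : (A * Em) i = v.1 := by
      have := hsum ⟨v.1, hmem v.1 v.2⟩
      rw [hv] at this
      simp only at this
      rw [this]
      funext j
      rw [Matrix.mul_apply]
      simp [Em]
    rw [h3]
    exact v.2

lemma pigeon {p α β γ δ : ℤ} (S : Finset (Fin 4 → ℤ)) (h : Fin 4 → ℤ)
    (hb : ∀ v ∈ S, ∀ i, |v i| ≤ h i) {s : ℕ} (hs : s ≤ 2)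
    (E : Matrix (Fin s) (Fin 4) ℤ) (hE : ∀ i, LatG p α β γ δ (E i))
    (c : (Fin 4 → ℤ) → Fin s → ℤ) (hc : ∀ v ∈ S, v = ∑ j, c v j • E j)
    (k : ℕ) (hk : 1 ≤ k) (hcard : k ^ 2 < S.card) :
    ∃ u : Fin 4 → ℤ, u ≠ 0 ∧ LatG p α β γ δ u ∧ ∀ i, k * |u i| ≤ 2 * h i := by
  have : NeZero k := ⟨by omega⟩
  have h1 : (Finset.univ : Finset (Fin s → ZMod k)).card < S.card := by
    rw [Finset.card_univ, Fintype.card_fun, ZMod.card, Fintype.card_fin]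
    exact lt_of_le_of_lt (Nat.pow_le_pow_right hk hs) hcard
  obtain ⟨v, hv, w, hw, hne, heq⟩ := Finset.exists_ne_map_eq_of_card_lt_of_maps_to h1
    (f := fun v => fun j => ((c v j : ℤ) : ZMod k)) (fun _ _ => Finset.mem_univ _)
  have h2 : ∀ j, (k : ℤ) ∣ c v j - c w j := by
    intro j
    rw [← ZMod.intCast_zmod_eq_zero_iff_dvd]
    have := congrFun heq j
    push_cast
    rw [this, sub_self]
  choose d hd using h2
  have h3 : v - w = (k : ℤ) • ∑ j, d j • E j := by
    conv_lhs => rw [hc v hv, hc w hw]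
    rw [← Finset.sum_sub_distrib, Finset.smul_sum]
    refine Finset.sum_congr rfl fun j _ => ?_
    rw [← sub_smul, hd, mul_smul]
  refine ⟨∑ j, d j • E j, ?_, ?_, ?_⟩
  · intro h0
    rw [h0, smul_zero, sub_eq_zero] at h3
    exact hne h3
  · refine LatG.span (S := Set.range E) ?_ ?_
    · rintro _ ⟨i, rfl⟩; exact hE i
    · exact Submodule.sum_mem _ fun j _ => Submodule.smul_mem _ _ (Submodule.subset_span ⟨j, rfl⟩)
  · intro i
    have h4 := congrFun h3 i
    rw [Pi.smul_apply, Pi.sub_apply, smul_eq_mul] at h4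
    have h5 : (k : ℤ) * |(∑ j, d j • E j) i| = |v i - w i| := by
      rw [h4, abs_mul, Nat.abs_cast]
    rw [h5]
    have := abs_sub (v i) (w i)
    linarith [hb v hv i, hb w hw i]

lemma core {p : ℕ} {α β γ δ : ℤ} (hp : 0 < p) {a b : ℕ} (ha : 1 ≤ a) (hab : 2 * (a * b) < p)
    (hb1 : 1 ≤ b) (S : Finset (Fin 4 → ℤ)) (hS : ∀ v ∈ S, LatG p α β γ δ v)
    (hb : ∀ v ∈ S, ∀ i, |v i| ≤ ![(a : ℤ), b, a, b] i) (hcard : 486 < S.card) (k : ℕ) (hk : 1 ≤ k)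
    (hkS : k ^ 2 < S.card) :
    (∃ u : Fin 4 → ℤ, u ≠ 0 ∧ LatG p α β γ δ u ∧ ∀ i, k * |u i| ≤ 2 * ![(a : ℤ), b, a, b] i) ∨
    (∃ c : Fin 4 → ℤ, (∃ i, ¬ (p : ℤ) ∣ c i) ∧
      (∀ v, LatG p α β γ δ v → (p : ℤ) ∣ ∑ i, v i * c i) ∧
      ∀ i, |c i| * ![(a : ℤ), b, a, b] i * p * S.card ≤ 162 * (a * b) ^ 2) := by
  set h : Fin 4 → ℤ := ![(a : ℤ), b, a, b] with hh
  have hprod : ∏ i, h i = ((a : ℤ) * b) ^ 2 := by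
    simp [hh, Fin.prod_univ_four]; ring
  have hpZ : (0 : ℤ) < p := by exact_mod_cast hp
  have habZ : 2 * ((a : ℤ) * b) < p := by exact_mod_cast hab
  have habpos : (0 : ℤ) < (a : ℤ) * b := by
    have : 0 < a * b := Nat.mul_pos ha hb1
    exact_mod_cast this
  have hh1 : ∀ i, 1 ≤ h i := by
    intro i
    have h1 : (1 : ℤ) ≤ a := by exact_mod_cast ha
    have h2 : (1 : ℤ) ≤ b := by exact_mod_cast hb1
    fin_cases i <;> simp [hh, h1, h2]
  have hq : 4 * ((a : ℤ) * b) ^ 2 < p ^ 2 := by nlinarith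
  obtain ⟨s, hs, E, hE, hli, ⟨c, hc⟩, A, hAE, hAd, hAc⟩ := span_data S hS
  have hd1 : 1 ≤ |A.det| := Int.one_le_abs hAd
  have hAc' : (S.card : ℤ) ≤ 3 ^ s * |A.det| := by
    rw [Int.abs_eq_natAbs]; exact_mod_cast hAc
  by_cases hs2 : s ≤ 2
  · left
    exact pigeon S h hb hs2 E hE c hc k hk hkS
  have hcardZ : (486 : ℤ) < S.card := by exact_mod_cast hcard
  obtain rfl | rfl : s = 3 ∨ s = 4 := by omega
  · right
    choose m hm using det_three_dvd E hE
    have hlap : ∀ v : Fin 4 → ℤ, (Matrix.of (Fin.cons v E : Fin 4 → Fin 4 → ℤ)).det =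
        p * ∑ i : Fin 4, v i * ((-1) ^ (i : ℕ) * m i) := by
      intro v
      rw [Matrix.det_succ_row_zero, Finset.mul_sum]
      refine Finset.sum_congr rfl fun i _ => ?_
      have : ((Matrix.of (Fin.cons v E : Fin 4 → Fin 4 → ℤ)).submatrix Fin.succ i.succAbove) =
          E.submatrix id i.succAbove := by
        ext x y; rfl
      have h0 : (Matrix.of (Fin.cons v E : Fin 4 → Fin 4 → ℤ)) 0 i = v i := rfl
      rw [this, hm, h0]
      ring
    have hmb : ∀ i, |m i| * h i * p * S.card ≤ 162 * (a * b) ^ 2 := by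
      intro i
      have h1 := det_bound ((A * E).submatrix id i.succAbove) (fun j => h (i.succAbove j))
        (fun x y => hb _ (hAE x) _)
      have h2 : ((A * E).submatrix id i.succAbove) = A * E.submatrix id i.succAbove := by
        ext x y; simp [Matrix.mul_apply]
      rw [h2, Matrix.det_mul, hm, abs_mul, abs_mul, Nat.abs_cast] at h1
      have h3 : h i * ∏ j, h (i.succAbove j) = ((a : ℤ) * b) ^ 2 := by
        rw [← hprod, Fin.prod_univ_succAbove _ i]
      have h4 : (Nat.factorial 3 : ℤ) = 6 := by norm_num [Nat.factorial]
      rw [h4] at h1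
      have h5 : (0 : ℤ) ≤ |m i| * h i * p := by
        have := hh1 i
        positivity
      calc |m i| * h i * p * S.card ≤ |m i| * h i * p * (3 ^ 3 * |A.det|) := by gcongr
        _ = 27 * (h i * (|A.det| * (p * |m i|))) := by ring
        _ ≤ 27 * (h i * (6 * ∏ j, h (i.succAbove j))) := by
            have := hh1 i
            gcongr
        _ = 162 * (a * b) ^ 2 := by rw [← h3]; ring
    have habs : ∀ i : Fin 4, |(-1) ^ (i : ℕ) * m i| = |m i| := by
      intro i; rw [abs_mul, abs_pow]; simp
    refine ⟨fun i => (-1) ^ (i : ℕ) * m i, ?_, ?_, ?_⟩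
    · obtain ⟨j, hj⟩ := minors_ne hli
      refine ⟨j, fun hdv => ?_⟩
      have hmj : m j ≠ 0 := by
        intro h0; rw [hm, h0, mul_zero] at hj; exact hj rfl
      have hne : (-1) ^ (j : ℕ) * m j ≠ 0 := by
        intro h0
        have := habs j
        rw [h0, abs_zero] at this
        exact hmj (abs_eq_zero.1 this.symm)
      have h1 : (p : ℤ) ≤ |(-1) ^ (j : ℕ) * m j| :=
        Int.le_of_dvd (abs_pos.2 hne) ((dvd_abs _ _).2 hdv)
      rw [habs] at h1
      have h2 := hmb j
      have h3 := hh1 j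
      have h4 : (p : ℤ) * 1 * p * 486 ≤ |m j| * h j * p * S.card := by gcongr
      nlinarith
    · intro v hv
      have h1 := det_four_dvd (Matrix.of (Fin.cons v E : Fin 4 → Fin 4 → ℤ)) (p := p) (α := α)
        (β := β) (γ := γ) (δ := δ) (by
          intro i
          refine Fin.cases ?_ (fun i => ?_) i
          · exact hv
          · exact hE i)
      rw [hlap, pow_two] at h1
      exact Int.dvd_of_mul_dvd_mul_left hpZ.ne' h1
    · intro i
      simp only [habs]
      exact hmb i
  · exfalso
    have h1 := det_bound (A * E) h (fun x y => hb _ (hAE x) _)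
    rw [hprod, Matrix.det_mul, abs_mul] at h1
    have h4 : (Nat.factorial 4 : ℤ) = 24 := by norm_num [Nat.factorial]
    rw [h4] at h1
    have h2 : (p : ℤ) ^ 2 ≤ |E.det| :=
      Int.le_of_dvd (abs_pos.2 (det_four_ne hli)) ((dvd_abs _ _).2 (det_four_dvd E hE))
    have h3 : |A.det| * p ^ 2 ≤ 24 * ((a : ℤ) * b) ^ 2 := le_trans (by gcongr) h1
    nlinarith


/-- coordinates to field. -/
def phi {F : Type} [Field F] (ω : Fin 2 → F) (x y : ℤ) : F := (x : F) * ω 0 + (y : F) * ω 1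

/-- symmetric box. -/
noncomputable def bx (a b : ℕ) : Finset (Fin 4 → ℤ) :=
  Fintype.piFinset fun i => Finset.Icc (-(![(a : ℤ), b, a, b] i)) (![(a : ℤ), b, a, b] i)

/-- the lattice attached to z. -/
def Gam {F : Type} [Field F] (ω : Fin 2 → F) (z : F) (v : Fin 4 → ℤ) : Prop :=
  phi ω (v 0) (v 1) = z * phi ω (v 2) (v 3)

/-- lattice points in the box. -/
noncomputable def fz {F : Type} [Field F] (ω : Fin 2 → F) (a b : ℕ) (z : F) :
    Finset (Fin 4 → ℤ) := (bx a b).filter (Gam ω z)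

structure Hyp (p : ℕ) {F : Type} [Field F] (ω : Fin 2 → F) : Prop where
  prime : p.Prime
  pzero : (p : F) = 0
  ind : ∀ x y : ℤ, phi ω x y = 0 → (p : ℤ) ∣ x ∧ (p : ℤ) ∣ y
  sur : ∀ z : F, ∃ x y : ℤ, phi ω x y = z

lemma mem_bx {a b : ℕ} {v : Fin 4 → ℤ} : v ∈ bx a b ↔ ∀ i, |v i| ≤ ![(a : ℤ), b, a, b] i := by
  simp only [bx, Fintype.mem_piFinset, Finset.mem_Icc, abs_le]

lemma phi_sub {F : Type} [Field F] (ω : Fin 2 → F) (x y x' y' : ℤ) :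
    phi ω (x - x') (y - y') = phi ω x y - phi ω x' y' := by
  simp only [phi]; push_cast; ring

section
variable {p : ℕ} {F : Type} [Field F] {ω : Fin 2 → F}

lemma Hyp.dvd_zero (h : Hyp p ω) {n : ℤ} (hn : (p : ℤ) ∣ n) : (n : F) = 0 := by
  obtain ⟨m, rfl⟩ := hn
  push_cast
  rw [h.pzero, zero_mul]

lemma Hyp.lat (h : Hyp p ω) (z : F) : ∃ α β γ δ : ℤ, ∀ v, Gam ω z v ↔ LatG p α β γ δ v := by
  obtain ⟨α, γ, h1⟩ := h.sur (z * ω 0)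
  obtain ⟨β, δ, h2⟩ := h.sur (z * ω 1)
  refine ⟨α, β, γ, δ, fun v => ?_⟩
  have key : phi ω (v 0) (v 1) - z * phi ω (v 2) (v 3) =
      phi ω (v 0 - α * v 2 - β * v 3) (v 1 - γ * v 2 - δ * v 3) := by
    simp only [phi] at *
    push_cast
    linear_combination (v 2 : F) * h1 + (v 3 : F) * h2
  unfold Gam LatG
  rw [← sub_eq_zero, key]
  constructor
  · exact h.ind _ _
  · rintro ⟨h3, h4⟩
    unfold phi
    rw [h.dvd_zero h3, h.dvd_zero h4]; ring

lemma small_of_dvd {p : ℕ} {x : ℤ} (h : (p : ℤ) ∣ x) (hx : |x| < p) : x = 0 :=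
  Int.eq_zero_of_abs_lt_dvd h hx

/-- a nonzero small vector has nonzero denominators. -/
lemma Hyp.den_ne (h : Hyp p ω) {z : F} {u : Fin 4 → ℤ} (hu : u ≠ 0) (hG : Gam ω z u)
    (hs : ∀ i, |u i| < p) : phi ω (u 2) (u 3) ≠ 0 := by
  intro h0
  have h1 : phi ω (u 0) (u 1) = 0 := by rw [hG, h0, mul_zero]
  have a2 := h.ind _ _ h0
  have a1 := h.ind _ _ h1
  apply hu
  funext i
  fin_cases i
  · exact small_of_dvd a1.1 (hs 0)
  · exact small_of_dvd a1.2 (hs 1)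
  · exact small_of_dvd a2.1 (hs 2)
  · exact small_of_dvd a2.2 (hs 3)

lemma Hyp.uniq (h : Hyp p ω) {z z' : F} {u : Fin 4 → ℤ} (hu : u ≠ 0) (hG : Gam ω z u)
    (hG' : Gam ω z' u) (hs : ∀ i, |u i| < p) : z = z' := by
  have := h.den_ne hu hG hs
  unfold Gam at hG hG'
  rw [hG] at hG'
  exact mul_right_cancel₀ this hG'

lemma Hyp.first_ne (h : Hyp p ω) {z : F} (hz : ¬ ∃ n : ℤ, z = n) {u : Fin 4 → ℤ} (hu : u ≠ 0)
    (hG : Gam ω z u) (hs : ∀ i, |u i| < p) : u 0 ≠ 0 ∨ u 2 ≠ 0 := by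
  by_contra hcon
  push Not at hcon
  obtain ⟨h0, h2⟩ := hcon
  have hd := h.den_ne hu hG hs
  unfold Gam at hG
  rw [h0, h2] at hG
  rw [h2] at hd
  -- (u1) ω1 = z u3 ω1
  obtain ⟨n, m, hnm⟩ := h.sur (((u 3 : ℤ) : F)⁻¹ * ω 0)
  have hw1 : ω 1 ≠ 0 := by
    intro h1; apply hd; simp [phi, h1]
  have hu3 : ((u 3 : ℤ) : F) ≠ 0 := by
    intro h1; apply hd; simp [phi, h1]
  have hz' : z * (u 3 : F) = (u 1 : F) := by
    simp only [phi, Int.cast_zero, zero_mul, zero_add] at hG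
    have : (z * (u 3 : F)) * ω 1 = (u 1 : F) * ω 1 := by rw [hG]; ring
    exact mul_right_cancel₀ hw1 this
  -- inverse of u3 is an integer
  have hcop : IsCoprime (p : ℤ) (u 3) := by
    rw [Prime.coprime_iff_not_dvd (Nat.prime_iff_prime_int.1 h.prime)]
    intro hdv
    exact hu3 (h.dvd_zero hdv)
  obtain ⟨s, t, hst⟩ := hcop
  apply hz
  refine ⟨u 1 * t, ?_⟩
  have hst' : (t : F) * (u 3 : F) = 1 := by
    have := congrArg (fun n : ℤ => (n : F)) hst
    push_cast at this
    rw [h.pzero, mul_zero, zero_add] at this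
    exact this
  push_cast
  rw [← hz']
  linear_combination -z * hst'

lemma count_box {Z : Finset F} (g : F → Fin 4 → ℤ) (t : Fin 4 → ℝ) (ht : ∀ i, 1 ≤ t i)
    (hg : ∀ z ∈ Z, ∀ i, |(g z i : ℝ)| ≤ t i) (hinj : Set.InjOn g Z) :
    (Z.card : ℝ) ≤ 81 * (t 0 * t 1 * t 2 * t 3) := by
  have h1 : Z.card ≤ (Fintype.piFinset fun i => Finset.Icc (-⌊t i⌋) ⌊t i⌋).card := by
    refine Finset.card_le_card_of_injOn g ?_ hinj
    intro z hz
    refine Finset.mem_coe.2 (Fintype.mem_piFinset.2 fun i => ?_)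
    have := abs_le.1 (hg z hz i)
    rw [Finset.mem_Icc]
    constructor
    · have : -g z i ≤ ⌊t i⌋ := Int.le_floor.2 (by push_cast; linarith)
      linarith
    · exact Int.le_floor.2 this.2
  have h2 : ((Fintype.piFinset fun i => Finset.Icc (-⌊t i⌋) ⌊t i⌋).card : ℝ) ≤
      ∏ i, (3 * t i) := by
    rw [Fintype.card_piFinset, Nat.cast_prod]
    refine Finset.prod_le_prod (fun _ _ => by positivity) fun i _ => ?_
    rw [Int.card_Icc]
    have hf : 1 ≤ ⌊t i⌋ := Int.le_floor.2 (by simpa using ht i)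
    have h3 : ((⌊t i⌋ + 1 - -⌊t i⌋).toNat : ℤ) = 2 * ⌊t i⌋ + 1 := by
      rw [Int.toNat_of_nonneg (by linarith)]; ring
    have h4 : ((⌊t i⌋ + 1 - -⌊t i⌋).toNat : ℝ) = 2 * (⌊t i⌋ : ℝ) + 1 := by
      exact_mod_cast congrArg (fun n : ℤ => (n : ℝ)) h3
    rw [h4]
    linarith [Int.floor_le (t i), ht i]
  calc (Z.card : ℝ) ≤ _ := by exact_mod_cast h1
    _ ≤ _ := h2
    _ = _ := by rw [Fin.prod_univ_four]; ring

lemma tail1 (h : Hyp p ω) {a b : ℕ} (ha : 1 ≤ a) (hab : a ≤ b) (hbp : 2 * b < p)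
    (Z : Finset F) (k : ℕ) (hk : 1 ≤ k) (hZ : ∀ z ∈ Z, (¬ ∃ n : ℤ, z = n) ∧
      ∃ u : Fin 4 → ℤ, u ≠ 0 ∧ Gam ω z u ∧ ∀ i, k * |u i| ≤ 2 * ![(a : ℤ), b, a, b] i) :
    (Z.card : ℝ) * k ^ 4 ≤ 1296 * ((a : ℝ) * b) ^ 2 := by
  rcases Z.eq_empty_or_nonempty with rfl | ⟨z₀, hz₀⟩
  · simp; positivity
  have hk0 : (0 : ℝ) < k := by exact_mod_cast hk
  have hkZ : (1 : ℤ) ≤ k := by exact_mod_cast hk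
  have haR : (1 : ℝ) ≤ a := by exact_mod_cast ha
  have habR : (a : ℝ) ≤ b := by exact_mod_cast hab
  have hle : ∀ i, ![(a : ℤ), b, a, b] i ≤ b := by
    intro i
    have : (a : ℤ) ≤ b := by exact_mod_cast hab
    fin_cases i <;> simp [this, hab]
  have hsmall : ∀ u : Fin 4 → ℤ, (∀ i, k * |u i| ≤ 2 * ![(a : ℤ), b, a, b] i) →
      ∀ i, |u i| < p := by
    intro u hu i
    have h1 := hu i
    have h2 := hle i
    have h3 : |u i| ≤ k * |u i| := by nlinarith [abs_nonneg (u i)]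
    have h4 : (2 : ℤ) * b < p := by exact_mod_cast hbp
    linarith
  choose! g hg using fun z hz => (hZ z hz).2
  -- k ≤ 2 * a
  have hka : (k : ℝ) ≤ 2 * a := by
    have h1 := hg z₀ hz₀
    have : (k : ℤ) ≤ 2 * a := by
      rcases h.first_ne (hZ z₀ hz₀).1 h1.1 h1.2.1 (hsmall _ h1.2.2) with h2 | h2
      · have h3 := h1.2.2 0
        have h4 := Int.one_le_abs h2
        simp at h3
        nlinarith
      · have h3 := h1.2.2 2
        have h4 := Int.one_le_abs h2
        simp at h3
        nlinarith
    exact_mod_cast this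
  have key := count_box (Z := Z) g (fun i => 2 * (![(a : ℝ), b, a, b] i) / k) ?_ ?_ ?_
  · simp at key
    have : (Z.card : ℝ) * k ^ 4 ≤ 81 * (2 * a / k * (2 * b / k) * (2 * a / k) * (2 * b / k)) * k ^ 4 := by
      gcongr
    refine this.trans (le_of_eq ?_)
    field_simp
    ring
  · intro i
    rw [le_div_iff₀ hk0]
    fin_cases i <;> simp <;> linarith
  · intro z hz i
    rw [le_div_iff₀ hk0]
    have h1 := (hg z hz).2.2 i
    have h2 : ((k * |g z i| : ℤ) : ℝ) ≤ ((2 * ![(a : ℤ), b, a, b] i : ℤ) : ℝ) := by exact_mod_cast h1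
    have h3 : ((![(a : ℤ), b, a, b] i : ℤ) : ℝ) = ![(a : ℝ), b, a, b] i := by
      fin_cases i <;> simp
    push_cast at h2
    rw [h3] at h2
    linarith
  · intro z hz z' hz' hzz
    have h1 := hg z hz
    have h2 := hg z' hz'
    rw [← hzz] at h2
    exact h.uniq h1.1 h1.2.1 h2.2.1 (hsmall _ h1.2.2)

/-- dual vectors determine z. -/
lemma Hyp.dual_uniq (h : Hyp p ω) {z z' : F} {c : Fin 4 → ℤ} (hc : ∃ i, ¬ (p : ℤ) ∣ c i)
    (h1 : ∀ v, Gam ω z v → (p : ℤ) ∣ ∑ i, v i * c i)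
    (h2 : ∀ v, Gam ω z' v → (p : ℤ) ∣ ∑ i, v i * c i) : z = z' := by
  by_contra hne
  have hsub : z - z' ≠ 0 := sub_ne_zero.2 hne
  have key : ∀ y y' : ℤ, (p : ℤ) ∣ y * c 0 + y' * c 1 := by
    intro y y'
    obtain ⟨w, w', hw⟩ := h.sur ((z - z')⁻¹ * phi ω y y')
    obtain ⟨x, x', hx⟩ := h.sur (z * phi ω w w')
    obtain ⟨t, t', ht⟩ := h.sur (z' * phi ω w w')
    have e1 := h1 ![x, x', w, w'] (by simpa [Gam] using hx)
    have e2 := h2 ![t, t', w, w'] (by simpa [Gam] using ht)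
    have e3 : phi ω (x - t - y) (x' - t' - y') = 0 := by
      rw [phi_sub, phi_sub, hx, ht, hw]
      field_simp
      ring
    obtain ⟨e4, e5⟩ := h.ind _ _ e3
    simp only [Fin.sum_univ_four] at e1 e2
    simp at e1 e2
    obtain ⟨m1, e1⟩ := e1
    obtain ⟨m2, e2⟩ := e2
    obtain ⟨m3, e4⟩ := e4
    obtain ⟨m4, e5⟩ := e5
    exact ⟨m1 - m2 - m3 * c 0 - m4 * c 1, by linear_combination e1 - e2 - c 0 * e4 - c 1 * e5⟩
  have k0 := key 1 0
  have k1 := key 0 1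
  simp at k0 k1
  have key2 : ∀ w w' : ℤ, (p : ℤ) ∣ w * c 2 + w' * c 3 := by
    intro w w'
    obtain ⟨x, x', hx⟩ := h.sur (z * phi ω w w')
    have e1 := h1 ![x, x', w, w'] (by simpa [Gam] using hx)
    simp only [Fin.sum_univ_four] at e1
    simp at e1
    obtain ⟨m1, e1⟩ := e1
    obtain ⟨m3, e4⟩ := k0
    obtain ⟨m4, e5⟩ := k1
    exact ⟨m1 - x * m3 - x' * m4, by linear_combination e1 - x * e4 - x' * e5⟩
  have k2 := key2 1 0
  have k3 := key2 0 1
  simp at k2 k3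
  obtain ⟨i, hi⟩ := hc
  apply hi
  fin_cases i
  · exact k0
  · exact k1
  · exact k2
  · exact k3

lemma Hyp.dual_ne (h : Hyp p ω) {z : F} (hz : ¬ ∃ n : ℤ, z = n) {c : Fin 4 → ℤ}
    (hc : ∃ i, ¬ (p : ℤ) ∣ c i)
    (h1 : ∀ v, Gam ω z v → (p : ℤ) ∣ ∑ i, v i * c i) : c 1 ≠ 0 ∨ c 3 ≠ 0 := by
  by_contra hcon
  push Not at hcon
  obtain ⟨c1, c3⟩ := hcon
  have hpp := Nat.prime_iff_prime_int.1 h.prime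
  obtain ⟨α, γ, e1⟩ := h.sur (z * ω 0)
  obtain ⟨β, δ, e2⟩ := h.sur (z * ω 1)
  have f1 := h1 ![α, γ, 1, 0] (by simpa [Gam, phi] using e1)
  have f2 := h1 ![β, δ, 0, 1] (by simpa [Gam, phi] using e2)
  simp only [Fin.sum_univ_four] at f1 f2
  simp [c1, c3] at f1 f2
  have hw1 : ω 1 ≠ 0 := by
    intro h0
    have := (h.ind 0 1 (by simp [phi, h0])).2
    exact hpp.not_dvd_one this
  have hβ : ¬ (p : ℤ) ∣ β := by
    intro hd
    apply hz
    refine ⟨δ, ?_⟩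
    unfold phi at e2
    rw [h.dvd_zero hd, zero_mul, zero_add] at e2
    exact (mul_right_cancel₀ hw1 e2).symm
  have g0 : (p : ℤ) ∣ c 0 := (hpp.dvd_or_dvd f2).resolve_left hβ
  have g2 : (p : ℤ) ∣ c 2 := (dvd_add_right (Dvd.dvd.mul_left g0 α)).1 f1
  obtain ⟨i, hi⟩ := hc
  apply hi
  fin_cases i
  · exact g0
  · simp [c1]
  · exact g2
  · simp [c3]

lemma tail2 (h : Hyp p ω) {a b : ℕ} (ha : 1 ≤ a) (hab : a ≤ b) (hbp : 2 * (a * b) < p)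
    (Z : Finset F) (K : ℕ) (hK : 1 ≤ K) (hZ : ∀ z ∈ Z, (¬ ∃ n : ℤ, z = n) ∧
      ∃ c : Fin 4 → ℤ, (∃ i, ¬ (p : ℤ) ∣ c i) ∧
      (∀ v, Gam ω z v → (p : ℤ) ∣ ∑ i, v i * c i) ∧
      ∀ i, |c i| * ![(a : ℤ), b, a, b] i * p * K ≤ 162 * (a * b) ^ 2) :
    (Z.card : ℝ) * K ^ 2 ≤ 3500000000 * ((a : ℝ) * b) ^ 2 := by
  rcases Z.eq_empty_or_nonempty with rfl | ⟨z₀, hz₀⟩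
  · simp; positivity
  have hK0 : (1 : ℝ) ≤ K := by exact_mod_cast hK
  have haR : (1 : ℝ) ≤ a := by exact_mod_cast ha
  have habR : (a : ℝ) ≤ b := by exact_mod_cast hab
  have hbR : (1 : ℝ) ≤ b := haR.trans habR
  have hpR : (0 : ℝ) < p := by exact_mod_cast h.prime.pos
  have hbpR : 2 * ((a : ℝ) * b) < p := by exact_mod_cast hbp
  choose! g hg using fun z hz => (hZ z hz).2
  have hg' : ∀ z ∈ Z, ∀ i, |(g z i : ℝ)| * ![(a : ℝ), b, a, b] i * p * K ≤ 162 * (a * b) ^ 2 := by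
    intro z hz i
    have h1 := (hg z hz).2.2 i
    have h2 : ((|g z i| * ![(a : ℤ), b, a, b] i * p * K : ℤ) : ℝ) ≤ ((162 * (a * b) ^ 2 : ℤ) : ℝ) := by
      exact_mod_cast h1
    have h3 : ((![(a : ℤ), b, a, b] i : ℤ) : ℝ) = ![(a : ℝ), b, a, b] i := by
      fin_cases i <;> simp
    push_cast at h2
    rw [h3] at h2
    linarith
  have hb : (b : ℝ) * p * K ≤ 162 * (a * b) ^ 2 := by
    have h1 := hg z₀ hz₀
    rcases h.dual_ne (hZ z₀ hz₀).1 h1.1 h1.2.1 with h2 | h2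
    · have h3 := hg' z₀ hz₀ 1
      have h4 : (1 : ℝ) ≤ |(g z₀ 1 : ℝ)| := by exact_mod_cast Int.one_le_abs h2
      simp at h3
      refine le_trans ?_ h3
      have : (1 : ℝ) * b * p * K ≤ |(g z₀ 1 : ℝ)| * b * p * K := by gcongr
      linarith
    · have h3 := hg' z₀ hz₀ 3
      have h4 : (1 : ℝ) ≤ |(g z₀ 3 : ℝ)| := by exact_mod_cast Int.one_le_abs h2
      simp at h3
      refine le_trans ?_ h3
      have : (1 : ℝ) * b * p * K ≤ |(g z₀ 3 : ℝ)| * b * p * K := by gcongr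
      linarith
  have ha' : (a : ℝ) * p * K ≤ 162 * (a * b) ^ 2 := by
    refine le_trans ?_ hb
    gcongr
  have key := count_box (Z := Z) g (fun i => 162 * ((a : ℝ) * b) ^ 2 / (![(a : ℝ), b, a, b] i * p * K)) ?_ ?_ ?_
  · simp at key
    have e : (81 : ℝ) * (162 * (a * b) ^ 2 / (a * p * K) * (162 * (a * b) ^ 2 / (b * p * K)) *
      (162 * (a * b) ^ 2 / (a * p * K)) * (162 * (a * b) ^ 2 / (b * p * K))) =
      81 * 162 ^ 4 * ((a * b) ^ 2 * ((a * b) / p) ^ 4 / K ^ 4) := by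
      field_simp
    rw [e] at key
    have h5 : ((a : ℝ) * b) / p ≤ 1 / 2 := by
      rw [div_le_iff₀ hpR]; linarith
    have h6 : (((a : ℝ) * b) / p) ^ 4 ≤ 1 / 16 := by
      calc (((a : ℝ) * b) / p) ^ 4 ≤ (1 / 2) ^ 4 := by gcongr
        _ = 1 / 16 := by norm_num
    have h7 : (a * b : ℝ) ^ 2 * ((a * b) / p) ^ 4 / K ^ 4 * K ^ 2 ≤ (a * b) ^ 2 * (1 / 16) := by
      have : (a * b : ℝ) ^ 2 * ((a * b) / p) ^ 4 / K ^ 4 * K ^ 2 =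
        (a * b : ℝ) ^ 2 * ((a * b) / p) ^ 4 / K ^ 2 := by field_simp
      rw [this]
      calc _ ≤ (a * b : ℝ) ^ 2 * ((a * b) / p) ^ 4 / 1 := by
            gcongr
            exact one_le_pow₀ hK0
        _ = (a * b : ℝ) ^ 2 * ((a * b) / p) ^ 4 := by rw [div_one]
        _ ≤ _ := by gcongr
    have h8 : (Z.card : ℝ) * K ^ 2 ≤
      81 * 162 ^ 4 * ((a * b) ^ 2 * ((a * b) / p) ^ 4 / K ^ 4) * K ^ 2 := by gcongr
    have h9 : (0 : ℝ) ≤ (a * b) ^ 2 := by positivity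
    nlinarith
  · intro i
    rw [le_div_iff₀]
    · fin_cases i <;> simp <;> linarith
    · fin_cases i <;> simp <;> positivity
  · intro z hz i
    rw [le_div_iff₀]
    · have := hg' z hz i
      linarith
    · fin_cases i <;> simp <;> positivity
  · intro z hz z' hz' hzz
    have h1 := hg z hz
    have h2 := hg z' hz'
    rw [← hzz] at h2
    exact h.dual_uniq h1.1 h1.2.1 h2.2.1

lemma exists_ne_of_two_le {a b : ℕ} {z : F} (hc : 2 ≤ (fz ω a b z).card) :
    ∃ u ∈ fz ω a b z, u ≠ 0 := by
  obtain ⟨u, hu, w, hw, hne⟩ := Finset.one_lt_card.1 (show 1 < _ from hc)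
  by_cases h0 : u = 0
  · exact ⟨w, hw, fun h => hne (by rw [h0, h])⟩
  · exact ⟨u, hu, h0⟩

lemma tail [Fintype F] (h : Hyp p ω) {a b : ℕ} (ha : 1 ≤ a) (hab : a ≤ b) (hbp : 2 * (b * b) < p)
    (K : ℕ) (hK : 2 ≤ K) :
    (((Finset.univ : Finset F).filter (fun z : F => (¬ ∃ n : ℤ, z = n) ∧ K ≤ (fz ω a b z).card)).card : ℝ)
      * K ^ 2 ≤ 10000000000 * ((a : ℝ) * b) ^ 2 := by
  set Z := (Finset.univ : Finset F).filter (fun z : F => (¬ ∃ n : ℤ, z = n) ∧ K ≤ (fz ω a b z).card)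
    with hZ
  have hb1 : 1 ≤ b := ha.trans hab
  have hab2 : 2 * (a * b) < p := by nlinarith
  have hbp2 : 2 * b < p := by nlinarith
  have hpos : (0 : ℝ) ≤ ((a : ℝ) * b) ^ 2 := by positivity
  by_cases hK2 : K ≤ 486
  · have h1 := tail1 h ha hab hbp2 Z 1 le_rfl (by
      intro z hz
      simp only [hZ, Finset.mem_filter, Finset.mem_univ, true_and] at hz
      refine ⟨hz.1, ?_⟩
      obtain ⟨u, hu, hu0⟩ := exists_ne_of_two_le (hK.trans hz.2)
      rw [fz, Finset.mem_filter, mem_bx] at hu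
      refine ⟨u, hu0, hu.2, fun i => ?_⟩
      have := hu.1 i
      have h2 := abs_nonneg (u i)
      push_cast
      linarith)
    have h2 : (K : ℝ) ≤ 486 := by exact_mod_cast hK2
    have h3 : (K : ℝ) ^ 2 ≤ 486 ^ 2 := by gcongr
    simp at h1
    have h4 : (Z.card : ℝ) * K ^ 2 ≤ (1296 * ((a : ℝ) * b) ^ 2) * 486 ^ 2 := by gcongr
    linarith
  · push Not at hK2
    set k := Nat.sqrt (K - 1) with hk
    have hk1 : 1 ≤ k := by
      rw [hk, Nat.le_sqrt]; omega
    have hk2 : k ^ 2 < K := by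
      have := Nat.sqrt_le' (K - 1)
      rw [← hk] at this
      omega
    have hk3 : K ≤ 4 * k ^ 2 := by
      have := Nat.succ_le_succ_sqrt' (K - 1)
      rw [← hk] at this
      have h5 : K ≤ (k + 1) ^ 2 := by
        omega
      nlinarith
    let P1 : F → Prop := fun z => ∃ u : Fin 4 → ℤ, u ≠ 0 ∧ Gam ω z u ∧
      ∀ i, k * |u i| ≤ 2 * ![(a : ℤ), b, a, b] i
    let Z1 := Z.filter P1
    let Z2 := Z.filter (fun z => ¬ P1 z)
    have hsplit : Z1.card + Z2.card = Z.card := Finset.card_filter_add_card_filter_not _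
    have h1 := tail1 h ha hab hbp2 Z1 k hk1 (by
      intro z hz
      simp only [Z1, hZ, Finset.mem_filter, Finset.mem_univ, true_and] at hz
      exact ⟨hz.1.1, hz.2⟩)
    have h2 := tail2 h ha hab hab2 Z2 K (by omega) (by
      intro z hz
      simp only [Z2, hZ, Finset.mem_filter, Finset.mem_univ, true_and] at hz
      refine ⟨hz.1.1, ?_⟩
      obtain ⟨α, β, γ, δ, hl⟩ := h.lat z
      have hcz := hz.1.2
      rcases core (α := α) (β := β) (γ := γ) (δ := δ) h.prime.pos ha hab2 hb1 (fz ω a b z)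
        (fun v hv => (hl v).1 (Finset.mem_filter.1 hv).2)
        (fun v hv => mem_bx.1 (Finset.mem_filter.1 hv).1) (by omega) k hk1 (by omega) with h3 | h3
      · exfalso
        apply hz.2
        obtain ⟨u, hu0, hu, hu'⟩ := h3
        exact ⟨u, hu0, (hl u).2 hu, hu'⟩
      · obtain ⟨c, hc0, hc1, hc2⟩ := h3
        refine ⟨c, hc0, fun v hv => hc1 v ((hl v).1 hv), fun i => le_trans ?_ (hc2 i)⟩
        have h4 : (0 : ℤ) ≤ ![(a : ℤ), b, a, b] i := by fin_cases i <;> simp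
        have h5 : (K : ℤ) ≤ (fz ω a b z).card := by exact_mod_cast hcz
        gcongr)
    have h3 : (K : ℝ) ≤ 4 * k ^ 2 := by exact_mod_cast hk3
    have h4 : (Z1.card : ℝ) * K ^ 2 ≤ 16 * (Z1.card * k ^ 4) := by
      calc (Z1.card : ℝ) * K ^ 2 ≤ Z1.card * (4 * k ^ 2) ^ 2 := by gcongr
        _ = _ := by ring
    have h5 : (Z.card : ℝ) = Z1.card + Z2.card := by exact_mod_cast hsplit.symm
    rw [h5, add_mul]
    linarith
end


lemma harm_le (n : ℕ) : ∑ k ∈ Finset.Icc 1 n, (1 / (k : ℝ)) ≤ 1 + Real.log n := by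
  have h := harmonic_le_one_add_log n
  rw [harmonic_eq_sum_Icc] at h
  push_cast at h
  simpa [one_div] using h

lemma layer_sum {ι : Type} (Z : Finset ι) (f : ι → ℕ) (M : ℕ) (X : ℝ) (hX : 0 ≤ X)
    (h2 : ∀ z ∈ Z, 2 ≤ f z) (hM : ∀ z ∈ Z, f z ≤ M)
    (ht : ∀ K : ℕ, 2 ≤ K → ((Z.filter (fun z => K ≤ f z)).card : ℝ) * K ^ 2 ≤ X) :
    ∑ z ∈ Z, (f z : ℝ) ^ 2 ≤ 2 * X * (1 + Real.log M) := by
  have ht1 : ∀ K : ℕ, 1 ≤ K → ((Z.filter (fun z => K ≤ f z)).card : ℝ) * K ^ 2 ≤ X := by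
    intro K hK
    by_cases h : 2 ≤ K
    · exact ht K h
    · have hK1 : K = 1 := by omega
      subst hK1
      have h3 := ht 2 le_rfl
      have h4 : Z.filter (fun z => 1 ≤ f z) ⊆ Z.filter (fun z => 2 ≤ f z) := by
        intro z hz
        rw [Finset.mem_filter] at hz ⊢
        exact ⟨hz.1, h2 z hz.1⟩
      have h5 : ((Z.filter (fun z => 1 ≤ f z)).card : ℝ) ≤ (Z.filter (fun z => 2 ≤ f z)).card := by
        exact_mod_cast Finset.card_le_card h4
      have h6 : (0 : ℝ) ≤ ((Z.filter (fun z => 2 ≤ f z)).card : ℝ) := by positivity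
      push_cast at h3 ⊢
      linarith
  have hpt : ∀ n : ℕ, (n : ℝ) ^ 2 ≤ ∑ K ∈ Finset.Icc 1 n, 2 * (K : ℝ) := by
    intro n
    induction n with
    | zero => simp
    | succ n ih =>
      rw [Finset.sum_Icc_succ_top (by omega)]
      push_cast
      have : (0 : ℝ) ≤ n := by positivity
      nlinarith
  calc ∑ z ∈ Z, (f z : ℝ) ^ 2 ≤ ∑ z ∈ Z, ∑ K ∈ Finset.Icc 1 M, if K ≤ f z then 2 * (K : ℝ) else 0 := by
        refine Finset.sum_le_sum fun z hz => (hpt (f z)).trans (le_of_eq ?_)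
        rw [← Finset.sum_filter]
        refine Finset.sum_congr ?_ fun _ _ => rfl
        ext K
        have := hM z hz
        simp only [Finset.mem_filter, Finset.mem_Icc]
        omega
    _ = ∑ K ∈ Finset.Icc 1 M, ∑ z ∈ Z, if K ≤ f z then 2 * (K : ℝ) else 0 := Finset.sum_comm
    _ ≤ ∑ K ∈ Finset.Icc 1 M, 2 * X * (1 / (K : ℝ)) := by
        refine Finset.sum_le_sum fun K hK => ?_
        rw [← Finset.sum_filter, Finset.sum_const, nsmul_eq_mul]
        have hK1 := (Finset.mem_Icc.1 hK).1
        have hK0 : (0 : ℝ) < K := by exact_mod_cast hK1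
        have := ht1 K hK1
        rw [mul_one_div, le_div_iff₀ hK0]
        nlinarith
    _ = 2 * X * ∑ K ∈ Finset.Icc 1 M, (1 / (K : ℝ)) := by rw [Finset.mul_sum]
    _ ≤ _ := by
        have := harm_le M
        gcongr

/-- positive integer energy -/
lemma energy_nat (H : ℕ) :
    ((((Finset.Icc 1 H) ×ˢ (Finset.Icc 1 H) ×ˢ (Finset.Icc 1 H) ×ˢ (Finset.Icc 1 H)).filter
      (fun q : ℕ × ℕ × ℕ × ℕ => q.1 * q.2.1 = q.2.2.1 * q.2.2.2)).card : ℝ) ≤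
      2 * (H : ℝ) ^ 2 * (1 + Real.log H) := by
  set Q := ((Finset.Icc 1 H) ×ˢ (Finset.Icc 1 H) ×ˢ (Finset.Icc 1 H) ×ˢ (Finset.Icc 1 H)).filter
      (fun q : ℕ × ℕ × ℕ × ℕ => q.1 * q.2.1 = q.2.2.1 * q.2.2.2) with hQ
  let U : Finset (Σ _ : ℕ × ℕ, ℕ × ℕ) := (Finset.Icc 1 H ×ˢ Finset.Icc 1 H).sigma
    (fun c => Finset.Icc 1 (H / max c.1 c.2) ×ˢ Finset.Icc 1 (H / max c.1 c.2))
  -- inverse parametrization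
  let ψ : (Σ _ : ℕ × ℕ, ℕ × ℕ) → ℕ × ℕ × ℕ × ℕ := fun u =>
    (u.2.1 * u.1.1, u.2.2 * u.1.2, u.2.1 * u.1.2, u.2.2 * u.1.1)
  have hsub : Q ⊆ U.image ψ := by
    rintro ⟨x, y, w, t⟩ hq
    simp only [hQ, Finset.mem_filter, Finset.mem_product, Finset.mem_Icc] at hq
    obtain ⟨⟨⟨hx1, hx2⟩, ⟨hy1, hy2⟩, ⟨hw1, hw2⟩, ⟨ht1, ht2⟩⟩, he⟩ := hq
    obtain ⟨a, b, hcop, hxa, hwb⟩ := Nat.exists_coprime x w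
    set g := Nat.gcd x w with hg
    have hg0 : 0 < g := Nat.gcd_pos_of_pos_left _ hx1
    have ha0 : 0 < a := Nat.pos_of_ne_zero (by rintro rfl; omega)
    have hb0 : 0 < b := Nat.pos_of_ne_zero (by rintro rfl; omega)
    have e1 : a * y = b * t := by
      have : g * (a * y) = g * (b * t) := by
        calc g * (a * y) = (a * g) * y := by ring
          _ = x * y := by rw [← hxa]
          _ = w * t := he
          _ = (b * g) * t := by rw [← hwb]
          _ = _ := by ring
      exact Nat.eq_of_mul_eq_mul_left hg0 this
    obtain ⟨m, hm⟩ : b ∣ y := by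
      have : b ∣ a * y := ⟨t, e1⟩
      exact hcop.symm.dvd_of_dvd_mul_left this
    have hm0 : 0 < m := Nat.pos_of_ne_zero (by rintro rfl; omega)
    have htm : t = m * a := by
      rw [hm] at e1
      have : b * (m * a) = b * t := by rw [← e1]; ring
      exact (Nat.eq_of_mul_eq_mul_left hb0 this).symm
    have hmax : 0 < max a b := lt_max_of_lt_left ha0
    have hgm : g * max a b ≤ H := by
      rcases le_total a b with h | h
      · rw [max_eq_right h]; nlinarith
      · rw [max_eq_left h]; nlinarith
    have hmm : m * max a b ≤ H := by
      rcases le_total a b with h | h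
      · rw [max_eq_right h]; nlinarith
      · rw [max_eq_left h]; nlinarith
    refine Finset.mem_image.2 ⟨⟨(a, b), (g, m)⟩, ?_, ?_⟩
    · simp only [U, Finset.mem_sigma, Finset.mem_product, Finset.mem_Icc]
      refine ⟨⟨⟨ha0, ?_⟩, ⟨hb0, ?_⟩⟩, ⟨⟨hg0, ?_⟩, ⟨hm0, ?_⟩⟩⟩
      · nlinarith [le_max_left a b]
      · nlinarith [le_max_right a b]
      · rw [Nat.le_div_iff_mul_le hmax]; exact hgm
      · rw [Nat.le_div_iff_mul_le hmax]; exact hmm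
    · simp only [ψ, Prod.mk.injEq]
      refine ⟨?_, ?_, ?_, ?_⟩
      · rw [hxa]; ring
      · rw [hm]; ring
      · rw [hwb]; ring
      · rw [htm]
  have h1 : (Q.card : ℝ) ≤ U.card := by
    exact_mod_cast (Finset.card_le_card hsub).trans Finset.card_image_le
  refine h1.trans ?_
  have h2 : (U.card : ℝ) = ∑ c ∈ Finset.Icc 1 H ×ˢ Finset.Icc 1 H,
      ((H / max c.1 c.2 : ℕ) : ℝ) * ((H / max c.1 c.2 : ℕ) : ℝ) := by
    simp [U, Finset.card_sigma]
  rw [h2, Finset.sum_product]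
  have h3 : ∀ a ∈ Finset.Icc 1 H, ∀ b ∈ Finset.Icc 1 H,
      ((H / max a b : ℕ) : ℝ) * ((H / max a b : ℕ) : ℝ) ≤
        (if b ≤ a then (H : ℝ) ^ 2 * (1 / (a : ℝ) ^ 2) else 0) +
        (if a ≤ b then (H : ℝ) ^ 2 * (1 / (b : ℝ) ^ 2) else 0) := by
    intro a ha b hb
    have h4 : ((H / max a b : ℕ) : ℝ) ≤ (H : ℝ) / (max a b : ℕ) := Nat.cast_div_le
    have h5 : ((H / max a b : ℕ) : ℝ) * ((H / max a b : ℕ) : ℝ) ≤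
        (H : ℝ) ^ 2 * (1 / ((max a b : ℕ) : ℝ) ^ 2) := by
      calc _ ≤ ((H : ℝ) / (max a b : ℕ)) * ((H : ℝ) / (max a b : ℕ)) := by gcongr
        _ = _ := by ring
    refine h5.trans ?_
    rcases le_total a b with h | h
    · rw [max_eq_right h, if_pos h]
      have : (0 : ℝ) ≤ if b ≤ a then (H : ℝ) ^ 2 * (1 / (a : ℝ) ^ 2) else 0 := by
        split_ifs <;> positivity
      linarith
    · rw [max_eq_left h, if_pos h]
      have : (0 : ℝ) ≤ if a ≤ b then (H : ℝ) ^ 2 * (1 / (b : ℝ) ^ 2) else 0 := by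
        split_ifs <;> positivity
      linarith
  refine (Finset.sum_le_sum fun a ha => Finset.sum_le_sum fun b hb => h3 a ha b hb).trans ?_
  simp only [Finset.sum_add_distrib]
  rw [Finset.sum_comm (f := fun a b : ℕ => if a ≤ b then (H : ℝ) ^ 2 * (1 / (b : ℝ) ^ 2) else 0)]
  have h6 : ∑ a ∈ Finset.Icc 1 H, ∑ b ∈ Finset.Icc 1 H,
      (if b ≤ a then (H : ℝ) ^ 2 * (1 / (a : ℝ) ^ 2) else 0) ≤ (H : ℝ) ^ 2 * (1 + Real.log H) := by
    calc _ = ∑ a ∈ Finset.Icc 1 H, (H : ℝ) ^ 2 * (1 / (a : ℝ)) := by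
          refine Finset.sum_congr rfl fun a ha => ?_
          rw [Finset.mem_Icc] at ha
          rw [← Finset.sum_filter, Finset.sum_const]
          have : (Finset.Icc 1 H).filter (fun b => b ≤ a) = Finset.Icc 1 a := by
            ext b; simp only [Finset.mem_filter, Finset.mem_Icc]; omega
          rw [this, Nat.card_Icc, nsmul_eq_mul]
          have ha0 : (0 : ℝ) < a := by exact_mod_cast ha.1
          simp only [Nat.add_sub_cancel]
          field_simp
      _ = (H : ℝ) ^ 2 * ∑ a ∈ Finset.Icc 1 H, (1 / (a : ℝ)) := by rw [Finset.mul_sum]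
      _ ≤ _ := by
          have := harm_le H
          gcongr
  linarith

/-- symmetric integer tuples -/
noncomputable def QZ (H : ℕ) : Finset (ℤ × ℤ × ℤ × ℤ) :=
  ((Finset.Icc (-(H : ℤ)) H) ×ˢ (Finset.Icc (-(H : ℤ)) H) ×ˢ (Finset.Icc (-(H : ℤ)) H) ×ˢ
    (Finset.Icc (-(H : ℤ)) H)).filter
      (fun q : ℤ × ℤ × ℤ × ℤ => q.1 * q.2.1 = q.2.2.1 * q.2.2.2)

/-- number of tuples with vanishing product, in general. -/
lemma zero_tuples {R : Type} [CommRing R] [IsDomain R] (B : Finset R) :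
    ((B ×ˢ B ×ˢ B ×ˢ B).filter
      (fun q : R × R × R × R => q.1 * q.2.1 = q.2.2.1 * q.2.2.2 ∧ q.1 * q.2.1 = 0)).card ≤
      4 * B.card ^ 2 := by
  let ψ : (Bool × Bool) × (R × R) → R × R × R × R := fun u =>
    (if u.1.1 then 0 else u.2.1, if u.1.1 then u.2.1 else 0,
      if u.1.2 then 0 else u.2.2, if u.1.2 then u.2.2 else 0)
  have hsub : ((B ×ˢ B ×ˢ B ×ˢ B).filter
      (fun q : R × R × R × R => q.1 * q.2.1 = q.2.2.1 * q.2.2.2 ∧ q.1 * q.2.1 = 0)) ⊆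
      ((Finset.univ : Finset (Bool × Bool)) ×ˢ (B ×ˢ B)).image ψ := by
    rintro ⟨x, y, w, t⟩ hq
    simp only [Finset.mem_filter, Finset.mem_product] at hq
    obtain ⟨⟨hx, hy, hw, ht⟩, he, h0⟩ := hq
    rw [h0] at he
    have hwt := he.symm
    rw [Finset.mem_image]
    rcases mul_eq_zero.1 h0 with h1 | h1 <;> rcases mul_eq_zero.1 hwt with h2 | h2
    · exact ⟨((true, true), (y, t)), by simp [hy, ht], by simp [ψ, h1, h2]⟩
    · exact ⟨((true, false), (y, w)), by simp [hy, hw], by simp [ψ, h1, h2]⟩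
    · exact ⟨((false, true), (x, t)), by simp [hx, ht], by simp [ψ, h1, h2]⟩
    · exact ⟨((false, false), (x, w)), by simp [hx, hw], by simp [ψ, h1, h2]⟩
  refine (Finset.card_le_card hsub).trans (Finset.card_image_le.trans ?_)
  simp [Finset.card_product]
  nlinarith

lemma int_eq_of {x y : ℤ} (h1 : decide (0 ≤ x) = decide (0 ≤ y)) (h2 : x.natAbs = y.natAbs) :
    x = y := by
  have : (0 ≤ x) ↔ (0 ≤ y) := by simpa using h1
  omega

lemma energy_int (H : ℕ) (hH : 1 ≤ H) :
    ((QZ H).card : ℝ) ≤ 68 * (H : ℝ) ^ 2 * (1 + Real.log H) := by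
  let I := Finset.Icc (-(H : ℤ)) H
  have hI : (I.card : ℝ) ≤ 3 * H := by
    have : I.card = 2 * H + 1 := by simp [I]; omega
    rw [this]; push_cast
    have : (1 : ℝ) ≤ H := by exact_mod_cast hH
    linarith
  let A := (I ×ˢ I ×ˢ I ×ˢ I).filter
      (fun q : ℤ × ℤ × ℤ × ℤ => q.1 * q.2.1 = q.2.2.1 * q.2.2.2 ∧ q.1 * q.2.1 = 0)
  let D := (I ×ˢ I ×ˢ I ×ˢ I).filter
      (fun q : ℤ × ℤ × ℤ × ℤ => q.1 * q.2.1 = q.2.2.1 * q.2.2.2 ∧ q.1 * q.2.1 ≠ 0)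
  have hQ : QZ H ⊆ A ∪ D := by
    intro q hq
    unfold QZ at hq
    rw [Finset.mem_filter] at hq
    rw [Finset.mem_union, Finset.mem_filter, Finset.mem_filter]
    by_cases h0 : q.1 * q.2.1 = 0
    · exact Or.inl ⟨hq.1, hq.2, h0⟩
    · exact Or.inr ⟨hq.1, hq.2, h0⟩
  have hA : (A.card : ℝ) ≤ 36 * H ^ 2 := by
    have h1 : (A.card : ℝ) ≤ 4 * (I.card : ℝ) ^ 2 := by exact_mod_cast zero_tuples I
    have h2 : (I.card : ℝ) ^ 2 ≤ (3 * H) ^ 2 := by gcongr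
    nlinarith
  let QN := ((Finset.Icc 1 H) ×ˢ (Finset.Icc 1 H) ×ˢ (Finset.Icc 1 H) ×ˢ (Finset.Icc 1 H)).filter
      (fun q : ℕ × ℕ × ℕ × ℕ => q.1 * q.2.1 = q.2.2.1 * q.2.2.2)
  let g : ℤ × ℤ × ℤ × ℤ → (Bool × Bool × Bool × Bool) × (ℕ × ℕ × ℕ × ℕ) := fun q =>
    ((decide (0 ≤ q.1), decide (0 ≤ q.2.1), decide (0 ≤ q.2.2.1), decide (0 ≤ q.2.2.2)),
      (q.1.natAbs, q.2.1.natAbs, q.2.2.1.natAbs, q.2.2.2.natAbs))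
  have hD : D.card ≤ ((Finset.univ : Finset (Bool × Bool × Bool × Bool)) ×ˢ QN).card := by
    refine Finset.card_le_card_of_injOn g ?_ ?_
    · rintro ⟨x, y, w, t⟩ hq
      simp only [D, I, Finset.coe_filter, Finset.mem_product, Finset.mem_Icc, Set.mem_ofPred_eq] at hq
      obtain ⟨⟨hx, hy, hw, ht⟩, he, h0⟩ := hq
      have h0' : w * t ≠ 0 := he ▸ h0
      have hx0 := left_ne_zero_of_mul h0
      have hy0 := right_ne_zero_of_mul h0
      have hw0 := left_ne_zero_of_mul h0'
      have ht0 := right_ne_zero_of_mul h0'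
      simp only [g, QN, Finset.mem_coe, Finset.mem_product, Finset.mem_univ, true_and, Finset.mem_filter, Finset.mem_Icc]
      refine ⟨⟨?_, ?_, ?_, ?_⟩, ?_⟩
      · omega
      · omega
      · omega
      · omega
      · rw [← Int.natAbs_mul, ← Int.natAbs_mul, he]
    · rintro ⟨x, y, w, t⟩ _ ⟨x', y', w', t'⟩ _ hg
      simp only [g, Prod.mk.injEq] at hg
      obtain ⟨⟨a1, a2, a3, a4⟩, ⟨b1, b2, b3, b4⟩⟩ := hg
      rw [int_eq_of a1 b1, int_eq_of a2 b2, int_eq_of a3 b3, int_eq_of a4 b4]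
  have hN := energy_nat H
  have hD' : (D.card : ℝ) ≤ 16 * (QN.card : ℝ) := by
    rw [Finset.card_product] at hD
    have : (Finset.univ : Finset (Bool × Bool × Bool × Bool)).card = 16 := by rfl
    rw [this] at hD
    exact_mod_cast hD
  have h1 : ((QZ H).card : ℝ) ≤ A.card + D.card := by
    exact_mod_cast (Finset.card_le_card hQ).trans (Finset.card_union_le _ _)
  have hlog : 0 ≤ Real.log H := Real.log_natCast_nonneg H
  have h2 : (0 : ℝ) ≤ (H : ℝ) ^ 2 * Real.log H := by positivity
  have hN' : (QN.card : ℝ) ≤ 2 * (H : ℝ) ^ 2 * (1 + Real.log H) := hN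
  nlinarith

section
variable {p : ℕ} {F : Type} [Field F] {ω : Fin 2 → F}

lemma bx_lt {a b : ℕ} (hab : a ≤ b) {v : Fin 4 → ℤ} (hv : v ∈ bx a b) (i : Fin 4) :
    |v i| ≤ b := by
  have := mem_bx.1 hv i
  have hab' : (a : ℤ) ≤ b := by exact_mod_cast hab
  fin_cases i <;> simp at this ⊢ <;> omega

lemma cross_zero {p b : ℕ} (hbp : 2 * (b * b) < p) {n x y x' y' : ℤ} (h1 : (p : ℤ) ∣ x - n * y)
    (h2 : (p : ℤ) ∣ x' - n * y') (hx : |x| ≤ b) (hy : |y| ≤ b) (hx' : |x'| ≤ b)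
    (hy' : |y'| ≤ b) : x * y' = y * x' := by
  have h3 : (p : ℤ) ∣ x * y' - y * x' := by
    have : x * y' - y * x' = (x - n * y) * y' - y * (x' - n * y') := by ring
    rw [this]
    exact dvd_sub (h1.mul_right _) (h2.mul_left _)
  have h4 : |x * y' - y * x'| < p := by
    have e1 : |x * y'| ≤ b * b := by
      rw [abs_mul]; exact mul_le_mul hx hy' (abs_nonneg _) (by positivity)
    have e2 : |y * x'| ≤ b * b := by
      rw [abs_mul]; exact mul_le_mul hy hx' (abs_nonneg _) (by positivity)
    have e3 := abs_sub (x * y') (y * x')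
    have e4 : (2 * (b * b) : ℤ) < p := by exact_mod_cast hbp
    linarith
  exact sub_eq_zero.1 (small_of_dvd h3 h4)

lemma prime_part [Fintype F] (h : Hyp p ω) {a b : ℕ} (hab : a ≤ b)
    (hb : 1 ≤ b) (hbp : 2 * (b * b) < p) :
    ∑ z ∈ Finset.univ.filter (fun z : F => (∃ n : ℤ, z = n) ∧ 2 ≤ (fz ω a b z).card),
      (fz ω a b z).card ^ 2 ≤ 4 * ((QZ a).card * (QZ b).card) := by
  set Z := Finset.univ.filter (fun z : F => (∃ n : ℤ, z = n) ∧ 2 ≤ (fz ω a b z).card) with hZ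
  have hbp' : (b : ℤ) < p := by
    have : b < p := by nlinarith
    exact_mod_cast this
  let S : Finset ((_ : F) × ((Fin 4 → ℤ) × (Fin 4 → ℤ))) :=
    Z.sigma fun z => ((fz ω a b z).erase 0) ×ˢ ((fz ω a b z).erase 0)
  have hS : S.card ≤ (QZ a ×ˢ QZ b).card := by
    refine Finset.card_le_card_of_injOn (fun s =>
      ((s.2.1 0, s.2.2 2, s.2.1 2, s.2.2 0), (s.2.1 1, s.2.2 3, s.2.1 3, s.2.2 1))) ?_ ?_
    · rintro ⟨z, v, v'⟩ hs
      simp only [S, Finset.mem_coe, Finset.mem_sigma, Finset.mem_product, Finset.mem_erase] at hs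
      obtain ⟨hz, ⟨-, hv⟩, -, hv'⟩ := hs
      obtain ⟨n, hn⟩ := (Finset.mem_filter.1 hz).2.1
      obtain ⟨hv, hG⟩ := Finset.mem_filter.1 hv
      obtain ⟨hv', hG'⟩ := Finset.mem_filter.1 hv'
      have l := bx_lt hab hv
      have l' := bx_lt hab hv'
      have dv : ∀ w : Fin 4 → ℤ, Gam ω z w →
          (p : ℤ) ∣ w 0 - n * w 2 ∧ (p : ℤ) ∣ w 1 - n * w 3 := by
        intro w hw
        apply h.ind
        unfold Gam at hw
        rw [phi_sub, hw, hn]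
        simp only [phi]; push_cast; ring
      have d := dv v hG
      have d' := dv v' hG'
      have c0 := cross_zero hbp d.1 d'.1 (l 0) (l 2) (l' 0) (l' 2)
      have c1 := cross_zero hbp d.2 d'.2 (l 1) (l 3) (l' 1) (l' 3)
      have m := fun i => abs_le.1 (mem_bx.1 hv i)
      have m' := fun i => abs_le.1 (mem_bx.1 hv' i)
      have m0 := m 0
      have m1 := m 1
      have m2 := m 2
      have m3 := m 3
      have m0' := m' 0
      have m1' := m' 1
      have m2' := m' 2
      have m3' := m' 3
      simp at m0 m1 m2 m3 m0' m1' m2' m3'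
      simp only [QZ, Finset.mem_coe, Finset.mem_product, Finset.mem_filter, Finset.mem_Icc]
      exact ⟨⟨⟨m0, m2', m2, m0'⟩, c0⟩, ⟨m1, m3', m3, m1'⟩, c1⟩
    · rintro ⟨z, v, v'⟩ hs ⟨z₁, u, u'⟩ hs₁ heq
      simp only [S, Finset.mem_coe, Finset.mem_sigma, Finset.mem_product, Finset.mem_erase, hZ,
        Finset.mem_filter, Finset.mem_univ, true_and, fz] at hs hs₁
      simp only [Prod.mk.injEq] at heq
      obtain ⟨⟨e1, e2, e3, e4⟩, e5, e6, e7, e8⟩ := heq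
      have hvu : v = u := by
        funext i; fin_cases i
        exacts [e1, e5, e3, e7]
      have hvu' : v' = u' := by
        funext i; fin_cases i
        exacts [e4, e8, e2, e6]
      subst hvu hvu'
      have : z = z₁ := h.uniq hs.2.1.1 hs.2.1.2.2 hs₁.2.1.2.2
        fun i => (bx_lt hab hs.2.1.2.1 i).trans_lt hbp'
      subst this
      rfl
  rw [Finset.card_product] at hS
  refine le_trans ?_ (Nat.mul_le_mul_left 4 hS)
  rw [Finset.card_sigma, Finset.mul_sum]
  refine Finset.sum_le_sum fun z hz => ?_
  rw [Finset.card_product]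
  have h2 : 2 ≤ (fz ω a b z).card := (Finset.mem_filter.1 hz).2.2
  have h3 := Finset.pred_card_le_card_erase (s := fz ω a b z) (a := 0)
  have h4 : (fz ω a b z).card ≤ 2 * ((fz ω a b z).erase 0).card := by omega
  nlinarith

lemma fz_card_le {a b : ℕ} (ha : 1 ≤ a) (hab : a ≤ b) (hbp : 2 * (b * b) < p) (z : F) :
    (fz ω a b z).card ≤ p ^ 6 := by
  have h1 : (fz ω a b z).card ≤ (bx a b).card := Finset.card_filter_le _ _
  have h2 : (bx a b).card ≤ ∏ _i : Fin 4, (2 * b + 1) := by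
    unfold bx
    rw [Fintype.card_piFinset]
    refine Finset.prod_le_prod' fun i _ => ?_
    rw [Int.card_Icc]
    fin_cases i <;> simp <;> omega
  have h3 : 3 ≤ p := by nlinarith
  have h4 : 2 * b + 1 ≤ 3 * b := by omega
  have h5 : b * b ≤ p := by nlinarith
  calc _ ≤ (2 * b + 1) ^ 4 := by simpa using h1.trans h2
    _ ≤ (3 * b) ^ 4 := Nat.pow_le_pow_left h4 4
    _ = 3 ^ 4 * (b * b) ^ 2 := by ring
    _ ≤ p ^ 4 * p ^ 2 := by gcongr
    _ = p ^ 6 := by ring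

lemma sum_fz [Fintype F] (h : Hyp p ω) {a b : ℕ} (ha : 1 ≤ a) (hab : a ≤ b)
    (hbp : 2 * (b * b) < p) (hlog : 1 ≤ Real.log p) :
    ∑ z ∈ Finset.univ.filter (fun z : F => 2 ≤ (fz ω a b z).card),
      ((fz ω a b z).card : ℝ) ^ 2 ≤ 180000000000 * ((a : ℝ) * b) ^ 2 * Real.log p ^ 2 := by
  have hb : 1 ≤ b := ha.trans hab
  have hbp1 : b ≤ p := by nlinarith
  have hp := h.prime.pos
  have hsplit : Finset.univ.filter (fun z : F => 2 ≤ (fz ω a b z).card) =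
      Finset.univ.filter (fun z : F => (∃ n : ℤ, z = n) ∧ 2 ≤ (fz ω a b z).card) ∪
      Finset.univ.filter (fun z : F => (¬ ∃ n : ℤ, z = n) ∧ 2 ≤ (fz ω a b z).card) := by
    ext z; simp only [Finset.mem_filter, Finset.mem_univ, true_and, Finset.mem_union]; tauto
  have hdis : Disjoint
      (Finset.univ.filter (fun z : F => (∃ n : ℤ, z = n) ∧ 2 ≤ (fz ω a b z).card))
      (Finset.univ.filter (fun z : F => (¬ ∃ n : ℤ, z = n) ∧ 2 ≤ (fz ω a b z).card)) := by
    rw [Finset.disjoint_left]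
    intro z h1 h2
    exact (Finset.mem_filter.1 h2).2.1 (Finset.mem_filter.1 h1).2.1
  rw [hsplit, Finset.sum_union hdis]
  have h1 : (∑ z ∈ Finset.univ.filter (fun z : F => (∃ n : ℤ, z = n) ∧ 2 ≤ (fz ω a b z).card),
      ((fz ω a b z).card : ℝ) ^ 2) ≤ 4 * ((QZ a).card * (QZ b).card) := by
    exact_mod_cast prime_part h hab hb hbp
  have h2 := layer_sum
    (Finset.univ.filter (fun z : F => (¬ ∃ n : ℤ, z = n) ∧ 2 ≤ (fz ω a b z).card))
    (fun z => (fz ω a b z).card) (p ^ 6) (10000000000 * ((a : ℝ) * b) ^ 2) (by positivity)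
    (fun z hz => (Finset.mem_filter.1 hz).2.2) (fun z _ => fz_card_le ha hab hbp z)
    (fun K hK => by
      refine le_trans ?_ (tail h ha hab hbp K hK)
      gcongr
      intro z hz
      simp only [Finset.mem_filter, Finset.mem_univ, true_and] at hz ⊢
      exact ⟨hz.1.1, hz.2⟩)
  have q : ∀ H : ℕ, 1 ≤ H → H ≤ p → ((QZ H).card : ℝ) ≤ 136 * (H : ℝ) ^ 2 * Real.log p := by
    intro H hH hHp
    have l : Real.log H ≤ Real.log p :=
      Real.log_le_log (by exact_mod_cast hH) (by exact_mod_cast hHp)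
    calc _ ≤ _ := energy_int H hH
      _ ≤ 68 * (H : ℝ) ^ 2 * (2 * Real.log p) := by gcongr; linarith
      _ = _ := by ring
  have qa := q a ha (hab.trans hbp1)
  have qb := q b hb hbp1
  have h3 : ((QZ a).card : ℝ) * (QZ b).card ≤
      (136 * (a : ℝ) ^ 2 * Real.log p) * (136 * (b : ℝ) ^ 2 * Real.log p) := by gcongr
  have h4 : Real.log ((p ^ 6 : ℕ) : ℝ) = 6 * Real.log p := by
    push_cast; rw [Real.log_pow]; norm_num
  rw [h4] at h2
  have h5 : Real.log p ≤ Real.log p ^ 2 := by nlinarith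
  have h6 : 2 * (10000000000 * ((a : ℝ) * b) ^ 2) * (1 + 6 * Real.log p) ≤
      2 * (10000000000 * ((a : ℝ) * b) ^ 2) * (7 * Real.log p ^ 2) := by
    gcongr; nlinarith
  have h7 : 0 ≤ ((a : ℝ) * b) ^ 2 * Real.log p ^ 2 := by positivity
  nlinarith

lemma energy_bound [Fintype F] (h : Hyp p ω) {a b : ℕ} (ha : 1 ≤ a) (hab : a ≤ b)
    (hbp : 2 * (b * b) < p) (hlog : 1 ≤ Real.log p) (N M : ℤ) (B : Finset F)
    (hB : B = (Finset.Icc (N + 1) (N + (a : ℤ)) ×ˢ Finset.Icc (M + 1) (M + (b : ℤ))).image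
              (fun x => (x.1 : F) * ω 0 + (x.2 : F) * ω 1)) :
    (((B ×ˢ B ×ˢ B ×ˢ B).filter
      (fun q => q.1 * q.2.1 = q.2.2.1 * q.2.2.2)).card : ℝ) ≤
      200000000000 * ((a : ℝ) * b) ^ 2 * Real.log p ^ 2 := by
  have hBc : B.card ≤ a * b := by
    rw [hB]
    refine Finset.card_image_le.trans ?_
    rw [Finset.card_product]; simp
  let R : F → Finset (F × F) := fun z =>
    (B ×ˢ B).filter (fun u => u.1 = z * u.2 ∧ u.2 ≠ 0)
  -- coordinates
  have hco : ∀ x ∈ B, ∃ c : ℤ × ℤ, phi ω c.1 c.2 = x ∧ N + 1 ≤ c.1 ∧ c.1 ≤ N + a ∧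
      M + 1 ≤ c.2 ∧ c.2 ≤ M + b := by
    intro x hx
    rw [hB] at hx
    obtain ⟨c, hc, rfl⟩ := Finset.mem_image.1 hx
    simp only [Finset.mem_product, Finset.mem_Icc] at hc
    exact ⟨c, rfl, hc.1.1, hc.1.2, hc.2.1, hc.2.2⟩
  choose! κ hκ using hco
  have hRf : ∀ z, (R z).card ≤ (fz ω a b z).card := by
    intro z
    rcases (R z).eq_empty_or_nonempty with h0 | ⟨u₀, hu₀⟩
    · simp [h0]
    refine Finset.card_le_card_of_injOn (fun u => ![(κ u.1).1 - (κ u₀.1).1,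
      (κ u.1).2 - (κ u₀.1).2, (κ u.2).1 - (κ u₀.2).1, (κ u.2).2 - (κ u₀.2).2]) ?_ ?_
    · intro u hu
      simp only [R, Finset.mem_coe, Finset.mem_filter, Finset.mem_product] at hu hu₀
      have k1 := hκ _ hu.1.1
      have k2 := hκ _ hu.1.2
      have k3 := hκ _ hu₀.1.1
      have k4 := hκ _ hu₀.1.2
      simp only [fz, Finset.mem_coe, Finset.mem_filter]
      constructor
      · rw [mem_bx]
        intro i
        rw [abs_le]
        fin_cases i <;> simp <;> omega
      · unfold Gam
        simp only [Matrix.cons_val]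
        rw [phi_sub, phi_sub, k1.1, k2.1, k3.1, k4.1, hu.2.1, hu₀.2.1]
        ring
    · intro u hu u' hu' heq
      simp only [R, Finset.mem_coe, Finset.mem_filter, Finset.mem_product] at hu hu'
      have k1 := hκ _ hu.1.1
      have k2 := hκ _ hu.1.2
      have k3 := hκ _ hu'.1.1
      have k4 := hκ _ hu'.1.2
      have e0 := congrFun heq 0
      have e1 := congrFun heq 1
      have e2 := congrFun heq 2
      have e3 := congrFun heq 3
      simp at e0 e1 e2 e3
      refine Prod.ext ?_ ?_
      · rw [← k1.1, ← k3.1, e0, e1]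
      · rw [← k2.1, ← k4.1, e2, e3]
  have hRsum : ∑ z, (R z).card ≤ B.card ^ 2 := by
    rw [← Finset.card_sigma, sq, ← Finset.card_product]
    refine Finset.card_le_card_of_injOn (fun s => s.2) ?_ ?_
    · rintro ⟨z, u⟩ hs
      simp only [R, Finset.mem_coe, Finset.mem_sigma, Finset.mem_filter] at hs ⊢
      exact hs.2.1
    · rintro ⟨z, u⟩ hs ⟨z', u'⟩ hs' heq
      simp only [R, Finset.mem_coe, Finset.mem_sigma, Finset.mem_filter] at hs hs'
      simp only at heq
      subst heq
      have : z = z' := mul_right_cancel₀ hs.2.2.2 (hs.2.2.1.symm.trans hs'.2.2.1)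
      subst this
      rfl
  have hQ1 : ((B ×ˢ B ×ˢ B ×ˢ B).filter (fun q : F × F × F × F =>
      q.1 * q.2.1 = q.2.2.1 * q.2.2.2 ∧ q.1 * q.2.1 ≠ 0)).card ≤ ∑ z, (R z).card ^ 2 := by
    have : ∑ z, (R z).card ^ 2 = (Finset.univ.sigma fun z : F => R z ×ˢ R z).card := by
      rw [Finset.card_sigma]
      exact Finset.sum_congr rfl fun z _ => by rw [Finset.card_product, sq]
    rw [this]
    refine Finset.card_le_card_of_injOn (fun q =>
      ⟨q.1 / q.2.2.1, (q.1, q.2.2.1), (q.2.2.2, q.2.1)⟩) ?_ ?_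
    · rintro ⟨x, y, w, t⟩ hq
      simp only [Finset.mem_coe, Finset.mem_filter, Finset.mem_product] at hq
      obtain ⟨⟨hx, hy, hw, ht⟩, he, hne⟩ := hq
      have hy0 : y ≠ 0 := right_ne_zero_of_mul hne
      have hw0 : w ≠ 0 := left_ne_zero_of_mul (he ▸ hne)
      simp only [R, Finset.mem_coe, Finset.mem_sigma, Finset.mem_univ, true_and,
        Finset.mem_product, Finset.mem_filter]
      refine ⟨⟨⟨hx, hw⟩, by field_simp, hw0⟩, ⟨ht, hy⟩, ?_, hy0⟩
      field_simp
      rw [he]; ring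
    · rintro ⟨x, y, w, t⟩ _ ⟨x', y', w', t'⟩ _ heq
      have e := congrArg (fun s : (_ : F) × ((F × F) × (F × F)) => s.2) heq
      simp only [Prod.mk.injEq] at e ⊢
      tauto
  have hE : ((B ×ˢ B ×ˢ B ×ˢ B).filter (fun q : F × F × F × F =>
      q.1 * q.2.1 = q.2.2.1 * q.2.2.2)).card ≤ 4 * B.card ^ 2 + ∑ z, (R z).card ^ 2 := by
    have hsub : (B ×ˢ B ×ˢ B ×ˢ B).filter (fun q : F × F × F × F =>
        q.1 * q.2.1 = q.2.2.1 * q.2.2.2) ⊆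
        (B ×ˢ B ×ˢ B ×ˢ B).filter (fun q : F × F × F × F =>
          q.1 * q.2.1 = q.2.2.1 * q.2.2.2 ∧ q.1 * q.2.1 = 0) ∪
        (B ×ˢ B ×ˢ B ×ˢ B).filter (fun q : F × F × F × F =>
          q.1 * q.2.1 = q.2.2.1 * q.2.2.2 ∧ q.1 * q.2.1 ≠ 0) := by
      intro q hq
      rw [Finset.mem_union, Finset.mem_filter, Finset.mem_filter]
      rw [Finset.mem_filter] at hq
      by_cases h0 : q.1 * q.2.1 = 0
      · exact Or.inl ⟨hq.1, hq.2, h0⟩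
      · exact Or.inr ⟨hq.1, hq.2, h0⟩
    have := (Finset.card_le_card hsub).trans (Finset.card_union_le _ _)
    have := zero_tuples B
    omega
  have hR2 : ∑ z, (R z).card ^ 2 ≤ ∑ z, (R z).card +
      ∑ z ∈ Finset.univ.filter (fun z : F => 2 ≤ (fz ω a b z).card), (fz ω a b z).card ^ 2 := by
    rw [Finset.sum_filter, ← Finset.sum_add_distrib]
    refine Finset.sum_le_sum fun z _ => ?_
    have := hRf z
    split_ifs with h2
    · have := Nat.pow_le_pow_left this 2
      omega
    · have : (R z).card ≤ 1 := by omega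
      nlinarith
  have hs := sum_fz h ha hab hbp hlog
  have hfin : (((B ×ˢ B ×ˢ B ×ˢ B).filter
      (fun q => q.1 * q.2.1 = q.2.2.1 * q.2.2.2)).card : ℝ) ≤ 5 * (B.card : ℝ) ^ 2 +
      ∑ z ∈ Finset.univ.filter (fun z : F => 2 ≤ (fz ω a b z).card),
        ((fz ω a b z).card : ℝ) ^ 2 := by
    have : ((B ×ˢ B ×ˢ B ×ˢ B).filter
      (fun q => q.1 * q.2.1 = q.2.2.1 * q.2.2.2)).card ≤ 5 * B.card ^ 2 +
      ∑ z ∈ Finset.univ.filter (fun z : F => 2 ≤ (fz ω a b z).card),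
        (fz ω a b z).card ^ 2 := by omega
    exact_mod_cast this
  have hBc' : (B.card : ℝ) ^ 2 ≤ ((a : ℝ) * b) ^ 2 := by
    gcongr; exact_mod_cast hBc
  have h8 : 1 ≤ Real.log p ^ 2 := one_le_pow₀ hlog
  have h9 : ((a : ℝ) * b) ^ 2 ≤ ((a : ℝ) * b) ^ 2 * Real.log p ^ 2 :=
    le_mul_of_one_le_right (by positivity) h8
  linarith

end

end Helpers

/-- The Key Lemma for `n = 2`: the multiplicative energy of a box with edges
`H₁ ≤ H₂ < √(p/2)` is `O(|B|² (log p)³)`. -/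
theorem stmt_5 :
    ∃ C : ℝ, 0 < C ∧
      ∀ (p : ℕ), p.Prime → 3 ≤ p →
      ∀ (F : Type) [instField : Field F] [instFintype : Fintype F],
        Fintype.card F = p ^ 2 →
        ∀ (ω : Fin 2 → F),
          (∀ c : Fin 2 → ℤ, (∑ i, (c i : F) * ω i) = 0 → ∀ i, (p : ℤ) ∣ c i) →
          (∀ x : F, ∃ c : Fin 2 → ℤ, x = ∑ i, (c i : F) * ω i) →
        ∀ (N : Fin 2 → ℤ) (H : Fin 2 → ℕ),
          (∀ i, 1 ≤ H i) →
          H 0 ≤ H 1 →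
          (H 1 : ℝ) < Real.sqrt ((p : ℝ) / 2) →
          let B : Finset F :=
            (Finset.Icc (N 0 + 1) (N 0 + (H 0 : ℤ)) ×ˢ
              Finset.Icc (N 1 + 1) (N 1 + (H 1 : ℤ))).image
              (fun x => (x.1 : F) * ω 0 + (x.2 : F) * ω 1)
          (((B ×ˢ B ×ˢ B ×ˢ B).filter
              (fun q => q.1 * q.2.1 = q.2.2.1 * q.2.2.2)).card : ℝ) ≤
            C * ((H 0 : ℝ) * (H 1 : ℝ)) ^ 2 * Real.log p ^ 3 := by
  refine ⟨200000000000, by norm_num, ?_⟩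
  intro p hp hp3 F _ _ hcard ω hind hsur N H hH hH01 hHp B
  have hpz : (p : F) = 0 := by
    have h0 : ((Fintype.card F : ℕ) : F) = 0 := Nat.cast_card_eq_zero F
    rw [hcard] at h0
    push_cast at h0
    exact pow_eq_zero_iff (two_ne_zero) |>.1 h0
  have hyp : Hyp p ω := by
    refine ⟨hp, hpz, ?_, ?_⟩
    · intro x y hxy
      have := hind ![x, y] (by rw [Fin.sum_univ_two]; exact hxy)
      exact ⟨this 0, this 1⟩
    · intro z
      obtain ⟨c, hc⟩ := hsur z
      refine ⟨c 0, c 1, ?_⟩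
      rw [hc, Fin.sum_univ_two]; rfl
  have hbp : 2 * (H 1 * H 1) < p := by
    have h1 := (Real.lt_sqrt (by positivity)).1 hHp
    have h2 : (2 * ((H 1 : ℝ) * H 1)) < p := by nlinarith
    exact_mod_cast h2
  have hlog : 1 ≤ Real.log p := by
    rw [Real.le_log_iff_exp_le (by exact_mod_cast hp.pos)]
    have : (3 : ℝ) ≤ p := by exact_mod_cast hp3
    linarith [Real.exp_one_lt_d9]
  have hmain := energy_bound hyp (hH 0) hH01 hbp hlog (N 0) (N 1) B rfl
  have h23 : Real.log p ^ 2 ≤ Real.log p ^ 3 := pow_le_pow_right₀ hlog (by norm_num)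
  refine hmain.trans ?_
  gcongr
end
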